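/- arXiv:1102.5072 — 6 statements merged into one kernel-verified Lean document; each statement's English description precedes it below -/
import Mathlib

section
/- Let (A, m_A, k_A) ⊆ (B, m_B, k_B) be one-dimensional Noetherian local domains with k_A infinite. If B is the integral closure of A and B is finitely generated as an A-module, then m_A·B = m_B^(e/r), where e = e(A) is the multiplicity of A and r = [k_B : k_A] is the degree of the residue field extension. -/
/-- `e` is the Hilbert–Samuel multiplicity of the ideal `J` on the (one-dimensional) ring `R`,
characterized as the limit of `λ(R/Jⁿ)/n`.  The length `λ(R/Jⁿ)` is expressed as the Krull
dimension of the lattice of `R`-submodules of `R/Jⁿ` (i.e. the length of a longest chain of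
submodules). -/
def IsHSMultOfDimOne (R : Type*) [CommRing R] (J : Ideal R) (e : ℕ) : Prop :=
  ∃ len : ℕ → ℕ,
    (∀ n : ℕ, Order.krullDim (Submodule R (R ⧸ J ^ n)) = ((len n : ℕ∞) : WithBot ℕ∞)) ∧
    Filter.Tendsto (fun n : ℕ => (len n : ℝ) / (n : ℝ)) Filter.atTop (nhds (e : ℝ))

open IsLocalRing in
/-- the normalization is a DVR -/
theorem aux_dvr {A B : Type*} [CommRing A] [CommRing B] [IsDomain A] [IsDomain B]
    [IsNoetherianRing B] [IsLocalRing B] [Algebra A B]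
    (hdimB : ringKrullDim B = 1)
    (K : Type*) [Field K] [Algebra A K] [IsFractionRing A K]
    [Algebra B K] [IsScalarTower A B K] [IsIntegralClosure B A K] [Module.Finite A B] :
    IsDiscreteValuationRing B := by
  have hfr : IsFractionRing B K := IsIntegralClosure.isFractionRing_of_finite_extension A K K B
  have hic : IsIntegrallyClosed B := by
    rw [isIntegrallyClosed_iff K]
    intro x hx
    have : IsIntegral A x := isIntegral_trans x hx
    exact (IsIntegralClosure.isIntegral_iff (A := B)).mp this
  have hnf : ¬ IsField B := by
    intro h
    rw [ringKrullDim_eq_zero_of_isField h] at hdimB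
    exact zero_ne_one hdimB
  have hk : Ring.KrullDimLE 1 B := Ring.krullDimLE_iff.mpr hdimB.le
  have hd : Ring.DimensionLEOne B :=
    ⟨fun {p} h1 h2 => Ring.krullDimLE_one_iff_of_noZeroDivisors.mp hk p h1 h2⟩
  have hded : IsDedekindDomain B := { hd, hic, ‹IsNoetherianRing B› with }
  exact ((IsDiscreteValuationRing.TFAE B hnf).out 2 0).mp hded

/-- a conductor element -/
theorem aux_conductor {A B : Type*} [CommRing A] [CommRing B] [IsDomain A] [IsDomain B]
    [Algebra A B]
    (K : Type*) [Field K] [Algebra A K] [IsFractionRing A K]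
    [Algebra B K] [IsScalarTower A B K] [IsIntegralClosure B A K] [Module.Finite A B] :
    ∃ c : A, c ≠ 0 ∧ ∀ b : B, ∃ a : A, algebraMap A B a = algebraMap A B c * b := by
  obtain ⟨s, hs⟩ := (Module.Finite.fg_top : (⊤ : Submodule A B).FG)
  obtain ⟨c, hc⟩ := IsLocalization.exist_integer_multiples (nonZeroDivisors A) s
    (fun b => algebraMap B K b)
  refine ⟨c, nonZeroDivisors.ne_zero c.2, fun b => ?_⟩
  have hb : b ∈ Submodule.span A (s : Set B) := hs ▸ Submodule.mem_top
  induction hb using Submodule.span_induction with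
  | mem x hx =>
    obtain ⟨a, ha⟩ := hc x hx
    refine ⟨a, IsIntegralClosure.algebraMap_injective B A K ?_⟩
    rw [← IsScalarTower.algebraMap_apply, ha, map_mul, ← IsScalarTower.algebraMap_apply,
      Algebra.smul_def]
  | zero => exact ⟨0, by simp⟩
  | add x y _ _ hx hy =>
    obtain ⟨a, ha⟩ := hx
    obtain ⟨a', ha'⟩ := hy
    exact ⟨a + a', by rw [map_add, ha, ha', mul_add]⟩
  | smul r x _ hx =>
    obtain ⟨a, ha⟩ := hx
    exact ⟨r * a, by rw [map_mul, ha, Algebra.smul_def]; ring⟩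

theorem aux_mem {A B : Type*} [CommRing A] [CommRing B] [Algebra A B] (c : A)
    (hc : ∀ b : B, ∃ a : A, algebraMap A B a = algebraMap A B c * b) (J : Ideal A)
    (z : B) (hz : z ∈ J.map (algebraMap A B)) :
    ∀ b : B, ∃ a ∈ J, algebraMap A B a = algebraMap A B c * b * z := by
  induction hz using Submodule.span_induction with
  | mem x hx =>
    obtain ⟨y, hy, rfl⟩ := hx
    intro b
    obtain ⟨a, ha⟩ := hc b
    exact ⟨a * y, J.mul_mem_left _ hy, by rw [map_mul, ha]⟩
  | zero => exact fun b => ⟨0, J.zero_mem, by simp⟩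
  | add x y _ _ hx hy =>
    intro b
    obtain ⟨a, h, ha⟩ := hx b
    obtain ⟨a', h', ha'⟩ := hy b
    exact ⟨a + a', J.add_mem h h', by rw [map_add, ha, ha', mul_add]⟩
  | smul r x _ hx =>
    intro b
    obtain ⟨a, h, ha⟩ := hx (b * r)
    exact ⟨a, h, by rw [ha, smul_eq_mul]; ring⟩

/-- upper bound for the length -/
theorem aux_upper {A B : Type*} [CommRing A] [CommRing B] [Algebra A B]
    (J : Ideal A) (I : Ideal B) (h : I.comap (algebraMap A B) ≤ J) :
    Module.length A (A ⧸ J) ≤ Module.length A (B ⧸ I) := by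
  let φ : A →ₗ[A] B ⧸ I := Algebra.linearMap A (B ⧸ I)
  have hk : LinearMap.ker φ ≤ J := by
    intro x hx
    apply h
    rw [Ideal.mem_comap, ← Ideal.Quotient.eq_zero_iff_mem]
    exact hx
  calc Module.length A (A ⧸ J) ≤ Module.length A (A ⧸ LinearMap.ker φ) :=
        Module.length_le_of_surjective (Submodule.factor hk) (Submodule.factor_surjective hk)
    _ = Module.length A (LinearMap.range φ) := φ.quotKerEquivRange.length_eq
    _ ≤ _ := Module.length_le_of_injective _ (Submodule.subtype_injective _)

/-- lower bound for the length -/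
theorem aux_lower {A B : Type*} [CommRing A] [CommRing B] [Algebra A B]
    (J : Ideal A) (I C : Ideal B) (h : J ≤ I.comap (algebraMap A B))
    (hC : ∀ b ∈ C, ∃ a : A, algebraMap A B a = b) :
    Module.length A (B ⧸ I) ≤ Module.length A (A ⧸ J) + Module.length A (B ⧸ C) := by
  let φ : A →ₗ[A] B ⧸ I := Algebra.linearMap A (B ⧸ I)
  have hk : J ≤ LinearMap.ker φ := by
    intro x hx
    have := h hx
    rw [Ideal.mem_comap, ← Ideal.Quotient.eq_zero_iff_mem] at this
    exact this
  have h1 : Module.length A (LinearMap.range φ) ≤ Module.length A (A ⧸ J) := by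
    rw [← φ.quotKerEquivRange.length_eq]
    exact Module.length_le_of_surjective (Submodule.factor hk) (Submodule.factor_surjective hk)
  let ψ : B →ₗ[A] ((B ⧸ I) ⧸ LinearMap.range φ) :=
    (LinearMap.range φ).mkQ ∘ₗ (Ideal.Quotient.mkₐ A I).toLinearMap
  have hψ : Function.Surjective ψ :=
    (Submodule.mkQ_surjective _).comp (Ideal.Quotient.mkₐ_surjective A I)
  have hCk : C.restrictScalars A ≤ LinearMap.ker ψ := by
    intro b hb
    obtain ⟨a, rfl⟩ := hC b hb
    rw [LinearMap.mem_ker]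
    exact (Submodule.Quotient.mk_eq_zero _).mpr ⟨a, rfl⟩
  have h2 : Module.length A ((B ⧸ I) ⧸ LinearMap.range φ) ≤ Module.length A (B ⧸ C) := by
    rw [← (Submodule.Quotient.restrictScalarsEquiv A C).length_eq]
    refine Module.length_le_of_surjective ((C.restrictScalars A).liftQ ψ hCk) ?_
    intro y
    obtain ⟨b, rfl⟩ := hψ y
    exact ⟨Submodule.Quotient.mk b, rfl⟩
  rw [Module.length_eq_add_of_exact (LinearMap.range φ).subtype (LinearMap.range φ).mkQ
    (Submodule.subtype_injective _) (Submodule.mkQ_surjective _)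
    (LinearMap.exact_subtype_mkQ _)]
  exact add_le_add h1 h2

theorem aux_limit (len : ℕ → ℕ) (e d k : ℕ) (h1 : ∀ n, len n ≤ d * n + k)
    (h2 : ∀ n, d * n ≤ len n + k)
    (h : Filter.Tendsto (fun n : ℕ => (len n : ℝ) / (n : ℝ)) Filter.atTop (nhds (e : ℝ))) :
    e = d := by
  have hk : Filter.Tendsto (fun n : ℕ => (k : ℝ) / (n : ℝ)) Filter.atTop (nhds 0) :=
    tendsto_const_div_atTop_nhds_zero_nat _
  have hd : Filter.Tendsto (fun n : ℕ => (len n : ℝ) / (n : ℝ)) Filter.atTop (nhds (d : ℝ)) := by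
    have ha : Filter.Tendsto (fun n : ℕ => (d : ℝ) - (k : ℝ) / (n : ℝ)) Filter.atTop
        (nhds (d : ℝ)) := by simpa using hk.const_sub (d : ℝ)
    have hb : Filter.Tendsto (fun n : ℕ => (d : ℝ) + (k : ℝ) / (n : ℝ)) Filter.atTop
        (nhds (d : ℝ)) := by simpa using hk.const_add (d : ℝ)
    refine tendsto_of_tendsto_of_tendsto_of_le_of_le' ha hb ?_ ?_
    · filter_upwards [Filter.eventually_gt_atTop 0] with n hn
      have hn' : (0 : ℝ) < n := by exact_mod_cast hn
      have : (d : ℝ) * n ≤ len n + k := by exact_mod_cast h2 n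
      rw [sub_le_iff_le_add, ← add_div, le_div_iff₀ hn']
      exact this
    · filter_upwards [Filter.eventually_gt_atTop 0] with n hn
      have hn' : (0 : ℝ) < n := by exact_mod_cast hn
      have : (len n : ℝ) ≤ d * n + k := by exact_mod_cast h1 n
      rw [div_le_iff₀ hn', add_mul, div_mul_cancel₀ _ hn'.ne']
      exact this
  exact_mod_cast tendsto_nhds_unique h hd

/-- Let `(A, m_A, k_A) ⊆ (B, m_B, k_B)` be one-dimensional Noetherian local domains with `k_A`
infinite.  If `B` is the integral closure of `A` (in the quotient field `K` of `A`) and `B` is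
finitely generated as an `A`-module, then `m_A · B = m_B ^ (e/r)`, where `e = e(A)` is the
multiplicity of `A` and `r = [k_B : k_A]` is the degree of the residue field extension. -/
theorem stmt0 {A B : Type*} [CommRing A] [CommRing B] [IsDomain A] [IsDomain B]
    [IsNoetherianRing A] [IsNoetherianRing B] [IsLocalRing A] [IsLocalRing B]
    [Algebra A B] (hinj : Function.Injective (algebraMap A B))
    [IsLocalHom (algebraMap A B)]
    (hdimA : ringKrullDim A = 1) (hdimB : ringKrullDim B = 1)
    [Infinite (IsLocalRing.ResidueField A)]
    (K : Type*) [Field K] [Algebra A K] [IsFractionRing A K]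
    [Algebra B K] [IsScalarTower A B K]
    [IsIntegralClosure B A K]
    [Module.Finite A B]
    (e r : ℕ)
    (he : IsHSMultOfDimOne A (IsLocalRing.maximalIdeal A) e)
    (hr : r = Module.finrank (IsLocalRing.ResidueField A) (IsLocalRing.ResidueField B)) :
    r ∣ e ∧
      Ideal.map (algebraMap A B) (IsLocalRing.maximalIdeal A) =
        IsLocalRing.maximalIdeal B ^ (e / r) := by
  have hdvr : IsDiscreteValuationRing B := aux_dvr (A := A) hdimB K
  obtain ⟨c, hc0, hc⟩ := aux_conductor (A := A) (B := B) K
  have hpow := ((IsDiscreteValuationRing.TFAE B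
    (IsDiscreteValuationRing.not_isField B)).out 0 6).mp hdvr
  have hmA : IsLocalRing.maximalIdeal A ≠ ⊥ := by
    intro h
    rw [ringKrullDim_eq_zero_of_isField (IsLocalRing.isField_iff_maximalIdeal_eq.mpr h)] at hdimA
    exact zero_ne_one hdimA
  obtain ⟨s, hs⟩ := hpow (Ideal.map (algebraMap A B) (IsLocalRing.maximalIdeal A))
    (by rwa [Ne, Ideal.map_eq_bot_iff_of_injective hinj])
  obtain ⟨t, ht⟩ := hpow (Ideal.span {algebraMap A B c}) (by
    rw [Ne, Ideal.span_singleton_eq_bot]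
    exact (map_ne_zero_iff _ hinj).mpr hc0)
  have hfin : Module.Finite (IsLocalRing.ResidueField A) (IsLocalRing.ResidueField B) :=
    inferInstance
  have hrpos : 0 < r := hr ▸ Module.finrank_pos
  have hlenB : ∀ j : ℕ, Module.length A (B ⧸ IsLocalRing.maximalIdeal B ^ j) = ((j * r : ℕ) : ℕ∞) := by
    intro j
    rw [IsLocalRing.length_restrictScalars A B,
      IsDiscreteValuationRing.length_quotient_pow_maximalIdeal, Module.length_eq_finrank, ← hr]
    push_cast
    rfl
  have hmapn : ∀ n : ℕ, Ideal.map (algebraMap A B) (IsLocalRing.maximalIdeal A ^ n) =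
      IsLocalRing.maximalIdeal B ^ (s * n) := by
    intro n
    rw [Ideal.map_pow, hs, pow_mul]
  obtain ⟨len, hlen, hlim⟩ := he
  have hlen' : ∀ n, Module.length A (A ⧸ IsLocalRing.maximalIdeal A ^ n) = (len n : ℕ∞) := by
    intro n
    apply WithBot.coe_injective
    rw [Module.coe_length, hlen]
  have hup : ∀ n, len n ≤ (r * s) * n + r * t := by
    intro n
    have := aux_upper (IsLocalRing.maximalIdeal A ^ n) (IsLocalRing.maximalIdeal B ^ (t + s * n)) (by
      intro x hx
      rw [Ideal.mem_comap, pow_add, ← ht, ← hmapn, Ideal.mem_span_singleton_mul] at hx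
      obtain ⟨z, hz, hzx⟩ := hx
      obtain ⟨a, ha, hax⟩ := aux_mem c hc _ z hz 1
      rw [mul_one, hzx] at hax
      exact hinj hax ▸ ha)
    rw [hlen', hlenB] at this
    have := Nat.cast_le.mp this
    linarith [this]
  have hlo : ∀ n, (r * s) * n ≤ len n + r * t := by
    intro n
    have := aux_lower (IsLocalRing.maximalIdeal A ^ n) (IsLocalRing.maximalIdeal B ^ (s * n))
      (IsLocalRing.maximalIdeal B ^ t) (by rw [← hmapn]; exact Ideal.le_comap_map) (by
        intro b hb
        rw [← ht, Ideal.mem_span_singleton] at hb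
        obtain ⟨b', rfl⟩ := hb
        exact hc b')
    rw [hlen', hlenB, hlenB, ← Nat.cast_add] at this
    have := Nat.cast_le.mp this
    linarith [this]
  have hers : e = r * s := aux_limit len e (r * s) (r * t) hup hlo hlim
  refine ⟨⟨s, hers⟩, ?_⟩
  rw [hers, Nat.mul_div_cancel_left s hrpos]
  exact hs
end

section
/- Let R ⊆ T ⊆ Quot(R) be rings with (R, m) a local Noetherian domain and T a finitely generated R-module. Let R̂ and T̂ denote the m-adic completions of R and T respectively. Then R̂ and T̂ have the same total quotient ring. -/
open nonZeroDivisors in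
/-- If `φ : A → B` is injective and a nonzerodivisor `c` of `A` multiplies `B` into `A` and stays
regular on `B`, then `A` and `B` have the same total quotient ring. -/
theorem aux_fraction {A B : Type*} [CommRing A] [CommRing B] (φ : A →+* B)
    (hφ : Function.Injective φ) (c : A) (hc : φ c ∈ B⁰)
    (hcB : ∀ b : B, ∃ a : A, φ a = φ c * b) :
    ∃ e : FractionRing A ≃+* FractionRing B,
      ∀ a : A, e (algebraMap A (FractionRing A) a) = algebraMap B (FractionRing B) (φ a) := by
  have hcA : ∀ x : B, φ c * x = 0 → x = 0 := fun x hx =>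
    (mem_nonZeroDivisors_iff_right.1 hc) x (by rw [mul_comm]; exact hx)
  have key : ∀ a ∈ A⁰, φ a ∈ B⁰ := by
    intro a ha
    rw [mem_nonZeroDivisors_iff_right]
    intro b hb
    obtain ⟨a', ha'⟩ := hcB b
    apply hcA
    rw [← ha']
    have : a' * a = 0 := by
      apply hφ
      rw [map_mul, ha', map_zero, mul_assoc, hb, mul_zero]
    rw [(mem_nonZeroDivisors_iff_right.1 ha) a' this, map_zero]
  have key2 : ∀ a, φ a ∈ B⁰ → a ∈ A⁰ := by
    intro a ha
    rw [mem_nonZeroDivisors_iff_right]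
    intro x hx
    apply hφ
    rw [map_zero]
    apply (mem_nonZeroDivisors_iff_right.1 ha)
    rw [← map_mul, hx, map_zero]
  letI : Algebra A (FractionRing B) := ((algebraMap B (FractionRing B)).comp φ).toAlgebra
  have hmap : ∀ a, algebraMap A (FractionRing B) a = algebraMap B (FractionRing B) (φ a) :=
    fun _ => rfl
  haveI : IsLocalization A⁰ (FractionRing B) := by
    refine ⟨?_, ?_, ?_⟩
    · intro y
      rw [hmap]
      exact IsLocalization.map_units (FractionRing B) (⟨φ y, key y y.2⟩ : B⁰)
    · intro z
      obtain ⟨⟨b, s⟩, h⟩ := IsLocalization.surj B⁰ z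
      obtain ⟨a, ha⟩ := hcB b
      obtain ⟨a', ha'⟩ := hcB s
      refine ⟨⟨a, ⟨a', key2 a' (by rw [ha']; exact mul_mem hc s.2)⟩⟩, ?_⟩
      simp only [hmap, ha, ha', map_mul] at h ⊢
      rw [← h]; ring
    · intro x y h
      rw [hmap, hmap] at h
      refine ⟨1, ?_⟩
      rw [hφ (IsFractionRing.injective B (FractionRing B) h)]
  refine ⟨(IsLocalization.algEquiv A⁰ (FractionRing A) (FractionRing B)).toRingEquiv, ?_⟩
  intro a
  exact (IsLocalization.algEquiv A⁰ (FractionRing A) (FractionRing B)).commutes a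

/-- The ring map on adic completions induced by an algebra. -/
theorem aux_map {R T : Type*} [CommRing R] [CommRing T] [Algebra R T] (m : Ideal R) :
    ∃ φ : AdicCompletion m R →+* AdicCompletion (m.map (algebraMap R T)) T,
      ∀ (s : AdicCompletion.AdicCauchySequence m R) (n : ℕ),
        AdicCompletion.evalₐ (m.map (algebraMap R T)) n (φ (AdicCompletion.mk m R s)) =
          Ideal.Quotient.mk _ (algebraMap R T (s n)) := by
  have hle : ∀ n, m ^ n ≤ ((m.map (algebraMap R T)) ^ n).comap (algebraMap R T) := by
    intro n
    rw [← Ideal.map_le_iff_le_comap, Ideal.map_pow]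
  let f : (n : ℕ) → AdicCompletion m R →+* T ⧸ (m.map (algebraMap R T)) ^ n := fun n =>
    (Ideal.quotientMap _ (algebraMap R T) (hle n)).comp
      (AdicCompletion.evalₐ m n : AdicCompletion m R →+* R ⧸ m ^ n)
  have hf0 : ∀ n (s : AdicCompletion.AdicCauchySequence m R),
      f n (AdicCompletion.mk m R s) = Ideal.Quotient.mk _ (algebraMap R T (s n)) := by
    intro n s
    simp [f]
  have hf : ∀ {k n : ℕ} (h : k ≤ n),
      (Ideal.Quotient.factorPow (m.map (algebraMap R T)) h).comp (f n) = f k := by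
    intro k n h
    ext x
    obtain ⟨s, rfl⟩ := AdicCompletion.mk_surjective m R x
    rw [RingHom.comp_apply, hf0, hf0]
    have h1 := AdicCompletion.Ideal.mk_eq_mk m h s
    have h2 : (s n - s k) ∈ m ^ k := by
      rw [← Ideal.Quotient.mk_eq_mk_iff_sub_mem]; exact h1
    have h3 := hle k h2
    rw [Ideal.mem_comap, map_sub, ← Ideal.Quotient.mk_eq_mk_iff_sub_mem] at h3
    exact h3
  refine ⟨AdicCompletion.liftRingHom _ f hf, ?_⟩
  intro s n
  rw [AdicCompletion.evalₐ_liftRingHom, hf0]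

/-- A common denominator. -/
theorem aux_denom {R T : Type*} [CommRing R] [IsDomain R]
    [CommRing T] [Algebra R T] [Module.Finite R T]
    (K : Type*) [Field K] [Algebra R K] [IsFractionRing R K]
    [Algebra T K] [IsScalarTower R T K] (hTK : Function.Injective (algebraMap T K)) :
    ∃ c : R, c ≠ 0 ∧ ∀ t : T, ∃ r : R, algebraMap R T r = algebraMap R T c * t := by
  obtain ⟨s, hs⟩ := (Module.Finite.fg_top : (⊤ : Submodule R T).FG)
  obtain ⟨b, hb⟩ := IsLocalization.exist_integer_multiples (nonZeroDivisors R) s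
    (fun t => algebraMap T K t)
  refine ⟨b, nonZeroDivisors.ne_zero b.2, ?_⟩
  intro t
  have ht : t ∈ Submodule.span R (s : Set T) := by rw [hs]; trivial
  induction ht using Submodule.span_induction with
  | mem x hx =>
    obtain ⟨r, hr⟩ := hb x hx
    refine ⟨r, hTK ?_⟩
    rw [← IsScalarTower.algebraMap_apply, hr, Algebra.smul_def, map_mul,
      ← IsScalarTower.algebraMap_apply]
  | zero => exact ⟨0, by simp⟩
  | add x y _ _ hx hy =>
    obtain ⟨r, hr⟩ := hx
    obtain ⟨r', hr'⟩ := hy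
    exact ⟨r + r', by rw [map_add, hr, hr', mul_add]⟩
  | smul a x _ hx =>
    obtain ⟨r, hr⟩ := hx
    exact ⟨a * r, by rw [map_mul, hr, Algebra.smul_def]; ring⟩

theorem aux_pow {R T : Type*} [CommRing R] [CommRing T] [Algebra R T]
    (hinj : Function.Injective (algebraMap R T)) (c : R)
    (hc : ∀ t : T, ∃ r : R, algebraMap R T r = algebraMap R T c * t) (I : Ideal R)
    (t : T) (ht : t ∈ I.map (algebraMap R T)) (r : R)
    (hr : algebraMap R T r = algebraMap R T c * t) : r ∈ I := by
  have key : ∀ u : T, ∃ r ∈ I, algebraMap R T r = algebraMap R T c * (u * t) := by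
    clear hr
    rw [Ideal.map] at ht
    induction ht using Submodule.span_induction with
    | mem x hx =>
      obtain ⟨y, hy, rfl⟩ := hx
      intro u
      obtain ⟨r, hr⟩ := hc u
      exact ⟨r * y, I.mul_mem_left _ hy, by rw [map_mul, hr]; ring⟩
    | zero => exact fun u => ⟨0, I.zero_mem, by simp⟩
    | add x y _ _ hx hy =>
      intro u
      obtain ⟨r, hr, h⟩ := hx u
      obtain ⟨r', hr', h'⟩ := hy u
      exact ⟨r + r', I.add_mem hr hr', by rw [map_add, h, h']; ring⟩
    | smul a x _ hx =>
      intro u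
      obtain ⟨r, hr, h⟩ := hx (u * a)
      exact ⟨r, hr, by rw [h, smul_eq_mul]; ring⟩
  obtain ⟨r', hr', h⟩ := key 1
  rw [one_mul, ← hr] at h
  rwa [← hinj h]

/-- Let `R ⊆ T ⊆ Quot(R)` be rings with `(R, m)` a local Noetherian domain and `T` a finitely
generated `R`-module.  Let `R̂` and `T̂` denote the `m`-adic completions of `R` and `T`
respectively (the topology on `T` being given by the filtration `mⁿT = (mT)ⁿ`).  Then `R̂` and
`T̂` have the same total quotient ring: there is a ring isomorphism between the total quotient
rings `Quot(R̂)` and `Quot(T̂)` compatible with the canonical maps from `R`. -/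
theorem stmt1 {R T : Type*} [CommRing R] [IsDomain R] [IsNoetherianRing R] [IsLocalRing R]
    [CommRing T] [Algebra R T] [Module.Finite R T]
    (K : Type*) [Field K] [Algebra R K] [IsFractionRing R K]
    [Algebra T K] [IsScalarTower R T K] (hTK : Function.Injective (algebraMap T K)) :
    let m : Ideal R := IsLocalRing.maximalIdeal R
    let J : Ideal T := Ideal.map (algebraMap R T) m
    let Rhat := AdicCompletion m R
    let That := AdicCompletion J T
    ∃ e : FractionRing Rhat ≃+* FractionRing That,
      ∀ x : R,
        e (algebraMap Rhat (FractionRing Rhat) (algebraMap R Rhat x)) =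
          algebraMap That (FractionRing That) (algebraMap T That (algebraMap R T x)) := by
  intro m J Rhat That
  obtain ⟨c, hc0, hc⟩ := aux_denom (R := R) (T := T) K hTK
  have hinj : Function.Injective (algebraMap R T) := by
    have h := IsFractionRing.injective R K
    rw [IsScalarTower.algebraMap_eq R T K] at h
    exact Function.Injective.of_comp h
  haveI : IsDomain T := hTK.isDomain (algebraMap T K)
  haveI : IsNoetherianRing T := IsNoetherianRing.of_finite R T
  obtain ⟨φ, hφ⟩ := aux_map (T := T) m
  have hpow : ∀ n, J ^ n = (m ^ n).map (algebraMap R T) := fun n => (Ideal.map_pow _ _ _).symm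
  have hφR : ∀ x : R, φ (algebraMap R Rhat x) = algebraMap T That (algebraMap R T x) := by
    intro x
    have hx : algebraMap R Rhat x = AdicCompletion.mk m R
        (AdicCompletion.AdicCauchySequence.mk m R (fun _ => x) (fun _ => SModEq.rfl)) := by
      apply AdicCompletion.ext_evalₐ
      intro n
      rw [AdicCompletion.evalₐ_mk, AlgHom.commutes]
      rfl
    apply AdicCompletion.ext_evalₐ
    intro n
    rw [hx, hφ, AlgHom.commutes]
    rfl
  have hregR : ∀ x : Rhat, algebraMap R Rhat c * x = 0 → x = 0 := by
    intro x hx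
    have := Module.Flat.isSMulRegular_of_nonZeroDivisors (M := Rhat)
      (mem_nonZeroDivisors_of_ne_zero hc0)
    apply this
    simp only [Algebra.smul_def, hx, mul_zero]
  have hregT : φ (algebraMap R Rhat c) ∈ nonZeroDivisors That := by
    rw [hφR, mem_nonZeroDivisors_iff_right]
    intro x hx
    have hc0' : algebraMap R T c ≠ 0 := (map_ne_zero_iff _ hinj).2 hc0
    have := Module.Flat.isSMulRegular_of_nonZeroDivisors (M := That)
      (mem_nonZeroDivisors_of_ne_zero hc0')
    apply this
    simp only [Algebra.smul_def, mul_zero]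
    rw [mul_comm, hx]
  have hφinj : Function.Injective φ := by
    rw [injective_iff_map_eq_zero]
    intro a ha
    obtain ⟨s, rfl⟩ := AdicCompletion.mk_surjective m R a
    apply hregR
    apply AdicCompletion.ext_evalₐ
    intro n
    have h := hφ s n
    rw [ha, map_zero] at h
    have h' : algebraMap R T (s n) ∈ (m ^ n).map (algebraMap R T) := by
      rw [← hpow]
      exact Ideal.Quotient.eq_zero_iff_mem.1 h.symm
    have h2 := aux_pow hinj c hc (m ^ n) _ h' (c * s n) (by rw [map_mul])
    rw [map_mul, map_zero, AdicCompletion.evalₐ_mk, AlgHom.commutes]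
    exact Ideal.Quotient.eq_zero_iff_mem.2 h2
  have hcB : ∀ b : That, ∃ a : Rhat, φ a = φ (algebraMap R Rhat c) * b := by
    intro b
    obtain ⟨s, rfl⟩ := AdicCompletion.mk_surjective J T b
    choose d hd using hc
    have hcau : ∀ n, d (s n) ≡ d (s (n + 1)) [SMOD (m ^ n • ⊤ : Submodule R R)] := by
      intro n
      have h1 : Ideal.Quotient.mk (J ^ n) (s (n + 1)) = Ideal.Quotient.mk (J ^ n) (s n) :=
        AdicCompletion.Ideal.mk_eq_mk J (Nat.le_succ n) s
      rw [Ideal.Quotient.mk_eq_mk_iff_sub_mem, hpow] at h1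
      have h2 := aux_pow hinj c (fun t => ⟨d t, hd t⟩) (m ^ n) _ h1 (d (s (n + 1)) - d (s n))
        (by rw [map_sub, hd, hd, mul_sub])
      refine SModEq.symm ?_
      rw [SModEq.sub_mem]
      simpa using h2
    refine ⟨AdicCompletion.mk m R (AdicCompletion.AdicCauchySequence.mk m R (fun n => d (s n)) hcau), ?_⟩
    apply AdicCompletion.ext_evalₐ
    intro n
    rw [hφ, hφR, map_mul, AdicCompletion.evalₐ_mk, AlgHom.commutes]
    change Ideal.Quotient.mk _ (algebraMap R T (d (s n))) = _
    rw [hd, map_mul]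
    rfl
  obtain ⟨e, he⟩ := aux_fraction φ hφinj (algebraMap R Rhat c) hregT hcB
  exact ⟨e, fun x => by rw [he, hφR]⟩
end

section
/- If A is a complete Noetherian local domain and z is an indeterminate over A, then the completion of the local ring A(z) = A[z]_{m_A A[z]} (with respect to its maximal ideal) is again a domain; that is, A(z) is analytically irreducible. -/
open Polynomial in
/-- Gauss lemma over a valuation ring. -/
theorem gaussV {V : Type*} [CommRing V] [IsDomain V] [ValuationRing V] (f g : V[X])
    (hf : f ≠ 0) (hg : g ≠ 0)
    (h : (f * g).contentIdeal ≤ IsLocalRing.maximalIdeal V * (f.contentIdeal * g.contentIdeal)) :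
    False := by
  have key : ∀ f : V[X], f ≠ 0 → ∃ a : V, ∃ f' : V[X], a ≠ 0 ∧ f = C a * f' ∧
      f.contentIdeal = Ideal.span {a} ∧ f'.contentIdeal = ⊤ := by
    intro f hf
    have hp : f.contentIdeal.IsPrincipal := IsBezout.isPrincipal_of_FG _ f.contentIdeal_FG
    obtain ⟨f', hf'⟩ := hp.contentIdeal_generator_dvd
    set a := hp.generator with ha
    have hs : f.contentIdeal = Ideal.span {a} := (Ideal.span_singleton_generator _).symm
    have ha0 : a ≠ 0 := by
      intro h0
      apply hf
      rw [hf', h0]; simp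
    refine ⟨a, f', ha0, hf', hs, ?_⟩
    have h1 : Ideal.span {a} ≤ Ideal.span {a} * f'.contentIdeal := by
      conv_lhs => rw [← hs, hf']
      refine (contentIdeal_mul_le_mul_contentIdeal _ _).trans ?_
      rw [contentIdeal_C]
    have h2 := h1 (Ideal.mem_span_singleton_self a)
    rw [Ideal.mem_span_singleton_mul] at h2
    obtain ⟨z, hz, hza⟩ := h2
    have : z = 1 := mul_left_cancel₀ ha0 (by rw [hza, mul_one])
    rw [Ideal.eq_top_iff_one, ← this]; exact hz
  obtain ⟨a, f', ha, rfl, hfa, hf'⟩ := key f hf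
  obtain ⟨b, g', hb, rfl, hgb, hg'⟩ := key g hg
  have ht := contentIdeal_mul_eq_top_of_contentIdeal_eq_top hf' hg'
  rw [hfa, hgb, Ideal.span_singleton_mul_span_singleton] at h
  have : (f' * g').contentIdeal ≤ IsLocalRing.maximalIdeal V := by
    rw [contentIdeal_def, Ideal.span_le]
    intro c hc
    obtain ⟨n, -, rfl⟩ := mem_coeffs_iff.mp hc
    have h1 := h (coeff_mem_contentIdeal _ n)
    have h2 : (C a * f' * (C b * g')).coeff n = (a * b) * (f' * g').coeff n := by
      rw [show C a * f' * (C b * g') = C (a * b) * (f' * g') by rw [C_mul]; ring, coeff_C_mul]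
    rw [h2, mul_comm, Ideal.mem_span_singleton_mul] at h1
    obtain ⟨z, hz, hza⟩ := h1
    have : z = (f' * g').coeff n := mul_left_cancel₀ (mul_ne_zero ha hb) (by rw [hza])
    rw [← this]; exact hz
  rw [ht] at this
  exact Ideal.IsPrime.ne_top' (top_le_iff.mp this)

open Polynomial in
theorem gaussA {A : Type*} [CommRing A] [IsDomain A] [IsLocalRing A] (f g : A[X])
    (hf : f ≠ 0) (hg : g ≠ 0)
    (h : (f * g).contentIdeal ≤ IsLocalRing.maximalIdeal A * (f.contentIdeal * g.contentIdeal)) :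
    False := by
  obtain ⟨B, hB, hloc⟩ := IsLocalRing.exists_factor_valuationRing (algebraMap A (FractionRing A))
  set φ : A →+* B := (algebraMap A (FractionRing A)).codRestrict B.toSubring hB with hφ
  have hinj : Function.Injective φ := by
    intro x y hxy
    apply IsFractionRing.injective A (FractionRing A)
    exact congrArg Subtype.val hxy
  apply gaussV (f.map φ) (g.map φ)
  · rwa [Ne, Polynomial.map_eq_zero_iff hinj]
  · rwa [Ne, Polynomial.map_eq_zero_iff hinj]
  · rw [← Polynomial.map_mul, contentIdeal_map_eq_map_contentIdeal,
      contentIdeal_map_eq_map_contentIdeal, contentIdeal_map_eq_map_contentIdeal]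
    refine (Ideal.map_mono h).trans ?_
    rw [Ideal.map_mul, Ideal.map_mul]
    refine Ideal.mul_mono_left ?_
    exact ((IsLocalRing.local_hom_TFAE φ).out 0 2).mp hloc

open Polynomial in
theorem content_le_iff {A : Type*} [CommRing A] (f : A[X]) (K : Ideal A) :
    f.contentIdeal ≤ K ↔ f ∈ K.map (C : A →+* A[X]) := by
  rw [Ideal.mem_map_C_iff]
  refine ⟨fun h n => h (coeff_mem_contentIdeal _ n), fun h => ?_⟩
  rw [contentIdeal_def, Ideal.span_le]
  intro c hc
  obtain ⟨n, -, rfl⟩ := mem_coeffs_iff.mp hc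
  exact h n

open Polynomial in
theorem content_cancel {A : Type*} [CommRing A] [IsLocalRing A] (s f : A[X]) (K : Ideal A)
    (hs : s ∉ (IsLocalRing.maximalIdeal A).map (C : A →+* A[X]))
    (h : s * f ∈ K.map (C : A →+* A[X])) : f ∈ K.map (C : A →+* A[X]) := by
  rw [Ideal.mem_map_C_iff] at hs
  push Not at hs
  obtain ⟨n, hn⟩ := hs
  have hu : IsUnit (s.coeff n) := by simpa using hn
  have h0 : ∀ f : A[X], f ∈ K.map (C : A →+* A[X]) ↔ f.map (Ideal.Quotient.mk K) = 0 := by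
    intro f
    rw [Ideal.mem_map_C_iff, Polynomial.ext_iff]
    simp [Ideal.Quotient.eq_zero_iff_mem]
  rw [h0] at h ⊢
  rw [Polynomial.map_mul] at h
  have : s.map (Ideal.Quotient.mk K) ∈ nonZeroDivisors _ := by
    apply mem_nonzeroDivisors_of_coeff_mem n
    rw [coeff_map]
    exact (hu.map _).mem_nonZeroDivisors
  exact (mul_right_mem_nonZeroDivisors_eq_zero_iff this).mp (by rwa [mul_comm])

/-- Chevalley-type lemma. -/
theorem chev {A : Type*} [CommRing A] (m : Ideal A) [IsAdicComplete m A] (I : ℕ → Ideal A)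
    (hI : ∀ k, m ^ k ≤ I k) (hc : ∀ k, I k = I (k + 1) ⊔ m ^ k) :
    ∃ J : Ideal A, ∀ k, J ⊔ m ^ k = I k := by
  refine ⟨⨅ k, I k, fun k => le_antisymm (sup_le (iInf_le _ _) (hI k)) ?_⟩
  have hanti : Antitone I := antitone_nat_of_succ_le fun n => (hc n) ▸ le_sup_left
  intro a ha
  have step : ∀ j, ∀ x : I (k + j), ∃ y : I (k + j + 1), (y : A) - x ∈ m ^ (k + j) := by
    rintro j ⟨x, hx⟩
    rw [hc, Submodule.mem_sup] at hx
    obtain ⟨y, hy, z, hz, rfl⟩ := hx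
    exact ⟨⟨y, hy⟩, by simpa using hz⟩
  choose nx hnx using step
  let F : ∀ j, I (k + j) := fun j => Nat.rec (motive := fun j => I (k + j)) ⟨a, ha⟩ (fun j x => nx j x) j
  have hF : ∀ j, (F (j + 1) : A) - F j ∈ m ^ (k + j) := fun j => hnx j (F j)
  have hF2 : ∀ i j, i ≤ j → (F j : A) - F i ∈ m ^ (k + i) := by
    intro i j hij
    induction j, hij using Nat.le_induction with
    | base => simp
    | succ j hj ih =>
      have := Ideal.add_mem _ (Ideal.pow_le_pow_right (by omega : k + i ≤ k + j) (hF j)) ih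
      simpa using this
  obtain ⟨L, hL⟩ := IsPrecomplete.prec (I := m) (M := A) inferInstance (f := fun j => (F j : A)) (by
    intro i j hij
    rw [SModEq.comm, SModEq.sub_mem]
    simp only [smul_eq_mul, Ideal.mul_top]
    exact Ideal.pow_le_pow_right (by omega) (hF2 i j hij))
  have hL' : ∀ j, L - F j ∈ m ^ (k + j) := by
    intro j
    have h1 := hL (k + j)
    rw [SModEq.comm, SModEq.sub_mem] at h1
    simp only [smul_eq_mul, Ideal.mul_top] at h1
    simpa using Ideal.add_mem _ h1 (hF2 j (k + j) (by omega))
  rw [Submodule.mem_sup]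
  refine ⟨L, ?_, a - L, ?_, by ring⟩
  · rw [Submodule.mem_iInf]
    intro j
    have : L ∈ I (k + j) := by
      simpa using Ideal.add_mem _ (hI _ (hL' j)) (F j).2
    exact hanti (by omega) this
  · have := neg_mem (hL' 0)
    rw [neg_sub] at this
    exact this

theorem ar {A : Type*} [CommRing A] [IsNoetherianRing A] (m I : Ideal A) :
    ∃ k, ∀ n ≥ k, m ^ n ⊓ I ≤ m * I := by
  obtain ⟨k, hk⟩ := Ideal.exists_pow_inf_eq_pow_smul m (M := A) I
  refine ⟨k + 1, fun n hn => ?_⟩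
  have := hk n (by omega)
  simp only [smul_eq_mul, Ideal.mul_top] at this
  rw [this]
  refine Ideal.mul_mono (Ideal.pow_le_self (by omega)) inf_le_right

open Polynomial IsLocalRing in
theorem approx {A : Type*} [CommRing A] [IsNoetherianRing A] [IsLocalRing A] (I : Ideal A) :
    ∃ k₀, ∀ k ≥ k₀, ∀ p : A[X], p.contentIdeal ⊔ maximalIdeal A ^ k = I ⊔ maximalIdeal A ^ k →
      ∃ p' : A[X], p'.contentIdeal = I ∧ p - p' ∈ (maximalIdeal A ^ k).map (C : A →+* A[X]) := by
  obtain ⟨k₀, hk₀⟩ := ar (maximalIdeal A) I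
  refine ⟨k₀, fun k hk p hp => ?_⟩
  have h1 : p ∈ (I ⊔ maximalIdeal A ^ k).map (C : A →+* A[X]) := by
    rw [← content_le_iff, ← hp]; exact le_sup_left
  rw [Ideal.map_sup, Submodule.mem_sup] at h1
  obtain ⟨p', hp', r, hr, rfl⟩ := h1
  refine ⟨p', ?_, by simpa using hr⟩
  rw [← content_le_iff] at hp'
  apply le_antisymm hp'
  have h2 : I ≤ p'.contentIdeal ⊔ maximalIdeal A ^ k := by
    refine le_sup_left.trans (hp.symm.le.trans (sup_le ?_ le_sup_right))
    rw [content_le_iff, Ideal.map_sup]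
    refine Submodule.add_mem_sup ?_ hr
    rw [← content_le_iff]
  have h3 : I ≤ p'.contentIdeal ⊔ maximalIdeal A • I := by
    intro x hx
    obtain ⟨y, hy, z, hz, rfl⟩ := Submodule.mem_sup.mp (h2 hx)
    refine Submodule.add_mem_sup hy (hk₀ k hk ⟨hz, ?_⟩)
    simpa using Ideal.sub_mem _ hx (hp' hy)
  exact Submodule.le_of_le_smul_of_le_jacobson_bot (IsNoetherian.noetherian I)
    (IsLocalRing.maximalIdeal_le_jacobson _) h3

open Polynomial IsLocalRing in
theorem contentSeq {A : Type*} [CommRing A] [IsLocalRing A] [IsAdicComplete (maximalIdeal A) A]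
    (p s : ℕ → A[X]) (hs : ∀ k, s k ∉ (maximalIdeal A).map (C : A →+* A[X]))
    (hc : ∀ k, s k * p (k + 1) - s (k + 1) * p k ∈ (maximalIdeal A ^ k).map (C : A →+* A[X])) :
    ∃ J : Ideal A, ∀ k, J ⊔ maximalIdeal A ^ k = (p k).contentIdeal ⊔ maximalIdeal A ^ k := by
  apply chev (maximalIdeal A) (fun k => (p k).contentIdeal ⊔ maximalIdeal A ^ k)
  · intro k; exact le_sup_right
  · intro k
    have hm : maximalIdeal A ^ (k + 1) ≤ maximalIdeal A ^ k := Ideal.pow_le_pow_right (by omega)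
    have h1 : ∀ K : Ideal A, maximalIdeal A ^ k ≤ K →
        ((p k).contentIdeal ≤ K ↔ (p (k + 1)).contentIdeal ≤ K) := by
      intro K hK
      have hd := Ideal.map_mono (f := (C : A →+* A[X])) hK (hc k)
      rw [content_le_iff, content_le_iff]
      constructor
      · intro h
        apply content_cancel (s k) _ _ (hs k)
        have := Ideal.add_mem _ hd (Ideal.mul_mem_left _ (s (k + 1)) h)
        simpa using this
      · intro h
        apply content_cancel (s (k + 1)) _ _ (hs (k + 1))
        have := Ideal.sub_mem _ (Ideal.mul_mem_left _ (s k) h) hd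
        simpa using this
    apply le_antisymm
    · exact sup_le ((h1 _ le_sup_right).mpr (le_sup_left.trans le_sup_left)) le_sup_right
    · exact sup_le (sup_le ((h1 _ le_sup_right).mp le_sup_left) (hm.trans le_sup_right))
        le_sup_right

open Polynomial IsLocalRing in
theorem core {A : Type*} [CommRing A] [IsDomain A] [IsNoetherianRing A] [IsLocalRing A]
    [IsAdicComplete (maximalIdeal A) A]
    (p s q t : ℕ → A[X]) (hs : ∀ k, s k ∉ (maximalIdeal A).map (C : A →+* A[X]))
    (ht : ∀ k, t k ∉ (maximalIdeal A).map (C : A →+* A[X]))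
    (hp : ∀ k, s k * p (k + 1) - s (k + 1) * p k ∈ (maximalIdeal A ^ k).map (C : A →+* A[X]))
    (hq : ∀ k, t k * q (k + 1) - t (k + 1) * q k ∈ (maximalIdeal A ^ k).map (C : A →+* A[X]))
    (hpq : ∀ k, p k * q k ∈ (maximalIdeal A ^ k).map (C : A →+* A[X])) :
    (∀ k, p k ∈ (maximalIdeal A ^ k).map (C : A →+* A[X])) ∨
    (∀ k, q k ∈ (maximalIdeal A ^ k).map (C : A →+* A[X])) := by
  obtain ⟨I, hI⟩ := contentSeq p s hs hp
  obtain ⟨J, hJ⟩ := contentSeq q t ht hq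
  by_cases hI0 : I = ⊥
  · left; intro k
    rw [← content_le_iff]
    have := hI k
    rw [hI0, bot_sup_eq] at this
    rw [this]; exact le_sup_left
  by_cases hJ0 : J = ⊥
  · right; intro k
    rw [← content_le_iff]
    have := hJ k
    rw [hJ0, bot_sup_eq] at this
    rw [this]; exact le_sup_left
  exfalso
  obtain ⟨k₁, h₁⟩ := approx I
  obtain ⟨k₂, h₂⟩ := approx J
  obtain ⟨k₃, h₃⟩ := ar (maximalIdeal A) (I * J)
  obtain ⟨k, hk1, hk2, hk3⟩ : ∃ k, k ≥ k₁ ∧ k ≥ k₂ ∧ k ≥ k₃ :=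
    ⟨k₁ + k₂ + k₃, by omega, by omega, by omega⟩
  obtain ⟨p', hp', hpp⟩ := h₁ k hk1 (p k) (hI k).symm
  obtain ⟨q', hq', hqq⟩ := h₂ k hk2 (q k) (hJ k).symm
  refine gaussA p' q' ?_ ?_ ?_
  · rintro rfl; exact hI0 (by rw [← hp', contentIdeal_zero])
  · rintro rfl; exact hJ0 (by rw [← hq', contentIdeal_zero])
  · rw [hp', hq']
    refine le_trans (le_inf ?_ ?_) (h₃ k hk3)
    · rw [content_le_iff]
      have := Ideal.sub_mem _ (Ideal.sub_mem _ (hpq k) (Ideal.mul_mem_left _ (p k) hqq))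
        (Ideal.mul_mem_left _ q' hpp)
      convert this using 1
      ring
    · rw [← hp', ← hq']; exact contentIdeal_mul_le_mul_contentIdeal _ _

open Polynomial IsLocalRing in
theorem final {A : Type*} [CommRing A] [IsDomain A] [IsNoetherianRing A] [IsLocalRing A]
    [IsAdicComplete (maximalIdeal A) A] (S : Submonoid A[X])
    (hS : ∀ f ∈ S, f ∉ (maximalIdeal A).map (C : A →+* A[X]))
    (R : Type*) [CommRing R] [Algebra A[X] R] [IsLocalization S R] (J : Ideal R)
    (hJ : J = ((maximalIdeal A).map (C : A →+* A[X])).map (algebraMap A[X] R)) :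
    IsDomain (AdicCompletion J R) := by
  have hmem : ∀ k (f : A[X]), algebraMap A[X] R f ∈ J ^ k ↔
      f ∈ (maximalIdeal A ^ k).map (C : A →+* A[X]) := by
    intro k f
    rw [hJ, ← Ideal.map_pow, ← Ideal.map_pow, IsLocalization.algebraMap_mem_map_algebraMap_iff S]
    constructor
    · rintro ⟨s, hs, h⟩
      exact content_cancel s f _ (hS s hs) h
    · intro h
      exact ⟨1, S.one_mem, by simpa using h⟩
  have hunit : ∀ s ∈ S, IsUnit (algebraMap A[X] R s) := fun s hs =>
    IsLocalization.map_units R (⟨s, hs⟩ : S)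
  -- every element is represented by a sequence of fractions
  have hrep : ∀ x : AdicCompletion J R, ∃ (p s : ℕ → A[X]) (f : ℕ → R), (∀ k, s k ∈ S) ∧
      (∀ k, AdicCompletion.evalₐ J k x = Ideal.Quotient.mk (J ^ k) (f k)) ∧
      (∀ k, f k * algebraMap A[X] R (s k) = algebraMap A[X] R (p k)) ∧
      (∀ k, s k * p (k + 1) - s (k + 1) * p k ∈ (maximalIdeal A ^ k).map (C : A →+* A[X])) := by
    intro x
    obtain ⟨F, rfl⟩ := AdicCompletion.mk_surjective J R x
    have h1 : ∀ k, ∃ ps : A[X] × S, F k * algebraMap A[X] R ps.2 = algebraMap A[X] R ps.1 :=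
      fun k => IsLocalization.surj S (F k)
    choose ps hps using h1
    refine ⟨fun k => (ps k).1, fun k => (ps k).2, F, fun k => (ps k).2.2,
      fun k => AdicCompletion.evalₐ_mk J k F, hps, fun k => ?_⟩
    rw [← hmem]
    have h2 : F (k + 1) - F k ∈ J ^ k := by
      have := F.2 (Nat.le_succ k)
      rw [SModEq.comm, SModEq.sub_mem] at this
      simpa only [smul_eq_mul, Ideal.mul_top] using this
    rw [map_sub, map_mul, map_mul, ← hps, ← hps]
    convert Ideal.mul_mem_left _
      (algebraMap A[X] R (ps k).2 * algebraMap A[X] R (ps (k + 1)).2) h2 using 1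
    ring
  have hzero : ∀ (x : AdicCompletion J R) (p s : ℕ → A[X]) (f : ℕ → R), (∀ k, s k ∈ S) →
      (∀ k, AdicCompletion.evalₐ J k x = Ideal.Quotient.mk (J ^ k) (f k)) →
      (∀ k, f k * algebraMap A[X] R (s k) = algebraMap A[X] R (p k)) →
      (∀ k, p k ∈ (maximalIdeal A ^ k).map (C : A →+* A[X])) → x = 0 := by
    intro x p s f hs hx hf hp
    apply AdicCompletion.ext_evalₐ
    intro k
    rw [hx, map_zero, Ideal.Quotient.eq_zero_iff_mem, ← Ideal.mul_unit_mem_iff_mem _ (hunit _ (hs k)),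
      hf, hmem]
    exact hp k
  have : NoZeroDivisors (AdicCompletion J R) := by
    refine ⟨fun {x y} hxy => ?_⟩
    obtain ⟨p, s, f, hs, hx, hf, hp⟩ := hrep x
    obtain ⟨q, t, g, ht, hy, hg, hq⟩ := hrep y
    have hpq : ∀ k, p k * q k ∈ (maximalIdeal A ^ k).map (C : A →+* A[X]) := by
      intro k
      have h1 := congrArg (AdicCompletion.evalₐ J k) hxy
      rw [map_mul, hx, hy, map_zero, ← map_mul, Ideal.Quotient.eq_zero_iff_mem] at h1
      rw [← hmem, map_mul, ← hf, ← hg]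
      convert Ideal.mul_mem_left _
        (algebraMap A[X] R (s k) * algebraMap A[X] R (t k)) h1 using 1
      ring
    rcases core p s q t (fun k => hS _ (hs k)) (fun k => hS _ (ht k)) hp hq hpq with h | h
    · exact Or.inl (hzero x p s f hs hx hf h)
    · exact Or.inr (hzero y q t g ht hy hg h)
  have : Nontrivial (AdicCompletion J R) := by
    refine ⟨⟨1, 0, fun h => ?_⟩⟩
    have h1 := congrArg (AdicCompletion.evalₐ J 1) h
    rw [map_one, map_zero, ← map_one (Ideal.Quotient.mk (J ^ 1)),
      Ideal.Quotient.eq_zero_iff_mem, ← map_one (algebraMap A[X] R), hmem, pow_one] at h1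
    exact hS 1 S.one_mem h1
  exact NoZeroDivisors.to_isDomain _

/-- If `A` is a complete Noetherian local domain and `z` is an indeterminate over `A`, then the
completion of the local ring `A(z) = A[z]_{m_A A[z]}` with respect to its maximal ideal is again
a domain; that is, `A(z)` is analytically irreducible.
Here `A(z)` is realized as the localization of `A[z]` at the multiplicative closure of the
complement of the prime ideal `m_A A[z]` (which is that complement itself), its maximal ideal is
the extension of `m_A A[z]`, and the completion is the adic completion at this ideal. -/
theorem stmt3 {A : Type*} [CommRing A] [IsDomain A] [IsNoetherianRing A] [IsLocalRing A]
    [IsAdicComplete (IsLocalRing.maximalIdeal A) A] :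
    let P : Ideal (Polynomial A) := Ideal.map Polynomial.C (IsLocalRing.maximalIdeal A)
    let Az := Localization (Submonoid.closure {f : Polynomial A | f ∉ P})
    let J : Ideal Az := Ideal.map (algebraMap (Polynomial A) Az) P
    IsDomain (AdicCompletion J Az) := by
  intro P Az J
  refine final (Submonoid.closure {f : Polynomial A | f ∉ P}) ?_ Az J rfl
  intro f hf
  have hle : Submonoid.closure {f : Polynomial A | f ∉ P} ≤ P.primeCompl :=
    Submonoid.closure_le.mpr fun x hx => hx
  exact hle hf
end

section
/- Let u = [u₁,…,u_s] and T = [T₁,…,T_t] be row vectors of indeterminates over an algebraically closed field k, C an n×s matrix of linear forms in k[T], and A an n×t matrix of linear forms in k[u], satisfying C·uᵀ = A·Tᵀ. Then for any i: (1) I_i(A) ≠ 0 if and only if ht I₁(C λᵀ) ≥ i for general λ ∈ 𝔸^s; and (2) ht I_i(A) ≥ s if and only if ht I₁(C λᵀ) ≥ i for all nonzero λ ∈ 𝔸^s. -/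
open MvPolynomial

/-- The height of an ideal: the infimum of the heights of the primes containing it. -/
noncomputable def idealHeight {R : Type*} [CommRing R] (I : Ideal R) : ℕ∞ :=
  ⨅ (P : PrimeSpectrum R) (_ : I ≤ P.asIdeal), Order.height P

/-- The ideal of `r × r` minors of a matrix. -/
def minorsIdeal {R : Type*} [CommRing R] {m n : ℕ} (r : ℕ) (M : Matrix (Fin m) (Fin n) R) :
    Ideal R :=
  Ideal.span {x : R | ∃ (rs : Fin r → Fin m) (cs : Fin r → Fin n), x = (M.submatrix rs cs).det}

/-- The linear form with given coefficients. -/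
noncomputable def linForm (k : Type*) [Field k] (t : ℕ) :
    (Fin t → k) →ₗ[k] MvPolynomial (Fin t) k :=
  Fintype.linearCombination k (X : Fin t → MvPolynomial (Fin t) k)

lemma linForm_apply {k : Type*} [Field k] {t : ℕ} (a : Fin t → k) :
    linForm k t a = ∑ j, a j • (X j : MvPolynomial (Fin t) k) := by
  simp [linForm, Fintype.linearCombination_apply]

lemma exists_linForm {k : Type*} [Field k] {t : ℕ} {f : MvPolynomial (Fin t) k}
    (hf : f.IsHomogeneous 1) : ∃ a, linForm k t a = f := by
  have h : f ∈ homogeneousSubmodule (Fin t) k 1 := hf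
  rw [homogeneousSubmodule_one_eq_span_X, ← Fintype.range_linearCombination k] at h
  exact h

lemma eval_linForm {k : Type*} [Field k] {t : ℕ} (a l : Fin t → k) :
    eval l (linForm k t a) = ∑ j, a j * l j := by
  simp [linForm_apply, smul_eval]

lemma linForm_injective (k : Type*) [Field k] (t : ℕ) : Function.Injective (linForm k t) := by
  classical
  rw [← LinearMap.ker_eq_bot, LinearMap.ker_eq_bot']
  intro a ha
  ext j
  have := eval_linForm a (Pi.single j 1)
  rw [ha] at this
  simpa [Pi.single_apply] using this.symm

/-- The ideal generated by a space of linear forms. -/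
noncomputable def linIdeal {k : Type*} [Field k] {t : ℕ} (V : Submodule k (Fin t → k)) :
    Ideal (MvPolynomial (Fin t) k) :=
  Ideal.span (Set.image (linForm k t) V)

lemma linIdeal_key {k : Type*} [Field k] {t : ℕ} (V : Submodule k (Fin t → k)) :
    (linIdeal V).IsPrime ∧ ∀ a, linForm k t a ∈ linIdeal V → a ∈ V := by
  classical
  obtain ⟨σ, hσ⟩ := V.mkQ.exists_rightInverse_of_surjective V.range_mkQ
  have hσ' : ∀ y, V.mkQ (σ y) = y := fun y => LinearMap.congr_fun hσ y
  let π : (Fin t → k) →ₗ[k] (Fin t → k) := σ ∘ₗ V.mkQ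
  have hπ0 : ∀ a, π a = 0 ↔ a ∈ V := by
    intro a
    constructor
    · intro h
      have h2 : V.mkQ (π a) = V.mkQ a := hσ' _
      rw [h, map_zero] at h2
      exact (Submodule.Quotient.mk_eq_zero V).1 h2.symm
    · intro h
      have : V.mkQ a = 0 := (Submodule.Quotient.mk_eq_zero V).2 h
      simp [π, this]
  have hπ1 : ∀ a, a - π a ∈ V := by
    intro a
    refine (Submodule.Quotient.mk_eq_zero V).1 ?_
    change V.mkQ (a - π a) = 0
    rw [map_sub, sub_eq_zero]
    exact (hσ' _).symm
  let φ : MvPolynomial (Fin t) k →ₐ[k] MvPolynomial (Fin t) k :=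
    aeval fun j => linForm k t (π (Pi.single j 1))
  have hX : ∀ j, linForm k t (Pi.single j 1) = X j := by
    intro j
    simp [linForm]
  have hφ : ∀ a, φ (linForm k t a) = linForm k t (π a) := by
    intro a
    have : φ.toLinearMap ∘ₗ linForm k t = linForm k t ∘ₗ π := by
      refine LinearMap.pi_ext' fun j => LinearMap.ext_ring ?_
      simp [hX, φ]
    exact LinearMap.congr_fun this a
  have hle : linIdeal V ≤ RingHom.ker φ := by
    refine Ideal.span_le.2 ?_
    rintro _ ⟨a, ha, rfl⟩
    change φ _ = 0
    rw [hφ, (hπ0 a).2 ha, map_zero]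
  have hsub : ∀ f, f - φ f ∈ linIdeal V := by
    intro f
    have : (Ideal.Quotient.mkₐ k (linIdeal V)).comp φ = Ideal.Quotient.mkₐ k (linIdeal V) := by
      refine MvPolynomial.algHom_ext fun j => ?_
      simp only [AlgHom.comp_apply, Ideal.Quotient.mkₐ_eq_mk]
      refine (Ideal.Quotient.eq.2 ?_).symm
      rw [← hX, hφ, ← map_sub]
      exact Ideal.subset_span ⟨_, hπ1 _, rfl⟩
    have h := (AlgHom.congr_fun this f).symm
    exact Ideal.Quotient.eq.1 h
  have heq : linIdeal V = RingHom.ker φ := by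
    refine le_antisymm hle fun f hf => ?_
    have h0 : φ f = 0 := hf
    simpa [h0] using hsub f
  refine ⟨heq ▸ RingHom.ker_isPrime φ, fun a ha => ?_⟩
  have h0 : φ (linForm k t a) = 0 := hle ha
  rw [hφ] at h0
  exact (hπ0 a).1 (linForm_injective k t (h0.trans (map_zero _).symm))

/-- `linIdeal` as a point of the spectrum. -/
noncomputable def linPoint {k : Type*} [Field k] {t : ℕ} (V : Submodule k (Fin t → k)) :
    PrimeSpectrum (MvPolynomial (Fin t) k) := ⟨linIdeal V, (linIdeal_key V).1⟩

lemma linPoint_strictMono {k : Type*} [Field k] {t : ℕ} :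
    StrictMono (linPoint : Submodule k (Fin t → k) → _) := by
  intro V W hVW
  refine lt_of_le_not_ge ?_ ?_
  · exact Ideal.span_mono (Set.image_mono hVW.le)
  · intro h
    refine hVW.not_ge fun a ha => ?_
    exact (linIdeal_key V).2 a (h (Ideal.subset_span ⟨a, ha, rfl⟩))

lemma height_linPoint {k : Type*} [Field k] {t : ℕ} (V : Submodule k (Fin t → k)) :
    Order.height (linPoint V) = (Module.finrank k V : ℕ∞) := by
  classical
  apply le_antisymm
  · rw [← PrimeSpectrum.height_eq_orderHeight]
    let b := Module.finBasis k V
    let S : Finset (MvPolynomial (Fin t) k) :=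
      Finset.univ.image fun j => linForm k t (b j : Fin t → k)
    have hS : linIdeal V = Ideal.span (S : Set (MvPolynomial (Fin t) k)) := by
      apply le_antisymm
      · refine Ideal.span_le.2 ?_
        rintro _ ⟨a, ha, rfl⟩
        have h1 := b.sum_repr ⟨a, ha⟩
        have h2 : a = ∑ j, b.repr ⟨a, ha⟩ j • (b j : Fin t → k) := by
          have h3 := (congrArg V.subtype h1).symm
          rw [map_sum] at h3
          exact h3
        rw [h2, map_sum]
        refine Ideal.sum_mem _ fun j _ => ?_
        rw [map_smul, MvPolynomial.smul_eq_C_mul]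
        exact Ideal.mul_mem_left _ _ (Ideal.subset_span (by simp [S]))
      · refine Ideal.span_mono ?_
        intro x hx
        simp only [S, Finset.coe_image, Finset.coe_univ, Set.image_univ] at hx
        obtain ⟨j, rfl⟩ := hx
        exact ⟨_, (b j).2, rfl⟩
    have h1 := Ideal.height_le_spanRank_toENat (linIdeal V) (linIdeal_key V).1.ne_top
    refine h1.trans ?_
    rw [Submodule.spanRank_toENat_eq_iInf_finset_card]
    refine (iInf_le _ ⟨S, hS.symm⟩).trans ?_
    have : S.card ≤ Module.finrank k V := Finset.card_image_le.trans (by simp)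
    exact_mod_cast this
  · have h := Order.height_le_height_apply_of_strictMono _
      (linPoint_strictMono (k := k) (t := t)) V
    rwa [← Module.length_submodule, Module.length_eq_finrank] at h

lemma idealHeight_linIdeal {k : Type*} [Field k] {t : ℕ} (V : Submodule k (Fin t → k)) :
    idealHeight (linIdeal V) = (Module.finrank k V : ℕ∞) := by
  rw [← height_linPoint]
  apply le_antisymm
  · exact iInf₂_le (linPoint V) le_rfl
  · exact le_iInf₂ fun P hP => Order.height_mono hP

lemma le_rank_iff {k : Type*} [Field k] {n t : ℕ} (M : Matrix (Fin n) (Fin t) k) (i : ℕ) :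
    i ≤ M.rank ↔ ∃ (rs : Fin i → Fin n) (cs : Fin i → Fin t), (M.submatrix rs cs).det ≠ 0 := by
  classical
  have key : ∀ {n t : ℕ} (M : Matrix (Fin n) (Fin t) k), i ≤ M.rank →
      ∃ rs : Fin i → Fin n, i ≤ (M.submatrix rs id).rank := by
    intro n t M h
    rw [Matrix.rank_eq_finrank_span_row] at h
    obtain ⟨κ, a, ha, hspan, hli⟩ := exists_linearIndependent' k M.row
    have : Fintype κ := Fintype.ofInjective a ha
    rw [← hspan, finrank_span_eq_card hli] at h
    let e : Fin i → κ := fun j => (Fintype.equivFin κ).symm (Fin.castLE h j)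
    have he : Function.Injective e :=
      (Fintype.equivFin κ).symm.injective.comp (Fin.castLE_injective h)
    refine ⟨a ∘ e, ?_⟩
    have h2 : LinearIndependent k (M.submatrix (a ∘ e) id).row := hli.comp e he
    rw [h2.rank_matrix]
    simp
  constructor
  · intro h
    obtain ⟨rs, h1⟩ := key M h
    rw [← Matrix.rank_transpose] at h1
    obtain ⟨cs, h2⟩ := key _ h1
    refine ⟨rs, cs, fun h0 => ?_⟩
    rw [← Matrix.rank_transpose] at h2
    have h3 : ((((M.submatrix rs id).transpose).submatrix cs id).transpose) =
      M.submatrix rs cs := rfl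
    rw [h3] at h2
    have h4 : LinearIndependent k (M.submatrix rs cs).row := by
      rw [linearIndependent_iff_card_eq_finrank_span, Set.finrank,
        ← Matrix.rank_eq_finrank_span_row]
      refine le_antisymm (by simpa using h2) (Matrix.rank_le_card_height _)
    rw [Matrix.linearIndependent_rows_iff_isUnit, Matrix.isUnit_iff_isUnit_det] at h4
    exact h4.ne_zero h0
  · rintro ⟨rs, cs, h⟩
    have := Matrix.rank_of_det_ne_zero h
    calc i = (M.submatrix rs cs).rank := by simp [this]
      _ ≤ M.rank := Matrix.rank_submatrix_le _ _ _

/-- Let `u = [u₁,…,u_s]` and `T = [T₁,…,T_t]` be row vectors of indeterminates over an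
algebraically closed field `k`, `C` an `n × s` matrix of linear forms in `k[T]`, and `A` an
`n × t` matrix of linear forms in `k[u]`, satisfying `C·uᵀ = A·Tᵀ`.  Then for any `i`:
(1) `I_i(A) ≠ 0` if and only if `ht I₁(C λᵀ) ≥ i` for general `λ ∈ 𝔸^s`; and
(2) `ht I_i(A) ≥ s` if and only if `ht I₁(C λᵀ) ≥ i` for all nonzero `λ ∈ 𝔸^s`. -/
theorem stmt7 {k : Type*} [Field k] [IsAlgClosed k] (n s t : ℕ)
    (C : Matrix (Fin n) (Fin s) (MvPolynomial (Fin t) k))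
    (A : Matrix (Fin n) (Fin t) (MvPolynomial (Fin s) k))
    (hC : ∀ i j, (C i j).IsHomogeneous 1)
    (hA : ∀ i l, (A i l).IsHomogeneous 1)
    (hrel : ∀ i : Fin n,
      ∑ j : Fin s,
          rename (Sum.inr : Fin t → Fin s ⊕ Fin t) (C i j) * X (Sum.inl j) =
        ∑ l : Fin t,
          rename (Sum.inl : Fin s → Fin s ⊕ Fin t) (A i l) * X (Sum.inr l))
    (i : ℕ) :
    (minorsIdeal i A ≠ ⊥ ↔
      ∃ h : MvPolynomial (Fin s) k, h ≠ 0 ∧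
        ∀ l : Fin s → k, eval l h ≠ 0 →
          (i : ℕ∞) ≤ idealHeight
            (Ideal.span (Set.range fun p : Fin n => ∑ j : Fin s, l j • C p j))) ∧
    ((s : ℕ∞) ≤ idealHeight (minorsIdeal i A) ↔
      ∀ l : Fin s → k, l ≠ 0 →
        (i : ℕ∞) ≤ idealHeight
          (Ideal.span (Set.range fun p : Fin n => ∑ j : Fin s, l j • C p j))) := by
  classical
  have hCA : ∀ (l : Fin s → k) (p : Fin n),
      ∑ j : Fin s, l j • C p j = linForm k t fun q => eval l (A p q) := by
    intro l p
    have h := congrArg (aeval (Sum.elim (fun j => MvPolynomial.C (l j)) X :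
      Fin s ⊕ Fin t → MvPolynomial (Fin t) k)) (hrel p)
    simp only [map_sum, map_mul, aeval_X, aeval_rename, Sum.elim_inl, Sum.elim_inr,
      Sum.elim_comp_inl, Sum.elim_comp_inr, aeval_X_left_apply] at h
    have hev : ∀ f : MvPolynomial (Fin s) k,
        aeval (fun j => (MvPolynomial.C (l j) : MvPolynomial (Fin t) k)) f
          = MvPolynomial.C (eval l f) := by
      intro f
      have := MvPolynomial.aeval_algebraMap_apply (MvPolynomial (Fin t) k) l f
      simpa [MvPolynomial.algebraMap_eq, Function.comp_def, aeval_eq_eval] using this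
    rw [linForm_apply]
    simp only [MvPolynomial.smul_eq_C_mul]
    simp only [hev] at h
    rw [← h]
    exact Finset.sum_congr rfl fun j _ => mul_comm _ _
  have hht : ∀ l : Fin s → k, idealHeight
      (Ideal.span (Set.range fun p : Fin n => ∑ j : Fin s, l j • C p j)) =
        ((A.map (eval l)).rank : ℕ∞) := by
    intro l
    rw [Matrix.rank_eq_finrank_span_row, ← idealHeight_linIdeal]
    congr 1
    simp only [hCA]
    apply le_antisymm
    · refine Ideal.span_le.2 ?_
      rintro _ ⟨p, rfl⟩
      exact Ideal.subset_span ⟨_, Submodule.subset_span ⟨p, rfl⟩, rfl⟩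
    · refine Ideal.span_le.2 ?_
      rintro _ ⟨a, ha, rfl⟩
      have : Submodule.span k (Set.range (A.map (eval l)).row) ≤
          ((Ideal.span (Set.range fun p : Fin n =>
            linForm k t fun q => eval l (A p q))).restrictScalars k).comap (linForm k t) := by
        refine Submodule.span_le.2 ?_
        rintro _ ⟨p, rfl⟩
        exact Ideal.subset_span ⟨p, rfl⟩
      exact this ha
  have hdet : ∀ (l : Fin s → k) (rs : Fin i → Fin n) (cs : Fin i → Fin t),
      ((A.map (eval l)).submatrix rs cs).det = eval l (A.submatrix rs cs).det := by
    intro l rs cs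
    rw [RingHom.map_det]
    rfl
  have hge : ∀ l : Fin s → k, (i : ℕ∞) ≤ idealHeight
      (Ideal.span (Set.range fun p : Fin n => ∑ j : Fin s, l j • C p j)) ↔
      ∃ (rs : Fin i → Fin n) (cs : Fin i → Fin t), eval l (A.submatrix rs cs).det ≠ 0 := by
    intro l
    rw [hht, Nat.cast_le, le_rank_iff]
    simp only [hdet]
  simp only [hge]
  constructor
  · constructor
    · intro h
      by_contra hcon
      push Not at hcon
      apply h
      refine (Ideal.span_eq_bot).2 ?_
      rintro _ ⟨rs, cs, rfl⟩
      by_contra h0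
      obtain ⟨l, hl, h2⟩ := hcon _ h0
      exact hl (h2 rs cs)
    · rintro ⟨h, h0, hh⟩ hbot
      have : Infinite k := IsAlgClosed.instInfinite
      apply h0
      refine MvPolynomial.funext fun l => ?_
      rw [map_zero]
      by_contra hl
      obtain ⟨rs, cs, h2⟩ := hh l hl
      apply h2
      rw [(Ideal.span_eq_bot).1 hbot _ ⟨rs, cs, rfl⟩, map_zero]
  · have hm : Order.height (linPoint (⊤ : Submodule k (Fin s → k))) = (s : ℕ∞) := by
      rw [height_linPoint]
      simp
    constructor
    · intro h l hl
      by_contra hcon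
      push Not at hcon
      let ψ : MvPolynomial (Fin s) k →ₐ[k] Polynomial k :=
        aeval fun j => Polynomial.C (l j) * Polynomial.X
      have hψ : ∀ a, ψ (linForm k s a) =
          Polynomial.X * Polynomial.C (eval l (linForm k s a)) := by
        intro a
        rw [eval_linForm, linForm_apply]
        simp only [map_sum, map_smul, ψ, aeval_X, Polynomial.smul_eq_C_mul, Finset.mul_sum,
          map_mul]
        exact Finset.sum_congr rfl fun j _ => by ring
      let Q : PrimeSpectrum (MvPolynomial (Fin s) k) := ⟨RingHom.ker ψ, RingHom.ker_isPrime ψ⟩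
      have hIQ : minorsIdeal i A ≤ Q.asIdeal := by
        refine Ideal.span_le.2 ?_
        rintro _ ⟨rs, cs, rfl⟩
        change ψ _ = 0
        have h1 : ψ (A.submatrix rs cs).det =
            ((Polynomial.X : Polynomial k) •
              ((A.map (eval l)).submatrix rs cs).map Polynomial.C).det := by
          rw [AlgHom.map_det]
          congr 1
          ext1 p q
          obtain ⟨a, ha⟩ := exists_linForm (hA (rs p) (cs q))
          simp [← ha, hψ]
        rw [h1, Matrix.det_smul]
        have h2 := RingHom.map_det (Polynomial.C : k →+* Polynomial k)
          ((A.map (eval l)).submatrix rs cs)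
        rw [hdet, hcon, map_zero] at h2
        change 0 = ((((A.map (eval l)).submatrix rs cs).map Polynomial.C)).det at h2
        rw [← h2, mul_zero]
      have hlt : Q < linPoint (⊤ : Submodule k (Fin s → k)) := by
        refine lt_of_le_not_ge ?_ ?_
        · intro f hf
          have hf0 : ψ f = 0 := hf
          have hmem : ∀ g : MvPolynomial (Fin s) k,
              g - MvPolynomial.C ((ψ g).coeff 0) ∈ linIdeal (⊤ : Submodule k (Fin s → k)) := by
            have hX : ∀ j, (X j : MvPolynomial (Fin s) k) ∈
                linIdeal (⊤ : Submodule k (Fin s → k)) := fun j =>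
              Ideal.subset_span ⟨Pi.single j 1, trivial, by simp [linForm]⟩
            intro g
            induction g using MvPolynomial.induction_on with
            | C a =>
              have : ψ (MvPolynomial.C a) = Polynomial.C a := by
                simp [ψ]
              simp [this]
            | add p q hp hq =>
              have := Ideal.add_mem _ hp hq
              rw [map_add, Polynomial.coeff_add, map_add]
              convert this using 1
              ring
            | mul_X p j hp =>
              have : (ψ (p * X j)).coeff 0 = 0 := by
                simp [ψ, Polynomial.mul_coeff_zero]
              rw [this, map_zero, sub_zero]
              exact Ideal.mul_mem_left _ _ (hX j)
          have := hmem f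
          rw [hf0, Polynomial.coeff_zero, map_zero, sub_zero] at this
          exact this
        · intro hle
          apply hl
          ext j
          have hX : (X j : MvPolynomial (Fin s) k) ∈
                linIdeal (⊤ : Submodule k (Fin s → k)) :=
              Ideal.subset_span ⟨Pi.single j 1, trivial, by simp [linForm]⟩
          have h1 : ψ (X j) = 0 := hle hX
          simpa [ψ] using h1
      have h1 : (s : ℕ∞) ≤ Order.height Q := h.trans (iInf₂_le Q hIQ)
      have h2 : Order.height Q < ⊤ :=
        (Order.height_mono hlt.le).trans_lt (hm ▸ ENat.natCast_lt_top s)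
      have h3 := Order.height_strictMono hlt h2
      rw [hm] at h3
      exact absurd h1 h3.not_ge
    · intro h
      refine le_iInf₂ fun P hP => ?_
      rw [← hm]
      refine Order.height_mono ?_
      change linIdeal _ ≤ P.asIdeal
      refine Ideal.span_le.2 ?_
      rintro _ ⟨a, -, rfl⟩
      refine P.2.radical_le_iff.2 hP ?_
      rw [← vanishingIdeal_zeroLocus_eq_radical (K := k)]
      intro l hl
      have hl0 : l = 0 := by
        by_contra hne
        obtain ⟨rs, cs, h2⟩ := h l hne
        apply h2
        have := hl _ (Ideal.subset_span ⟨rs, cs, rfl⟩)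
        simpa [aeval_eq_eval] using this
      subst hl0
      have := eval_linForm a (0 : Fin s → k)
      simpa [aeval_eq_eval] using this
end

section
/- Let C be a matrix of linear forms with 2 columns in a polynomial ring R = k[T₁,T₂,T₃] in three variables over a field k. If some generalized column ideal I₁(C λᵀ) (for λ ∈ k² nonzero) is zero-dimensional (i.e., primary to the maximal homogeneous ideal) and ht I₂(C) = 2, then e(R/I₂(C)) + μ(I₂(C)) = 6, where e denotes multiplicity and μ denotes minimal number of generators. -/
open MvPolynomial

/-- The Hilbert function of `R/I` in degree `m`, for a homogeneous ideal `I` of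
`R = k[T₁,T₂,T₃]`: the `k`-dimension of `(R/I)_m = R_m / (I ∩ R_m)`. -/
noncomputable def hilbertFn (k : Type*) [Field k] (I : Ideal (MvPolynomial (Fin 3) k)) (m : ℕ) :
    ℕ :=
  Module.finrank k
    (↥(homogeneousSubmodule (Fin 3) k m) ⧸
      Submodule.comap (homogeneousSubmodule (Fin 3) k m).subtype
        (Submodule.restrictScalars k (I : Submodule (MvPolynomial (Fin 3) k)
          (MvPolynomial (Fin 3) k))))



lemma aux_finrank_six (k : Type*) [Field k] :
    Module.finrank k (homogeneousSubmodule (Fin 3) k 2) = 6 := by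
  rw [homogeneousSubmodule_eq_finsupp_supported]
  rw [(AddMonoidAlgebra.supportedEquivFinsupp (R := k) (S := k)
    {d : Fin 3 →₀ ℕ | d.degree = 2}).finrank_eq]
  have hs : {d : Fin 3 →₀ ℕ | d.degree = 2} = ↑(Finset.finsuppAntidiag (Finset.univ : Finset (Fin 3)) 2) := by
    ext d
    simp [Finset.mem_finsuppAntidiag, Finsupp.degree_eq_sum]
  rw [hs, Module.finrank_finsupp_self]
  simp [Finset.finsuppAntidiag]
  rfl

lemma aux_height {k : Type*} [Field k] (I : Ideal (MvPolynomial (Fin 3) k))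
    (hht : idealHeight I = 2) (f : MvPolynomial (Fin 3) k) (hf : f.IsHomogeneous 1)
    (hI : I ≤ Ideal.span {f}) : False := by
  have hne : Ideal.span {f} ≠ ⊤ := by
    intro h
    rw [Ideal.span_singleton_eq_top] at h
    have h2 := h.map (constantCoeff (σ := Fin 3) (R := k))
    have : constantCoeff f = 0 := by
      rw [constantCoeff_eq]
      exact hf.coeff_eq_zero (by simp)
    rw [this] at h2
    exact not_isUnit_zero h2
  obtain ⟨P, hP⟩ := Ideal.nonempty_minimalPrimes hne
  have h1 := Ideal.height_le_one_of_isPrincipal_of_mem_minimalPrimes (Ideal.span {f}) P hP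
  have hp := hP.isPrime
  have h2 := PrimeSpectrum.height_eq_orderHeight (⟨P, hp⟩ : PrimeSpectrum (MvPolynomial (Fin 3) k))
  have h3 : idealHeight I ≤ 1 := by
    refine le_trans (iInf₂_le (⟨P, hp⟩ : PrimeSpectrum (MvPolynomial (Fin 3) k)) ?_) ?_
    · exact hI.trans hP.1.2
    · rw [← h2]; exact h1
  rw [hht] at h3
  exact absurd h3 (by decide)

lemma aux_hc2 {k : Type*} [Field k] (g q : MvPolynomial (Fin 3) k) (hq : q.IsHomogeneous 2) :
    homogeneousComponent 2 (g * q) = coeff 0 g • q := by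
  conv_lhs => rw [← sum_homogeneousComponent g]
  rw [Finset.sum_mul, map_sum, Finset.sum_eq_single 0]
  · rw [homogeneousComponent_zero, homogeneousComponent_C_mul, homogeneousComponent_eq_self hq,
      smul_eq_C_mul]
  · intro i _ hi
    rw [homogeneousComponent_of_mem ((homogeneousComponent_isHomogeneous i g).mul hq), if_neg]
    omega
  · simp

lemma aux_mu {k : Type*} [Field k] (G : Set (MvPolynomial (Fin 3) k))
    (hG : ∀ g ∈ G, g.IsHomogeneous 2) :
    sInf {m : ℕ | ∃ F : Finset (MvPolynomial (Fin 3) k),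
          F.card = m ∧ Ideal.span (F : Set (MvPolynomial (Fin 3) k)) = Ideal.span G}
     = Module.finrank k ↥(Submodule.restrictScalars k (Ideal.span G) ⊓
        homogeneousSubmodule (Fin 3) k 2) := by
  classical
  have hfin : FiniteDimensional k (homogeneousSubmodule (Fin 3) k 2) :=
    Module.finite_of_finrank_pos (by rw [aux_finrank_six]; norm_num)
  set Q := Submodule.restrictScalars k (Ideal.span G) ⊓ homogeneousSubmodule (Fin 3) k 2 with hQ
  have hfinQ : FiniteDimensional k Q :=
    Submodule.finiteDimensional_of_le (inf_le_right : Q ≤ homogeneousSubmodule (Fin 3) k 2)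
  apply le_antisymm
  · apply Nat.sInf_le
    let b := Module.finBasis k Q
    refine ⟨Finset.univ.image (fun i => (b i : MvPolynomial (Fin 3) k)), ?_, ?_⟩
    · rw [Finset.card_image_of_injective (f := fun i => (b i : MvPolynomial (Fin 3) k)) _
        (Subtype.val_injective.comp b.injective)]
      simp
    · apply le_antisymm
      · rw [Ideal.span_le]
        intro x hx
        simp at hx
        obtain ⟨i, rfl⟩ := hx
        exact (b i).2.1
      · rw [Ideal.span_le]
        intro g hg
        have hgQ : g ∈ Q := ⟨Ideal.subset_span hg, hG g hg⟩
        have := b.sum_repr ⟨g, hgQ⟩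
        have h2 := congrArg Subtype.val this
        simp only [AddSubmonoidClass.coe_finsetSum, Submodule.coe_smul] at h2
        rw [← h2]
        refine Ideal.sum_mem _ fun i _ => ?_
        rw [smul_eq_C_mul]
        exact Ideal.mul_mem_left _ _ (Ideal.subset_span (by simp))
  · apply le_csInf
    · obtain ⟨F, hF⟩ := (IsNoetherian.noetherian (Ideal.span G))
      exact ⟨_, F, rfl, hF⟩
    · rintro m ⟨F, rfl, hF⟩
      have key : ∀ f ∈ Ideal.span G, ∀ g, homogeneousComponent 2 (g * f)
          = coeff 0 g • homogeneousComponent 2 f := by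
        intro f hf
        induction hf using Submodule.span_induction with
        | mem x hx =>
          intro g
          rw [aux_hc2 g x (hG x hx), homogeneousComponent_eq_self (hG x hx)]
        | zero => simp
        | add x y _ _ hx hy => intro g; rw [mul_add, map_add, hx, hy, map_add, smul_add]
        | smul r x _ hx =>
          intro g
          rw [smul_eq_mul, ← mul_assoc, hx, hx, smul_smul]
          congr 1
          simp [← constantCoeff_eq]
      have hle : Q ≤ Submodule.span k
          ((F.image (homogeneousComponent 2) : Finset (MvPolynomial (Fin 3) k)) :
            Set (MvPolynomial (Fin 3) k)) := by
        rintro f ⟨hf, hf2⟩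
        rw [← homogeneousComponent_eq_self hf2]
        have hf' : f ∈ Ideal.span (F : Set (MvPolynomial (Fin 3) k)) := by rw [hF]; exact hf
        clear hf hf2
        induction hf' using Submodule.span_induction with
        | mem x hx => exact Submodule.subset_span (by simpa using ⟨x, hx, rfl⟩)
        | zero => simp
        | add x y _ _ hx hy => rw [map_add]; exact add_mem hx hy
        | smul r x hx' hx =>
          rw [smul_eq_mul, key x (by rw [← hF]; exact hx')]
          exact Submodule.smul_mem _ _ hx
      calc _ ≤ _ := Submodule.finrank_mono hle
        _ ≤ _ := finrank_span_finset_le_card _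
        _ ≤ _ := Finset.card_image_le

lemma aux_hilb {k : Type*} [Field k] (I : Ideal (MvPolynomial (Fin 3) k)) :
    hilbertFn k I 2 + Module.finrank k ↥(Submodule.restrictScalars k I ⊓
        homogeneousSubmodule (Fin 3) k 2) = 6 := by
  have hfin : FiniteDimensional k (homogeneousSubmodule (Fin 3) k 2) :=
    Module.finite_of_finrank_pos (by rw [aux_finrank_six]; norm_num)
  rw [← aux_finrank_six k, hilbertFn, ← Submodule.finrank_quotient_add_finrank
    (Submodule.comap (homogeneousSubmodule (Fin 3) k 2).subtype (Submodule.restrictScalars k I))]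
  congr 1
  rw [inf_comm, ← Submodule.map_comap_subtype]
  exact (Submodule.equivMapOfInjective _ (Submodule.subtype_injective _) _).symm.finrank_eq

lemma aux_cyc {k W : Type*} [Field k] [AddCommGroup W] [Module k W] [FiniteDimensional k W]
    (hW : Module.finrank k W ≤ 3) (a : W →ₗ[k] W) :
    (∃ v : W, ∀ S : Submodule k W, v ∈ S → (∀ x ∈ S, a x ∈ S) → S = ⊤) ∨
    (∃ c : k, Module.finrank k (LinearMap.range (a - c • (1 : W →ₗ[k] W))) + 2
      ≤ Module.finrank k W) := by
  by_cases hsc : ∀ v, ¬ LinearIndependent k ![v, a v]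
  · obtain ⟨c, hc⟩ := LinearMap.exists_eq_smul_id_of_forall_notLinearIndependent hsc
    by_cases h2 : 2 ≤ Module.finrank k W
    · right
      refine ⟨c, ?_⟩
      rw [hc, sub_self, LinearMap.range_zero, finrank_bot]
      simpa using h2
    · left
      rcases Nat.lt_or_ge (Module.finrank k W) 1 with h0 | h1
      · have : Subsingleton W := (Module.finrank_zero_iff (R := k)).1 (by omega)
        exact ⟨0, fun S _ _ => Subsingleton.elim _ _⟩
      · have h1 : Module.finrank k W = 1 := by omega
        have : Nontrivial W := Module.nontrivial_of_finrank_pos (R := k) (by omega)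
        obtain ⟨v, hv⟩ := exists_ne (0 : W)
        refine ⟨v, fun S hS _ => ?_⟩
        rw [eq_top_iff]
        intro w _
        obtain ⟨r, rfl⟩ := (finrank_eq_one_iff_of_nonzero' v hv).1 h1 w
        exact S.smul_mem _ hS
  push Not at hsc
  obtain ⟨v, hv⟩ := hsc
  by_cases htop : ∀ u, u ∈ Submodule.span k {v, a v}
  · left
    refine ⟨v, fun S hS ha => ?_⟩
    rw [eq_top_iff]
    intro w _
    have : Submodule.span k {v, a v} ≤ S := by
      rw [Submodule.span_le]
      rintro x (rfl | rfl)
      · exact hS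
      · exact ha _ hS
    exact this (htop w)
  push Not at htop
  obtain ⟨u, hu⟩ := htop
  have hli : LinearIndependent k ![u, v, a v] := by
    refine linearIndependent_finCons.2 ⟨hv, ?_⟩
    simpa [Matrix.range_cons, Set.pair_comm] using hu
  have h3 : Module.finrank k W = 3 := by
    have := hli.fintype_card_le_finrank
    simp at this
    omega
  have hgen : ∀ w : W, ∃ x y z : k, w = x • u + y • v + z • a v := by
    have hspan := hli.span_eq_top_of_card_eq_finrank (by simp [h3])
    intro w
    have : w ∈ Submodule.span k (Set.range ![u, v, a v]) := by rw [hspan]; trivial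
    rw [Submodule.mem_span_range_iff_exists_fun] at this
    obtain ⟨c, hc⟩ := this
    refine ⟨c 0, c 1, c 2, ?_⟩
    rw [← hc, Fin.sum_univ_three]
    rfl
  have hall : ∀ S : Submodule k W, u ∈ S → v ∈ S → (∀ x ∈ S, a x ∈ S) → S = ⊤ := by
    intro S h1 h2 h3
    rw [eq_top_iff]
    intro w _
    obtain ⟨x, y, z, rfl⟩ := hgen w
    exact S.add_mem (S.add_mem (S.smul_mem _ h1) (S.smul_mem _ h2)) (S.smul_mem _ (h3 _ h2))
  by_contra hcon
  push Not at hcon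
  obtain ⟨hncyc, hrk⟩ := hcon
  -- no cyclic vector
  have hno : ∀ v' : W, ¬ ∀ S : Submodule k W, v' ∈ S → (∀ x ∈ S, a x ∈ S) → u ∈ S ∧ v ∈ S := by
    intro v' h
    obtain ⟨S, h1, h2, h3⟩ := hncyc v'
    exact h3 (hall S (h S h1 h2).1 (h S h1 h2).2 h2)
  have hinv : ∀ (S : Submodule k W) (c : k) (x : W), c ≠ 0 → c • x ∈ S → x ∈ S := by
    intro S c x hc hx
    exact (S.smul_mem_iff hc).1 hx
  obtain ⟨ε, α, β, h2v⟩ := hgen (a (a v))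
  have hε : ε = 0 := by
    by_contra hε
    refine hno v fun S hS ha => ⟨?_, hS⟩
    apply hinv S ε u hε
    have : ε • u = a (a v) - α • v - β • a v := by rw [h2v]; module
    rw [this]
    exact S.sub_mem (S.sub_mem (ha _ (ha _ hS)) (S.smul_mem _ hS)) (S.smul_mem _ (ha _ hS))
  subst hε
  obtain ⟨c, γ, δ, hau⟩ := hgen (a u)
  -- replace `u` by `u - δ v`
  have hau' : a (u - δ • v) = c • (u - δ • v) + (γ + c * δ) • v := by
    rw [map_sub, map_smul, hau]; module
  have hγ : γ + c * δ = 0 := by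
    by_contra hγ
    refine hno (u - δ • v) fun S hS ha => ?_
    have hvS : v ∈ S := by
      apply hinv S _ v hγ
      have : (γ + c * δ) • v = a (u - δ • v) - c • (u - δ • v) := by rw [hau']; module
      rw [this]
      exact S.sub_mem (ha _ hS) (S.smul_mem _ hS)
    refine ⟨?_, hvS⟩
    have := S.add_mem hS (S.smul_mem δ hvS)
    simpa using this
  rw [hγ, zero_smul, add_zero] at hau'
  have hf : c * c - β * c - α = 0 := by
    by_contra hf
    refine hno (u - δ • v + v) fun S hS ha => ?_
    have huS : u - δ • v ∈ S := by
      apply hinv S _ _ hf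
      have : (c * c - β * c - α) • (u - δ • v) = a (a (u - δ • v + v)) - β • a (u - δ • v + v)
          - α • (u - δ • v + v) := by
        rw [map_add, hau', map_add, map_smul, hau', h2v]; module
      rw [this]
      exact S.sub_mem (S.sub_mem (ha _ (ha _ hS)) (S.smul_mem _ (ha _ hS))) (S.smul_mem _ hS)
    have hvS : v ∈ S := by simpa using S.sub_mem hS huS
    refine ⟨?_, hvS⟩
    simpa using S.add_mem huS (S.smul_mem δ hvS)
  have hr := hrk c
  rw [h3] at hr
  have hle : LinearMap.range (a - c • (1 : W →ₗ[k] W)) ≤ Submodule.span k {a v - c • v} := by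
    rintro _ ⟨w, rfl⟩
    obtain ⟨x, y, z, rfl⟩ := hgen w
    rw [Submodule.mem_span_singleton]
    refine ⟨y + z * (β - c) + x * δ, ?_⟩
    have hα : α = c * c - β * c := by linear_combination -hf
    have hγ' : γ = - (c * δ) := by linear_combination hγ
    simp only [LinearMap.sub_apply, LinearMap.smul_apply, Module.End.one_apply, map_add, map_smul, hau, h2v,
      hα, hγ']
    module
  have := (Submodule.finrank_mono hle).trans ((finrank_span_le_card (R := k) ({a v - c • v} : Set W)).trans (by simp : _ ≤ 1))
  omega

/-- The linear form with given coefficients. -/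
noncomputable def linF (k : Type*) [Field k] : (Fin 3 → k) →ₗ[k] MvPolynomial (Fin 3) k :=
  Fintype.linearCombination k (X : Fin 3 → MvPolynomial (Fin 3) k)

lemma linF_apply {k : Type*} [Field k] (x : Fin 3 → k) : linF k x = ∑ i, x i • X i := by
  simp [linF, Fintype.linearCombination_apply]

lemma linF_single {k : Type*} [Field k] (i : Fin 3) : linF k (Pi.single i 1) = X i := by
  rw [linF, Fintype.linearCombination_apply_single, one_smul]

lemma linF_hom {k : Type*} [Field k] (x : Fin 3 → k) : (linF k x).IsHomogeneous 1 := by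
  rw [linF_apply]
  refine IsHomogeneous.sum _ _ _ fun i _ => ?_
  rw [smul_eq_C_mul]
  exact isHomogeneous_C_mul_X _ _

lemma linF_surj {k : Type*} [Field k] (f : MvPolynomial (Fin 3) k) (hf : f.IsHomogeneous 1) :
    ∃ x, linF k x = f := by
  have : f ∈ homogeneousSubmodule (Fin 3) k 1 := hf
  rw [homogeneousSubmodule_one_eq_span_X, Submodule.mem_span_range_iff_exists_fun] at this
  obtain ⟨c, hc⟩ := this
  exact ⟨c, by rw [linF_apply, hc]⟩

lemma core_span {k : Type*} [Field k] (I : Ideal (MvPolynomial (Fin 3) k))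
    (a : (Fin 3 → k) →ₗ[k] (Fin 3 → k))
    (h1 : ∀ x y, linF k x * linF k (a y) - linF k y * linF k (a x) ∈ I)
    (v : Fin 3 → k)
    (hv : ∀ S : Submodule k (Fin 3 → k), v ∈ S → (∀ x ∈ S, a x ∈ S) →
      (∀ u, (∀ x, linF k x * linF k u ∈ I) → u ∈ S) → S = ⊤)
    (m : ℕ) (f : MvPolynomial (Fin 3) k) (hf : f.IsHomogeneous (m + 1)) :
    ∃ x, f - linF k v ^ m * linF k x ∈ I := by
  -- products of two linear forms
  have hprod : ∀ x y, ∃ z, linF k x * linF k y - linF k v * linF k z ∈ I := by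
    let S : Submodule k (Fin 3 → k) :=
      { carrier := {x | ∀ y, ∃ z, linF k x * linF k y - linF k v * linF k z ∈ I}
        zero_mem' := fun y => ⟨0, by simp⟩
        add_mem' := by
          intro x x' hx hx' y
          obtain ⟨z, hz⟩ := hx y
          obtain ⟨z', hz'⟩ := hx' y
          refine ⟨z + z', ?_⟩
          have := I.add_mem hz hz'
          rw [map_add, map_add]
          convert this using 1
          ring
        smul_mem' := by
          intro c x hx y
          obtain ⟨z, hz⟩ := hx y
          refine ⟨c • z, ?_⟩
          have := I.mul_mem_left (MvPolynomial.C c) hz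
          rw [map_smul, map_smul, smul_eq_C_mul, smul_eq_C_mul]
          convert this using 1
          ring }
    have hS : S = ⊤ := by
      apply hv
      · intro y
        exact ⟨y, by simp⟩
      · intro x hx y
        obtain ⟨z, hz⟩ := hx (a y)
        refine ⟨z, ?_⟩
        have := I.sub_mem hz (h1 x y)
        convert this using 1
        ring
      · intro u hu y
        refine ⟨0, ?_⟩
        have := hu y
        rw [map_zero, mul_zero, sub_zero, mul_comm]
        exact this
    intro x
    have : x ∈ S := by rw [hS]; trivial
    exact this
  have hmon : ∀ (m : ℕ) (s : Fin 3 →₀ ℕ), s.degree = m + 1 →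
      ∃ x, monomial s (1 : k) - linF k v ^ m * linF k x ∈ I := by
    intro m
    induction m with
    | zero =>
      intro s hs
      obtain ⟨x, hx⟩ := linF_surj (monomial s (1 : k)) (isHomogeneous_monomial 1 hs)
      exact ⟨x, by simp [hx]⟩
    | succ m ih =>
      intro s hs
      have : ∃ i, s i ≠ 0 := by
        by_contra hcon
        push Not at hcon
        have : s = 0 := by ext i; exact hcon i
        subst this
        simp at hs
      obtain ⟨i, hi⟩ := this
      have hsi : Finsupp.single i 1 + (s - Finsupp.single i 1) = s := by
        apply add_tsub_cancel_of_le
        rw [Finsupp.single_le_iff]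
        omega
      have hd : (s - Finsupp.single i 1).degree = m + 1 := by
        have := congrArg Finsupp.degree hsi
        rw [map_add, Finsupp.degree_single] at this
        omega
      obtain ⟨x, hx⟩ := ih _ hd
      obtain ⟨z, hz⟩ := hprod (Pi.single i 1) x
      refine ⟨z, ?_⟩
      rw [linF_single] at hz
      have e : monomial s (1 : k) = X i * monomial (s - Finsupp.single i 1) 1 := by
        rw [X, monomial_mul, hsi, one_mul]
      rw [e]
      have := I.add_mem (I.mul_mem_left (X i) hx) (I.mul_mem_left (linF k v ^ m) hz)
      convert this using 1
      ring
  -- general case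
  let T : Submodule k (MvPolynomial (Fin 3) k) :=
    Submodule.restrictScalars k I ⊔
      LinearMap.range ((LinearMap.mulLeft k (linF k v ^ m)).comp (linF k))
  have hT : f ∈ T := by
    rw [f.as_sum]
    refine T.sum_mem fun s hs => ?_
    have hdeg : s.degree = m + 1 := by
      by_contra h
      exact (mem_support_iff.1 hs) (hf.coeff_eq_zero h)
    obtain ⟨x, hx⟩ := hmon m s hdeg
    have e : monomial s (coeff s f) = coeff s f • monomial s (1 : k) := by
      rw [smul_monomial, smul_eq_mul, mul_one]
    rw [e]
    refine T.smul_mem _ ?_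
    rw [Submodule.mem_sup]
    exact ⟨_, hx, _, ⟨x, rfl⟩, by simp⟩
  rw [Submodule.mem_sup] at hT
  obtain ⟨y, hy, _, ⟨x, rfl⟩, hxy⟩ := hT
  refine ⟨x, ?_⟩
  rw [← hxy]
  simpa using hy

lemma core_s8 {k : Type*} [Field k] (I : Ideal (MvPolynomial (Fin 3) k)) (n : ℕ)
    (dv ev : Fin n → Fin 3 → k) (a : (Fin 3 → k) →ₗ[k] (Fin 3 → k))
    (U : Submodule k (Fin 3 → k))
    (hU : ∀ u, u ∈ U ↔ ∀ x, linF k x * linF k u ∈ I)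
    (h1 : ∀ x y, linF k x * linF k (a y) - linF k y * linF k (a x) ∈ I)
    (h2 : I ≤ Ideal.span {f | ∃ p q, f =
      linF k (dv p) * linF k (ev q) - linF k (dv q) * linF k (ev p)})
    (h3 : ∀ p, ev p - a (dv p) ∈ U)
    (hht : idealHeight I = 2) :
    ∃ e : ℕ, ∀ m : ℕ, 2 ≤ m → hilbertFn k I m = e := by
  have haU : ∀ u ∈ U, a u ∈ U := by
    intro u hu
    rw [hU] at hu ⊢
    intro x
    have := I.add_mem (h1 x u) (hu (a x))
    convert this using 1
    ring
  let ab : ((Fin 3 → k) ⧸ U) →ₗ[k] ((Fin 3 → k) ⧸ U) := U.mapQ U a haU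
  have hab : ∀ x, ab (U.mkQ x) = U.mkQ (a x) := fun x => rfl
  have hdim := U.finrank_quotient_add_finrank
  rw [Module.finrank_fin_fun] at hdim
  rcases aux_cyc (by omega) ab with ⟨vb, hvb⟩ | ⟨c, hc⟩
  · -- the cyclic case
    obtain ⟨v, rfl⟩ := U.mkQ_surjective vb
    have hv : ∀ S : Submodule k (Fin 3 → k), v ∈ S → (∀ x ∈ S, a x ∈ S) →
        (∀ u, (∀ x, linF k x * linF k u ∈ I) → u ∈ S) → S = ⊤ := by
      intro S hvS haS hUS
      have hUS' : U ≤ S := fun u hu => hUS u ((hU u).1 hu)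
      have := hvb (S.map U.mkQ) ⟨v, hvS, rfl⟩ (by
        rintro _ ⟨x, hx, rfl⟩
        exact ⟨a x, haS x hx, rfl⟩)
      have h4 := congrArg (Submodule.comap U.mkQ) this
      rw [Submodule.comap_map_mkQ, Submodule.comap_top, sup_eq_right.2 hUS'] at h4
      exact h4
    let ev' : Polynomial k →ₗ[k] ((Fin 3 → k) ⧸ U) :=
      (LinearMap.applyₗ (U.mkQ v)).comp (Polynomial.aeval ab).toLinearMap
    have hev' : ∀ p, ev' p = Polynomial.aeval ab p (U.mkQ v) := fun p => rfl
    have hevX : ∀ p, ev' (Polynomial.X * p) = ab (ev' p) := by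
      intro p
      rw [hev', hev', map_mul, Polynomial.aeval_X]
      rfl
    have hsurj : ∀ w, ∃ p, ev' p = w := by
      have := hvb (LinearMap.range ev') ⟨1, by rw [hev', map_one]; rfl⟩ (by
        rintro _ ⟨p, rfl⟩
        exact ⟨Polynomial.X * p, hevX p⟩)
      exact fun w => LinearMap.range_eq_top.1 this w
    let J : Ideal (Polynomial k) :=
      { carrier := {p | ev' p = 0}
        zero_mem' := map_zero ev'
        add_mem' := by
          intro p q hp hq
          change ev' p = 0 at hp
          change ev' q = 0 at hq
          change ev' (p + q) = 0
          rw [map_add, hp, hq, add_zero]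
        smul_mem' := by
          intro r p hp
          change ev' p = 0 at hp
          change ev' (r * p) = 0
          rw [hev'] at hp ⊢
          rw [map_mul, Module.End.mul_apply, hp, map_zero] }
    have hJ : ∀ p, p ∈ J ↔ ev' p = 0 := fun p => Iff.rfl
    choose pp hpp using fun i : Fin 3 => hsurj (U.mkQ (Pi.single i 1))
    let φ : MvPolynomial (Fin 3) k →ₐ[k] (Polynomial k ⧸ J) :=
      MvPolynomial.aeval (fun i => Ideal.Quotient.mkₐ k J (pp i))
    have hφlin : ∀ x p, ev' p = U.mkQ x → φ (linF k x) = Ideal.Quotient.mkₐ k J p := by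
      intro x p hp
      have e1 : φ (linF k x) = Ideal.Quotient.mkₐ k J (∑ i, x i • pp i) := by
        rw [linF_apply, map_sum, map_sum]
        refine Finset.sum_congr rfl fun i _ => ?_
        rw [map_smul, map_smul, aeval_X]
      rw [e1]
      apply Ideal.Quotient.eq.2
      rw [hJ, map_sub, hp, map_sum, sub_eq_zero]
      have ex : x = ∑ i, x i • (Pi.single i 1 : Fin 3 → k) := pi_eq_sum_univ' x
      conv_rhs => rw [ex, map_sum]
      refine Finset.sum_congr rfl fun i _ => ?_
      rw [map_smul, hpp, ← map_smul]
    have hφv : φ (linF k v) = 1 := by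
      rw [hφlin v 1 (by rw [hev', map_one]; rfl), map_one]
    have hφU : ∀ u ∈ U, φ (linF k u) = 0 := by
      intro u hu
      rw [hφlin u 0 (by rw [map_zero, eq_comm]; simpa using hu), map_zero]
    have hφa : ∀ x, φ (linF k (a x)) = Ideal.Quotient.mkₐ k J Polynomial.X * φ (linF k x) := by
      intro x
      obtain ⟨p, hp⟩ := hsurj (U.mkQ x)
      rw [hφlin x p hp, ← map_mul]
      apply hφlin
      rw [hevX, hp, hab]
    have hφker : ∀ x, φ (linF k x) = 0 → x ∈ U := by
      intro x hx
      obtain ⟨p, hp⟩ := hsurj (U.mkQ x)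
      rw [hφlin x p hp] at hx
      have hpJ : p ∈ J := Ideal.Quotient.eq_zero_iff_mem.1 hx
      rw [hJ, hp] at hpJ
      simpa using hpJ
    have hφe : ∀ p, φ (linF k (ev p)) = Ideal.Quotient.mkₐ k J Polynomial.X * φ (linF k (dv p)) := by
      intro p
      have := hφU _ (h3 p)
      rw [map_sub, map_sub, sub_eq_zero] at this
      rw [this, hφa]
    have hφI : ∀ f ∈ I, φ f = 0 := by
      have : Ideal.span {f | ∃ p q, f =
          linF k (dv p) * linF k (ev q) - linF k (dv q) * linF k (ev p)} ≤ RingHom.ker φ := by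
        rw [Ideal.span_le]
        rintro _ ⟨p, q, rfl⟩
        change φ _ = 0
        rw [map_sub, map_mul, map_mul, hφe, hφe]
        ring
      exact fun f hf => this (h2 hf)
    refine ⟨Module.finrank k (Polynomial k ⧸ J), fun m hm => ?_⟩
    obtain ⟨m, rfl⟩ : ∃ m', m = m' + 1 := ⟨m - 1, by omega⟩
    let ψ : ↥(homogeneousSubmodule (Fin 3) k (m + 1)) →ₗ[k] (Polynomial k ⧸ J) :=
      φ.toLinearMap.comp (homogeneousSubmodule (Fin 3) k (m + 1)).subtype
    have hψ : Function.Surjective ψ := by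
      intro y
      obtain ⟨p, rfl⟩ := Ideal.Quotient.mk_surjective y
      obtain ⟨x, hx⟩ := U.mkQ_surjective (ev' p)
      refine ⟨⟨linF k v ^ m * linF k x, ?_⟩, ?_⟩
      · have := ((linF_hom v).pow m).mul (linF_hom x)
        rwa [one_mul] at this
      · change φ (linF k v ^ m * linF k x) = _
        rw [map_mul, map_pow, hφv, one_pow, one_mul]
        exact hφlin x p hx.symm
    have hker : Submodule.comap (homogeneousSubmodule (Fin 3) k (m + 1)).subtype
        (Submodule.restrictScalars k (I : Submodule (MvPolynomial (Fin 3) k)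
          (MvPolynomial (Fin 3) k))) = LinearMap.ker ψ := by
      ext ⟨f, hf⟩
      constructor
      · intro h
        exact hφI f h
      · intro h
        change φ f = 0 at h
        change f ∈ I
        obtain ⟨x, hx⟩ := core_span I a h1 v hv m f hf
        have h5 := hφI _ hx
        rw [map_sub, h, map_mul, map_pow, hφv, one_pow, one_mul, zero_sub, neg_eq_zero] at h5
        have h6 := (hU x).1 (hφker x h5)
        obtain ⟨m, rfl⟩ : ∃ m', m = m' + 1 := ⟨m - 1, by omega⟩
        have h7 := I.add_mem hx (I.mul_mem_left (linF k v ^ m) (h6 v))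
        convert h7 using 1
        ring
    rw [hilbertFn, hker]
    exact (ψ.quotKerEquivOfSurjective hψ).finrank_eq
  · -- the non-cyclic case contradicts the height hypothesis
    exfalso
    set L := LinearMap.range (ab - c • (1 : _ →ₗ[k] _)) with hL
    have hK : Module.finrank k (L.comap U.mkQ) ≤ 1 := by
      have e1 := (L.mkQ.comp U.mkQ).finrank_range_add_finrank_ker
      have e2 : LinearMap.ker (L.mkQ.comp U.mkQ) = L.comap U.mkQ := by
        rw [LinearMap.ker_comp, Submodule.ker_mkQ]
      have e3 : LinearMap.range (L.mkQ.comp U.mkQ) = ⊤ :=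
        LinearMap.range_eq_top.2 (L.mkQ_surjective.comp U.mkQ_surjective)
      have e4 := L.finrank_quotient_add_finrank
      rw [e2, e3, finrank_top, Module.finrank_fin_fun] at e1
      omega
    obtain ⟨l, hl⟩ := (finrank_le_one_iff).1 hK
    refine aux_height I hht (linF k l) (linF_hom _) ?_
    refine h2.trans ?_
    rw [Ideal.span_le]
    have hd : ∀ p, ∃ r : k, linF k (ev p) = c • linF k (dv p) + r • linF k l := by
      intro p
      have hmem : ev p - c • dv p ∈ L.comap U.mkQ := by
        rw [Submodule.mem_comap]
        refine ⟨U.mkQ (dv p), ?_⟩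
        have h4 : U.mkQ (ev p) = U.mkQ (a (dv p)) := by
          exact (Submodule.Quotient.eq U).2 (h3 p)
        rw [LinearMap.sub_apply, hab, map_sub, h4]
        rfl
      obtain ⟨r, hr⟩ := hl ⟨_, hmem⟩
      refine ⟨r, ?_⟩
      have hr' := congrArg Subtype.val hr
      change r • (l : Fin 3 → k) = ev p - c • dv p at hr'
      rw [← map_smul, ← map_smul, hr', ← map_add]
      congr 1
      abel
    rintro _ ⟨p, q, rfl⟩
    obtain ⟨r, hr⟩ := hd p
    obtain ⟨s, hs⟩ := hd q
    rw [SetLike.mem_coe, Ideal.mem_span_singleton]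
    refine ⟨linF k (dv p) * MvPolynomial.C s - linF k (dv q) * MvPolynomial.C r, ?_⟩
    rw [hr, hs]
    simp only [smul_eq_C_mul]
    ring

lemma aux_main {k : Type*} [Field k] (n : ℕ) (I : Ideal (MvPolynomial (Fin 3) k))
    (d e : Fin n → MvPolynomial (Fin 3) k)
    (hd : ∀ p, (d p).IsHomogeneous 1) (he : ∀ p, (e p).IsHomogeneous 1)
    (hI : I = Ideal.span {f | ∃ p q, f = d p * e q - d q * e p})
    (t : ℕ) (ht : (Ideal.span (Set.range (X : Fin 3 → MvPolynomial (Fin 3) k))) ^ t ≤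
        Ideal.span (Set.range d))
    (hht : idealHeight I = 2) :
    ∃ e N : ℕ,
      (∀ m : ℕ, N ≤ m → hilbertFn k I m = e) ∧
      e + sInf {m : ℕ | ∃ F : Finset (MvPolynomial (Fin 3) k),
          F.card = m ∧ Ideal.span (F : Set (MvPolynomial (Fin 3) k)) = I} = 6 := by
  suffices h : ∃ e : ℕ, ∀ m : ℕ, 2 ≤ m → hilbertFn k I m = e by
    obtain ⟨e', h⟩ := h
    refine ⟨e', 2, h, ?_⟩
    rw [← h 2 le_rfl]
    have hmu := aux_mu (k := k) {f | ∃ p q, f = d p * e q - d q * e p} (by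
      rintro _ ⟨p, q, rfl⟩
      exact ((hd p).mul (he q)).sub ((hd q).mul (he p)))
    rw [← hI] at hmu
    rw [hmu]
    exact aux_hilb I
  choose dv hdv using fun p => linF_surj (d p) (hd p)
  choose ev hev using fun p => linF_surj (e p) (he p)
  -- the column spans all linear forms
  have hspan : Submodule.span k (Set.range dv) = ⊤ := by
    by_contra hne
    obtain ⟨f, hf0, hf⟩ := Submodule.exists_le_ker_of_lt_top _ (lt_top_iff_ne_top.2 hne)
    let φ : MvPolynomial (Fin 3) k →ₐ[k] k := MvPolynomial.aeval fun i => f (Pi.single i 1)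
    have hφ : ∀ x, φ (linF k x) = f x := by
      intro x
      rw [linF_apply, map_sum]
      conv_rhs => rw [pi_eq_sum_univ' x, map_sum]
      refine Finset.sum_congr rfl fun i _ => ?_
      rw [map_smul, map_smul, aeval_X]
    have hle : Ideal.span (Set.range d) ≤ RingHom.ker φ := by
      rw [Ideal.span_le]
      rintro _ ⟨p, rfl⟩
      change φ (d p) = 0
      rw [← hdv, hφ]
      exact hf (Submodule.subset_span ⟨p, rfl⟩)
    apply hf0
    ext i
    have h1 : (X i : MvPolynomial (Fin 3) k) ^ t ∈ RingHom.ker φ :=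
      hle (ht (Ideal.pow_mem_pow (Ideal.subset_span (Set.mem_range_self i)) t))
    change φ (X i ^ t) = 0 at h1
    rw [map_pow, aeval_X] at h1
    simpa using eq_zero_of_pow_eq_zero h1
  let D : (Fin n → k) →ₗ[k] (Fin 3 → k) := Fintype.linearCombination k dv
  let E : (Fin n → k) →ₗ[k] (Fin 3 → k) := Fintype.linearCombination k ev
  have hDp : ∀ p, D (Pi.single p 1) = dv p := fun p => by
    rw [Fintype.linearCombination_apply_single, one_smul]
  have hEp : ∀ p, E (Pi.single p 1) = ev p := fun p => by
    rw [Fintype.linearCombination_apply_single, one_smul]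
  have hDr : LinearMap.range D = ⊤ := by
    rw [Fintype.range_linearCombination, hspan]
  obtain ⟨s, hs⟩ := D.exists_rightInverse_of_surjective hDr
  have hs' : ∀ x, D (s x) = x := fun x => LinearMap.congr_fun hs x
  have hgen : ∀ p q, linF k (dv p) * linF k (ev q) - linF k (dv q) * linF k (ev p) ∈ I := by
    intro p q
    rw [hI, hdv, hdv, hev, hev]
    exact Ideal.subset_span ⟨p, q, rfl⟩
  have hbil : ∀ x y, linF k (D x) * linF k (E y) - linF k (D y) * linF k (E x) ∈ I := by
    have hsum : ∀ (w : Fin n → Fin 3 → k) (x : Fin n → k),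
        linF k (Fintype.linearCombination k w x) =
          ∑ p, MvPolynomial.C (x p) * linF k (w p) := by
      intro w x
      rw [Fintype.linearCombination_apply, map_sum]
      refine Finset.sum_congr rfl fun i _ => ?_
      rw [map_smul, smul_eq_C_mul]
    intro x y
    have : linF k (D x) * linF k (E y) - linF k (D y) * linF k (E x) =
        ∑ p, ∑ q, MvPolynomial.C (x p) * MvPolynomial.C (y q) *
          (linF k (dv p) * linF k (ev q) - linF k (dv q) * linF k (ev p)) := by
      rw [hsum, hsum, hsum, hsum, Finset.sum_mul_sum, Finset.sum_mul_sum]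
      rw [Finset.sum_comm (s := Finset.univ) (t := Finset.univ)
        (f := fun i j => MvPolynomial.C (y i) * linF k (dv i) * (MvPolynomial.C (x j) * linF k (ev j)))]
      rw [← Finset.sum_sub_distrib]
      refine Finset.sum_congr rfl fun p _ => ?_
      rw [← Finset.sum_sub_distrib]
      refine Finset.sum_congr rfl fun q _ => ?_
      ring
    rw [this]
    exact I.sum_mem fun p _ => I.sum_mem fun q _ => I.mul_mem_left _ (hgen p q)
  let U : Submodule k (Fin 3 → k) :=
    { carrier := {u | ∀ x, linF k x * linF k u ∈ I}
      zero_mem' := fun x => by simp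
      add_mem' := by
        intro u u' hu hu' x
        rw [map_add, mul_add]
        exact I.add_mem (hu x) (hu' x)
      smul_mem' := by
        intro c u hu x
        rw [map_smul, mul_smul_comm, smul_eq_C_mul]
        exact I.mul_mem_left _ (hu x) }
  refine core_s8 I n dv ev (E.comp s) U (fun u => Iff.rfl) ?_ ?_ ?_ hht
  · intro x y
    have := hbil (s x) (s y)
    rwa [hs', hs'] at this
  · rw [hI, Ideal.span_le]
    rintro _ ⟨p, q, rfl⟩
    exact Ideal.subset_span ⟨p, q, by rw [hdv, hdv, hev, hev]⟩
  · intro p x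
    have h := hbil (s x) (Pi.single p 1 - s (dv p))
    rw [hs', map_sub D, hDp, hs', sub_self, map_zero, zero_mul, sub_zero, map_sub E, hEp] at h
    exact h

lemma aux_minors {k : Type*} [Field k] (n : ℕ)
    (C : Matrix (Fin n) (Fin 2) (MvPolynomial (Fin 3) k)) (d e : Fin n → MvPolynomial (Fin 3) k)
    (c : k) (hc : c ≠ 0)
    (h : ∀ p q, d p * e q - d q * e p = MvPolynomial.C c * (C p 0 * C q 1 - C q 0 * C p 1)) :
    minorsIdeal 2 C = Ideal.span {f | ∃ p q, f = d p * e q - d q * e p} := by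
  apply le_antisymm
  · rw [minorsIdeal, Ideal.span_le]
    rintro _ ⟨rs, cs, rfl⟩
    have key : ∀ p q, C p 0 * C q 1 - C q 0 * C p 1 ∈
        Ideal.span {f | ∃ p q, f = d p * e q - d q * e p} := by
      intro p q
      have h2 : d p * e q - d q * e p ∈
        Ideal.span {f | ∃ p q, f = d p * e q - d q * e p} := Ideal.subset_span ⟨p, q, rfl⟩
      have h1 := Ideal.mul_mem_left _ (MvPolynomial.C c⁻¹) h2
      rw [h, ← mul_assoc, ← map_mul, inv_mul_cancel₀ hc, map_one, one_mul] at h1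
      exact h1
    rw [SetLike.mem_coe, Matrix.det_fin_two]
    simp only [Matrix.submatrix_apply]
    have h01 : ∀ j : Fin 2, j = 0 ∨ j = 1 := by decide
    rcases h01 (cs 0) with h0 | h0 <;> rcases h01 (cs 1) with h1 | h1 <;> rw [h0, h1]
    · convert Ideal.zero_mem _ using 1
      ring
    · convert key (rs 0) (rs 1) using 1
      ring
    · convert key (rs 1) (rs 0) using 1
      ring
    · convert Ideal.zero_mem _ using 1
      ring
  · rw [Ideal.span_le]
    rintro _ ⟨p, q, rfl⟩
    rw [h]
    refine Ideal.mul_mem_left _ _ (Ideal.subset_span ⟨![p, q], ![0, 1], ?_⟩)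
    rw [Matrix.det_fin_two]
    simp
    ring

/-- Let `C` be a matrix of linear forms with `2` columns in a polynomial ring
`R = k[T₁,T₂,T₃]` in three variables over a field `k`.  If some generalized column ideal
`I₁(C λᵀ)` (for `λ ∈ k²` nonzero) is zero-dimensional (i.e. contains a power of the maximal
homogeneous ideal) and `ht I₂(C) = 2`, then `e(R/I₂(C)) + μ(I₂(C)) = 6`, where the multiplicity
`e` of the one-dimensional standard graded ring `R/I₂(C)` is the eventually constant value of its
Hilbert function, and `μ` denotes the minimal number of generators. -/
theorem stmt8 {k : Type*} [Field k] (n : ℕ)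
    (C : Matrix (Fin n) (Fin 2) (MvPolynomial (Fin 3) k))
    (hC : ∀ i j, (C i j).IsHomogeneous 1)
    (hcol : ∃ l : Fin 2 → k, l ≠ 0 ∧ ∃ t : ℕ,
      (Ideal.span (Set.range (X : Fin 3 → MvPolynomial (Fin 3) k))) ^ t ≤
        Ideal.span (Set.range fun p : Fin n => ∑ j : Fin 2, l j • C p j))
    (hht : idealHeight (minorsIdeal 2 C) = 2) :
    ∃ e N : ℕ,
      (∀ m : ℕ, N ≤ m → hilbertFn k (minorsIdeal 2 C) m = e) ∧
      e + sInf {m : ℕ | ∃ F : Finset (MvPolynomial (Fin 3) k),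
          F.card = m ∧ Ideal.span (F : Set (MvPolynomial (Fin 3) k)) = minorsIdeal 2 C} = 6 := by
  obtain ⟨l, hl, t, ht⟩ := hcol
  have hd : ∀ p, (∑ j : Fin 2, l j • C p j).IsHomogeneous 1 := by
    intro p
    refine IsHomogeneous.sum _ _ _ fun j _ => ?_
    rw [smul_eq_C_mul]
    exact (hC p j).C_mul _
  by_cases h0 : l 0 = 0
  · have h1 : l 1 ≠ 0 := by
      intro h1
      apply hl
      ext j
      fin_cases j
      · exact h0
      · exact h1
    refine aux_main n _ (fun p => ∑ j : Fin 2, l j • C p j) (fun p => C p 0) hd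
      (fun p => hC p 0) (aux_minors n C _ _ (-l 1) (neg_ne_zero.2 h1) ?_) t ht hht
    intro p q
    simp only [Fin.sum_univ_two, h0, smul_eq_C_mul, map_zero, map_neg]
    ring
  · refine aux_main n _ (fun p => ∑ j : Fin 2, l j • C p j) (fun p => C p 1) hd
      (fun p => hC p 1) (aux_minors n C _ _ (l 0) h0 ?_) t ht hht
    intro p q
    simp only [Fin.sum_univ_two, smul_eq_C_mul]
    ring
end

section
/- Let B = k[x,y] with k an infinite field, I a height-two ideal of B generated by forms g₁,…,g_n of degree d, and φ a homogeneous Hilbert–Burch matrix for [g₁,…,g_n]. Assume every entry of φ has the same degree c. Then: (1) writing f₁, f₂ for the degree-r forms with k[I_d] ⊆ k[f₁,f₂] (r the degree of the field extension [Quot(k[B_d]) : Quot(k[I_d])]), every entry of φ lies in the subring k[f₁,f₂]; and (2) if c is prime, the morphism ℙ¹ → ℙ^{n-1} given by q ↦ [g₁(q):⋯:g_n(q)] is birational onto its image if and only if μ(I₁(φ)) ≥ 3. -/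
open MvPolynomial

namespace HB

lemma comp_mul {k : Type*} [Field k] {h q : MvPolynomial (Fin 2) k} {m : ℕ}
    (hh : h.IsHomogeneous m) (t : ℕ) :
    homogeneousComponent (m + t) (h * q) = h * homogeneousComponent t q := by
  conv_lhs => rw [← sum_homogeneousComponent q, Finset.mul_sum, map_sum]
  have key : ∀ i, homogeneousComponent (m + t) (h * homogeneousComponent i q)
      = if i = t then h * homogeneousComponent t q else 0 := by
    intro i
    rw [homogeneousComponent_of_mem (m := m + t) (n := m + i)
      ((mem_homogeneousSubmodule _ _).2 (hh.mul (homogeneousComponent_isHomogeneous i q)))]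
    by_cases hi : i = t
    · subst hi; simp
    · simp [hi, Ne.symm hi]
  simp only [key]
  rw [Finset.sum_ite_eq']
  split_ifs with ht
  · rfl
  · rw [homogeneousComponent_eq_zero, mul_zero]
    simpa using ht

lemma comp_mul_lt {k : Type*} [Field k] {h q : MvPolynomial (Fin 2) k} {m : ℕ}
    (hh : h.IsHomogeneous m) (t : ℕ) (ht : t < m) :
    homogeneousComponent t (h * q) = 0 := by
  conv_lhs => rw [← sum_homogeneousComponent q, Finset.mul_sum, map_sum]
  refine Finset.sum_eq_zero fun i _ => ?_
  rw [homogeneousComponent_of_mem (m := t) (n := m + i)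
      ((mem_homogeneousSubmodule _ _).2 (hh.mul (homogeneousComponent_isHomogeneous i q)))]
  rw [if_neg (by omega)]

lemma hom_of_mul {k : Type*} [Field k] {h q : MvPolynomial (Fin 2) k} {m t : ℕ}
    (hh : h.IsHomogeneous m) (h0 : h ≠ 0) (ha : (h * q).IsHomogeneous (m + t)) :
    q.IsHomogeneous t := by
  have := comp_mul (q := q) hh t
  rw [homogeneousComponent_eq_self ha] at this
  have := mul_left_cancel₀ h0 this
  rw [this]
  exact homogeneousComponent_isHomogeneous _ _

lemma zero_of_mul_lt {k : Type*} [Field k] {h q : MvPolynomial (Fin 2) k} {m t : ℕ}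
    (hh : h.IsHomogeneous m) (ht : t < m) (ha : (h * q).IsHomogeneous t) :
    h * q = 0 := by
  have := comp_mul_lt (q := q) hh t ht
  rwa [homogeneousComponent_eq_self ha] at this

lemma finrank_hom (k : Type*) [Field k] (m : ℕ) :
    Module.finrank k (homogeneousSubmodule (Fin 2) k m) = m + 1 := by
  let L : Polynomial.degreeLT k (m+1) →ₗ[k] homogeneousSubmodule (Fin 2) k m :=
    LinearMap.codRestrict _ ((Polynomial.homogenizeLM m).comp (Submodule.subtype _))
      (fun p => by simp [mem_homogeneousSubmodule])
  have hb : Function.Bijective L := by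
    constructor
    · rw [injective_iff_map_eq_zero]
      rintro ⟨p, hp⟩ h
      have h' : p.homogenize m = 0 := by simpa [L] using congrArg Subtype.val h
      ext1
      refine Polynomial.eq_zero_of_homogenize_eq_zero ?_ h'
      rw [Polynomial.mem_degreeLT] at hp
      by_cases hp0 : p = 0
      · simp [hp0]
      have := (Polynomial.natDegree_lt_iff_degree_lt hp0).2 hp
      exact Nat.lt_succ_iff.1 this
    · rintro ⟨q, hq⟩
      rw [mem_homogeneousSubmodule] at hq
      -- reduce the dehomogenisation to degree < m+1
      refine ⟨⟨MvPolynomial.aeval ![Polynomial.X, 1] q, ?_⟩, ?_⟩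
      · rw [q.as_sum, map_sum]
        refine Submodule.sum_mem _ fun s hs => ?_
        rw [aeval_monomial, Polynomial.mem_degreeLT]
        have hs' := hq.degree_eq_sum_deg_support hs
        have : s 0 ≤ m := by
          have : s.degree = s 0 + s 1 := by simp [Finsupp.degree_eq_sum]
          have h2 : s.degree = m := by
            by_contra hne
            exact (mem_support_iff.1 hs) (hq.coeff_eq_zero hne)
          omega
        rw [Finsupp.prod_fintype _ _ (by simp)]
        simp only [Fin.prod_univ_two, Matrix.cons_val_zero, Matrix.cons_val_one, one_pow, mul_one]
        refine lt_of_le_of_lt (Polynomial.degree_C_mul_X_pow_le _ _) ?_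
        exact_mod_cast Nat.lt_succ_of_le this
      · ext1
        simpa [L] using Polynomial.homogenize_eq_of_isHomogeneous hq rfl
  rw [← (LinearEquiv.ofBijective L hb).finrank_eq, (Polynomial.degreeLTEquiv k (m+1)).finrank_eq]
  simp

instance (k : Type*) [Field k] (m : ℕ) :
    Module.Finite k (homogeneousSubmodule (Fin 2) k m) :=
  Module.finite_of_finrank_pos (by rw [finrank_hom]; omega)

lemma comp_aeval {k : Type*} [Field k] {f₁ f₂ : MvPolynomial (Fin 2) k} {r : ℕ} (hr : 0 < r)
    (h1 : f₁.IsHomogeneous r) (h2 : f₂.IsHomogeneous r) (P : MvPolynomial (Fin 2) k) (D : ℕ) :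
    homogeneousComponent D (aeval ![f₁, f₂] P) =
      if r ∣ D then aeval ![f₁, f₂] (homogeneousComponent (D / r) P) else 0 := by
  conv_lhs => rw [← sum_homogeneousComponent P, map_sum, map_sum]
  have hom : ∀ i, (aeval ![f₁, f₂] (homogeneousComponent i P)).IsHomogeneous (r * i) := by
    intro i
    refine (homogeneousComponent_isHomogeneous i P).aeval ![f₁, f₂] ?_
    intro j; fin_cases j <;> simpa
  have key : ∀ i, homogeneousComponent D (aeval ![f₁, f₂] (homogeneousComponent i P)) =
      if r * i = D then aeval ![f₁, f₂] (homogeneousComponent i P) else 0 := by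
    intro i
    rw [homogeneousComponent_of_mem (m := D) (n := r * i)
      ((mem_homogeneousSubmodule _ _).2 (hom i))]
    congr 1
    exact propext eq_comm
  simp only [key]
  by_cases hd : r ∣ D
  · obtain ⟨e, rfl⟩ := hd
    rw [if_pos (dvd_mul_right _ _), Nat.mul_div_cancel_left _ hr]
    have : ∀ i, (r * i = r * e) ↔ i = e := fun i => by
      constructor
      · exact Nat.eq_of_mul_eq_mul_left hr
      · rintro rfl; rfl
    simp only [this, Finset.sum_ite_eq']
    split_ifs with ht
    · rfl
    · rw [homogeneousComponent_eq_zero, map_zero]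
      simpa using ht
  · rw [if_neg hd]
    refine Finset.sum_eq_zero fun i _ => if_neg ?_
    rintro rfl
    exact hd (dvd_mul_right _ _)

lemma aeval_hom_sum {k : Type*} [Field k] (f₁ f₂ : MvPolynomial (Fin 2) k)
    {m : ℕ} {P : MvPolynomial (Fin 2) k} (hP : P.IsHomogeneous m) :
    ∃ a : ℕ → k, (P = ∑ i ∈ Finset.range (m+1), C (a i) * X 0 ^ i * X 1 ^ (m - i)) ∧
     aeval ![f₁, f₂] P = ∑ i ∈ Finset.range (m+1), C (a i) * f₁ ^ i * f₂ ^ (m - i) := by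
  have h := Polynomial.homogenize_eq_of_isHomogeneous hP rfl
  set p : Polynomial k := aeval ![Polynomial.X, 1] P
  have hP' : P = ∑ i ∈ Finset.range (m+1), C (p.coeff i) * X 0 ^ i * X 1 ^ (m - i) := by
    rw [← h, Polynomial.homogenize, Finset.Nat.sum_antidiagonal_eq_sum_range_succ_mk]
    refine Finset.sum_congr rfl fun i _ => ?_
    rw [monomial_eq, Finsupp.prod_fintype _ _ (by simp)]
    simp [Fin.prod_univ_two, mul_assoc]
  refine ⟨p.coeff, hP', ?_⟩
  conv_lhs => rw [hP']
  simp [map_sum, algebraMap_eq]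

lemma not_unit {k : Type*} [Field k] {f : MvPolynomial (Fin 2) k} {r : ℕ} (hr : 0 < r)
    (h : f.IsHomogeneous r) : ¬ IsUnit f := by
  intro hu
  have h2 := (MvPolynomial.isUnit_iff_totalDegree_of_isReduced.1 hu).2
  rw [h.totalDegree hu.ne_zero] at h2
  omega

/-- independence lemma -/
lemma indep {k : Type*} [Field k] {f₁ f₂ : MvPolynomial (Fin 2) k} {r s : ℕ} (hs : s < r)
    (h1 : f₁.IsHomogeneous r) (hc : IsRelPrime f₁ f₂) (h2 : f₂.IsHomogeneous r) (m : ℕ) :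
    ∀ (l : ℕ → MvPolynomial (Fin 2) k), (∀ i, (l i).IsHomogeneous s) →
    ∑ i ∈ Finset.range (m+1), l i * f₁ ^ i * f₂ ^ (m - i) = 0 → ∀ i ≤ m, l i = 0 := by
  have h10 : f₁ ≠ 0 := by
    rintro rfl
    have hu : IsUnit f₂ := isRelPrime_zero_left.1 hc
    exact not_unit (by omega) h2 hu
  induction m with
  | zero =>
    intro l hl h i hi
    obtain rfl : i = 0 := by omega
    simpa using h
  | succ m ih =>
    intro l hl h
    rw [Finset.sum_range_succ'] at h
    have e : ∑ i ∈ Finset.range (m+1), l (i+1) * f₁ ^ (i+1) * f₂ ^ (m + 1 - (i+1)) =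
        f₁ * ∑ i ∈ Finset.range (m+1), l (i+1) * f₁ ^ i * f₂ ^ (m - i) := by
      rw [Finset.mul_sum]
      refine Finset.sum_congr rfl fun i _ => ?_
      rw [Nat.add_sub_add_right]; ring
    rw [e] at h
    have hd : f₁ ∣ l 0 * f₂ ^ (m+1) := by
      refine ⟨-∑ i ∈ Finset.range (m+1), l (i+1) * f₁ ^ i * f₂ ^ (m - i), ?_⟩
      simp at h
      linear_combination h
    have hd' : f₁ ∣ l 0 := (hc.pow_right).dvd_of_dvd_mul_right hd
    have l0 : l 0 = 0 := by
      obtain ⟨q, hq⟩ := hd'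
      have := hl 0
      rw [hq] at this ⊢
      exact zero_of_mul_lt h1 hs this
    have := ih (fun i => l (i+1)) (fun i => hl (i+1)) (by
      simpa [l0, h10] using h)
    intro i hi
    rcases i with _ | i
    · exact l0
    · exact this i (by omega)

end HB

namespace HB

lemma aeval_inj {k : Type*} [Field k] {f₁ f₂ : MvPolynomial (Fin 2) k} {r : ℕ} (hr : 0 < r)
    (h1 : f₁.IsHomogeneous r) (h2 : f₂.IsHomogeneous r) (hc : IsRelPrime f₁ f₂) {m : ℕ}
    {P : MvPolynomial (Fin 2) k} (hP : P.IsHomogeneous m) (h : aeval ![f₁, f₂] P = 0) : P = 0 := by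
  obtain ⟨a, ha, ha'⟩ := aeval_hom_sum f₁ f₂ hP
  rw [ha'] at h
  have := indep hr h1 hc h2 m (fun i => C (a i)) (fun i => isHomogeneous_C _ _) h
  rw [ha]
  refine Finset.sum_eq_zero fun i hi => ?_
  rw [this i (by simpa [Nat.lt_succ_iff] using hi)]
  simp

lemma aeval_indep {k : Type*} [Field k] {f₁ f₂ : MvPolynomial (Fin 2) k} {r : ℕ} (hr : 2 ≤ r)
    (h1 : f₁.IsHomogeneous r) (h2 : f₂.IsHomogeneous r) (hc : IsRelPrime f₁ f₂)
    {P Q : MvPolynomial (Fin 2) k}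
    (h : X 1 * aeval ![f₁, f₂] P = X 0 * aeval ![f₁, f₂] Q) : P = 0 := by
  have key : ∀ m, homogeneousComponent m P = 0 := by
    intro m
    have hm := congrArg (homogeneousComponent (1 + r * m)) h
    rw [comp_mul (isHomogeneous_X _ _), comp_mul (isHomogeneous_X _ _),
      comp_aeval (by omega) h1 h2, comp_aeval (by omega) h1 h2, if_pos (dvd_mul_right _ _),
      if_pos (dvd_mul_right _ _), Nat.mul_div_cancel_left _ (by omega)] at hm
    obtain ⟨a, ha, ha'⟩ := aeval_hom_sum f₁ f₂ (homogeneousComponent_isHomogeneous m P)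
    obtain ⟨b, hb, hb'⟩ := aeval_hom_sum f₁ f₂ (homogeneousComponent_isHomogeneous m Q)
    rw [ha', hb', ← sub_eq_zero, Finset.mul_sum, Finset.mul_sum, ← Finset.sum_sub_distrib] at hm
    have := indep (s := 1) (by omega) h1 hc h2 m (fun i => C (a i) * X 1 - C (b i) * X 0)
      (fun i => by
        refine IsHomogeneous.sub ?_ ?_
        · exact isHomogeneous_C_mul_X _ _
        · exact isHomogeneous_C_mul_X _ _)
      (by
        rw [← hm]
        refine Finset.sum_congr rfl fun i _ => ?_
        ring)
    rw [ha]
    refine Finset.sum_eq_zero fun i hi => ?_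
    have h3 := this i (by simpa [Nat.lt_succ_iff] using hi)
    have h4 := congrArg (coeff (Finsupp.single 1 1)) h3
    have : a i = 0 := by
      simpa [coeff_C_mul, coeff_X, Finsupp.single_left_inj] using h4
    simp [this]
  rw [← sum_homogeneousComponent P]
  exact Finset.sum_eq_zero fun i _ => key i

lemma cop_of_height {k : Type*} [Field k] {n : ℕ} {g : Fin n → MvPolynomial (Fin 2) k}
    (hht : idealHeight (Ideal.span (Set.range g)) = 2) (p : MvPolynomial (Fin 2) k) (hp : Prime p) :
    ∃ i, ¬ p ∣ g i := by
  by_contra! hcon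
  have hP : (Ideal.span {p}).IsPrime := (Ideal.span_singleton_prime hp.ne_zero).2 hp
  have hle : Ideal.span (Set.range g) ≤ Ideal.span {p} := by
    rw [Ideal.span_le]
    rintro _ ⟨i, rfl⟩
    exact Ideal.mem_span_singleton.2 (hcon i)
  have h1 : idealHeight (Ideal.span (Set.range g)) ≤
      Order.height (⟨Ideal.span {p}, hP⟩ : PrimeSpectrum (MvPolynomial (Fin 2) k)) :=
    iInf₂_le (α := ℕ∞) (⟨Ideal.span {p}, hP⟩ : PrimeSpectrum (MvPolynomial (Fin 2) k)) hle
  rw [← PrimeSpectrum.height_eq_orderHeight, hht] at h1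
  have h2 : (Ideal.span {p}).height ≤ 1 :=
    Ideal.height_le_one_of_isPrincipal_of_mem_minimalPrimes (Ideal.span {p}) _
      (by rw [Ideal.minimalPrimes_eq_subsingleton_self]; rfl)
  have := h1.trans h2
  exact absurd this (by decide)

lemma prime_X {k : Type*} [Field k] (i : Fin 2) : Prime (X i : MvPolynomial (Fin 2) k) :=
  MvPolynomial.X_prime

lemma d_pos {k : Type*} [Field k] {n d : ℕ} {g : Fin n → MvPolynomial (Fin 2) k}
    (hg : ∀ i, (g i).IsHomogeneous d)
    (hht : idealHeight (Ideal.span (Set.range g)) = 2) : 0 < d := by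
  by_contra hd
  obtain rfl : d = 0 := by omega
  obtain ⟨i, hi⟩ := cop_of_height hht (X 0) (prime_X 0)
  have h0 : g i ≠ 0 := by intro h; rw [h] at hi; exact hi (dvd_zero _)
  have hC := (totalDegree_eq_zero_iff_eq_C (p := g i)).1 ((hg i).totalDegree h0)
  have hu : IsUnit (g i) := by
    rw [hC]
    refine IsUnit.map C (IsUnit.mk0 _ ?_)
    intro h; rw [h] at hC; exact h0 (by simpa using hC)
  have : Ideal.span (Set.range g) = ⊤ :=
    Ideal.eq_top_of_isUnit_mem _ (Ideal.subset_span ⟨i, rfl⟩) hu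
  rw [this] at hht
  have h2 : idealHeight (⊤ : Ideal (MvPolynomial (Fin 2) k)) = ⊤ := by
    unfold idealHeight
    refine iInf₂_eq_top.2 fun P hP => ?_
    exact absurd (top_le_iff.1 hP) P.2.ne_top
  rw [h2] at hht
  exact absurd hht (by decide)

lemma exists_relprime {k : Type*} [Field k] [Infinite k] {n : ℕ}
    {g : Fin n → MvPolynomial (Fin 2) k} (hcop : ∀ p, Prime p → ∃ i, ¬ p ∣ g i) :
    ∃ a b : Fin n → k, (∑ i, C (a i) * g i) ≠ 0 ∧
      IsRelPrime (∑ i, C (a i) * g i) (∑ i, C (b i) * g i) := by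
  classical
  obtain ⟨i₀, hi₀⟩ := hcop (X 0) (prime_X 0)
  have h0 : g i₀ ≠ 0 := by intro h; rw [h] at hi₀; exact hi₀ (dvd_zero _)
  let L : (Fin n → k) →ₗ[k] MvPolynomial (Fin 2) k := Fintype.linearCombination k g
  have hL : ∀ a, L a = ∑ i, C (a i) * g i := fun a => by
    simp [L, Fintype.linearCombination_apply, C_mul']
  let W : MvPolynomial (Fin 2) k → Submodule k (Fin n → k) := fun p =>
    ((Ideal.span {p}).restrictScalars k).comap L
  have hW : ∀ p, Prime p → W p ≠ ⊤ := by
    intro p hp htop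
    obtain ⟨i, hi⟩ := hcop p hp
    have : Pi.single i 1 ∈ W p := by rw [htop]; trivial
    apply hi
    have := Ideal.mem_span_singleton.1 (show L (Pi.single i 1) ∈ Ideal.span {p} from this)
    simpa [L] using this
  have hS := Subspace.biUnion_ne_univ_of_top_notMem
    (s := (UniqueFactorizationMonoid.factors (g i₀)).toFinset.image W) (by
      intro hmem
      obtain ⟨p, hp, hpt⟩ := Finset.mem_image.1 hmem
      exact hW p (UniqueFactorizationMonoid.prime_of_factor p (Multiset.mem_toFinset.1 hp)) hpt)
  obtain ⟨b, hb⟩ := (Set.ne_univ_iff_exists_notMem _).1 hS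
  have hsingle : ∑ i, C (Pi.single (M := fun _ => k) i₀ 1 i) * g i = g i₀ := by
    rw [← hL]; simp [L]
  refine ⟨Pi.single i₀ 1, b, ?_, ?_⟩
  · rwa [hsingle]
  · rw [hsingle, ← hL]
    rw [UniqueFactorizationMonoid.isRelPrime_iff_no_prime_factors h0]
    intro p hpd hpb hp
    obtain ⟨q, hq, hpq⟩ := UniqueFactorizationMonoid.exists_mem_factors_of_dvd h0 hp.irreducible hpd
    apply hb
    refine Set.mem_iUnion₂.2 ⟨W q, Finset.mem_image_of_mem _ (Multiset.mem_toFinset.2 hq), ?_⟩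
    exact Ideal.mem_span_singleton.2 (hpq.symm.dvd.trans hpb)

lemma proportional {k : Type*} [Field k] [Infinite k] {n : ℕ}
    {g u : Fin n → MvPolynomial (Fin 2) k} (hcop : ∀ p, Prime p → ∃ i, ¬ p ∣ g i)
    (h : ∀ i j, u i * g j = u j * g i) : ∃ s, ∀ i, u i = s * g i := by
  obtain ⟨a, b, h0, hrel⟩ := exists_relprime hcop
  have e1 : ∀ (a : Fin n → k) i, u i * (∑ j, C (a j) * g j) = (∑ j, C (a j) * u j) * g i := by
    intro a i
    rw [Finset.mul_sum, Finset.sum_mul]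
    refine Finset.sum_congr rfl fun j _ => ?_
    linear_combination C (a j) * h i j
  have e2 : (∑ j, C (a j) * u j) * (∑ j, C (b j) * g j) =
      (∑ j, C (b j) * u j) * (∑ j, C (a j) * g j) := by
    rw [Finset.sum_mul, Finset.mul_sum]
    refine Finset.sum_congr rfl fun j _ => ?_
    linear_combination C (a j) * e1 b j
  have hd : (∑ j, C (a j) * g j) ∣ (∑ j, C (a j) * u j) :=
    by
    refine hrel.dvd_of_dvd_mul_right ?_
    rw [e2]
    exact dvd_mul_left _ _
  obtain ⟨s, hs⟩ := hd
  refine ⟨s, fun i => ?_⟩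
  have := e1 a i
  rw [hs] at this
  apply mul_right_cancel₀ h0
  linear_combination this

noncomputable def sumMul {k : Type*} [Field k] {n e : ℕ} (a : Fin n → MvPolynomial (Fin 2) k)
    (ha : ∀ i, (a i).IsHomogeneous e) (t : ℕ) :
    (Fin n → homogeneousSubmodule (Fin 2) k t) →ₗ[k] homogeneousSubmodule (Fin 2) k (e + t) where
  toFun S := ⟨∑ i, a i * (S i).1, (mem_homogeneousSubmodule _ _).2
    (IsHomogeneous.sum _ _ _ fun i _ => (ha i).mul ((mem_homogeneousSubmodule _ _).1 (S i).2))⟩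
  map_add' S T := by
    ext1; simp [mul_add, Finset.sum_add_distrib]
  map_smul' c S := by
    ext1; simp [Finset.smul_sum]

lemma sumMul_coe {k : Type*} [Field k] {n e : ℕ} (a : Fin n → MvPolynomial (Fin 2) k)
    (ha : ∀ i, (a i).IsHomogeneous e) (t : ℕ) (S) :
    (sumMul a ha t S : MvPolynomial (Fin 2) k) = ∑ i, a i * (S i).1 := rfl

lemma two_surj {k : Type*} [Field k] {d : ℕ} {h : Fin 2 → MvPolynomial (Fin 2) k}
    (hh : ∀ i, (h i).IsHomogeneous d) (h0 : h 0 ≠ 0) (hrel : IsRelPrime (h 0) (h 1)) (c : ℕ) :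
    Function.Surjective (sumMul h hh (d + c)) := by
  rw [← LinearMap.range_eq_top]
  apply Submodule.eq_top_of_finrank_eq
  have hrn := LinearMap.finrank_range_add_finrank_ker (sumMul h hh (d + c))
  have hker : Module.finrank k (LinearMap.ker (sumMul h hh (d + c))) ≤ c + 1 := by
    rw [← finrank_hom k c]
    -- the kernel is the image of multiplication by (h1, -h0)
    let K : homogeneousSubmodule (Fin 2) k c →ₗ[k] (Fin 2 → homogeneousSubmodule (Fin 2) k (d+c)) :=
      LinearMap.pi fun i => if i = 0 then
          (sumMul (n := 1) (fun _ => h 1) (fun _ => hh 1) c).comp (LinearMap.pi fun _ => LinearMap.id)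
        else - (sumMul (n := 1) (fun _ => h 0) (fun _ => hh 0) c).comp
          (LinearMap.pi fun _ => LinearMap.id)
    have hle : LinearMap.ker (sumMul h hh (d + c)) ≤ LinearMap.range K := by
      intro S hS
      have hS' : h 0 * (S 0).1 + h 1 * (S 1).1 = 0 := by
        have := congrArg Subtype.val (LinearMap.mem_ker.1 hS)
        simpa [sumMul_coe, Fin.sum_univ_two] using this
      have hd : h 0 ∣ (S 1).1 := hrel.dvd_of_dvd_mul_left
        ⟨-(S 0).1, by linear_combination hS'⟩
      obtain ⟨q, hq⟩ := hd
      have hqh : q.IsHomogeneous c := hom_of_mul (hh 0) h0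
        (hq ▸ (mem_homogeneousSubmodule _ _).1 (S 1).2)
      have h0q : (S 0).1 = - (h 1 * q) := by
        apply mul_left_cancel₀ h0
        rw [hq] at hS'
        linear_combination hS'
      refine ⟨-⟨q, (mem_homogeneousSubmodule _ _).2 hqh⟩, ?_⟩
      funext i
      ext1
      fin_cases i
      · simp [K, sumMul_coe, h0q]
      · simp [K, sumMul_coe, hq]
    exact (Submodule.finrank_mono hle).trans (LinearMap.finrank_range_le K)
  rw [Module.finrank_pi_fintype] at hrn
  simp only [finrank_hom, Fin.sum_univ_two] at hrn
  have hle := Submodule.finrank_le (LinearMap.range (sumMul h hh (d + c)))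
  rw [finrank_hom] at hle ⊢
  omega

lemma g_surj {k : Type*} [Field k] [Infinite k] {n d : ℕ} {g : Fin n → MvPolynomial (Fin 2) k}
    (hg : ∀ i, (g i).IsHomogeneous d) (hcop : ∀ p, Prime p → ∃ i, ¬ p ∣ g i) (c : ℕ) :
    Function.Surjective (sumMul g hg (d + c)) := by
  obtain ⟨a, b, h0, hrel⟩ := exists_relprime hcop
  have hlin : ∀ a : Fin n → k, (∑ i, C (a i) * g i).IsHomogeneous d := fun a =>
    IsHomogeneous.sum _ _ _ fun i _ => (hg i).C_mul _
  intro y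
  obtain ⟨S, hS⟩ := two_surj (h := ![∑ i, C (a i) * g i, ∑ i, C (b i) * g i])
    (by intro i; fin_cases i <;> simp [hlin]) (by simpa using h0) (by simpa using hrel) c y
  refine ⟨fun i => a i • S 0 + b i • S 1, ?_⟩
  rw [← hS]
  ext1
  simp only [sumMul_coe, Fin.sum_univ_two, Matrix.cons_val_zero, Matrix.cons_val_one,
    Finset.sum_mul, ← Finset.sum_add_distrib]
  refine Finset.sum_congr rfl fun i _ => ?_
  simp only [Submodule.coe_add, Submodule.coe_smul, ← C_mul']
  ring

end HB

namespace HB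

/-- homogeneous lifting of syzygies -/
lemma syz_lift {k : Type*} [Field k] {n c : ℕ}
    {φ : Matrix (Fin n) (Fin (n - 1)) (MvPolynomial (Fin 2) k)}
    (hφhom : ∀ i j, (φ i j).IsHomogeneous c) (w : Fin (n-1) → MvPolynomial (Fin 2) k)
    (t : ℕ) (hv : ∀ i, (φ.mulVec w i).IsHomogeneous (c + t)) :
    φ.mulVec (fun j => homogeneousComponent t (w j)) = φ.mulVec w := by
  funext i
  rw [← homogeneousComponent_eq_self (hv i)]
  simp only [Matrix.mulVec, dotProduct, map_sum]
  exact Finset.sum_congr rfl fun j _ => (comp_mul (hφhom i j) t).symm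

lemma syz_zero {k : Type*} [Field k] {n c : ℕ}
    {φ : Matrix (Fin n) (Fin (n - 1)) (MvPolynomial (Fin 2) k)}
    (hφhom : ∀ i j, (φ i j).IsHomogeneous c) (w : Fin (n-1) → MvPolynomial (Fin 2) k)
    (t : ℕ) (ht : t < c) (hv : ∀ i, (φ.mulVec w i).IsHomogeneous t) :
    φ.mulVec w = 0 := by
  funext i
  rw [← homogeneousComponent_eq_self (hv i)]
  simp only [Matrix.mulVec, dotProduct, map_sum]
  exact Finset.sum_eq_zero fun j _ => comp_mul_lt (hφhom i j) t ht

lemma degree_eq {k : Type*} [Field k] [Infinite k] {n d c : ℕ}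
    {g : Fin n → MvPolynomial (Fin 2) k} (hg : ∀ i, (g i).IsHomogeneous d)
    (hcop : ∀ p, Prime p → ∃ i, ¬ p ∣ g i)
    {φ : Matrix (Fin n) (Fin (n - 1)) (MvPolynomial (Fin 2) k)}
    (hinj : Function.Injective φ.mulVec)
    (hex : ∀ v : Fin n → MvPolynomial (Fin 2) k, (∑ i, g i * v i = 0) ↔ ∃ w, φ.mulVec w = v)
    (hφhom : ∀ i j, (φ i j).IsHomogeneous c) : d = (n - 1) * c := by
  have hsurj : Function.Surjective (sumMul g hg (c + d)) := by
    rw [add_comm]; exact g_surj hg hcop c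
  let K : (Fin (n-1) → homogeneousSubmodule (Fin 2) k d) →ₗ[k]
      (Fin n → homogeneousSubmodule (Fin 2) k (c + d)) :=
    LinearMap.pi fun i => sumMul (φ i) (hφhom i) d
  have hK : ∀ w i, (K w i).1 = φ.mulVec (fun j => (w j).1) i := fun w i => rfl
  have hKinj : Function.Injective K := by
    intro w w' h
    have : φ.mulVec (fun j => (w j).1) = φ.mulVec (fun j => (w' j).1) := by
      funext i
      rw [← hK, ← hK, h]
    have := hinj this
    funext j
    ext1
    exact congrFun this j
  have hrange : LinearMap.range K = LinearMap.ker (sumMul g hg (c + d)) := by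
    apply le_antisymm
    · rintro _ ⟨w, rfl⟩
      rw [LinearMap.mem_ker]
      ext1
      rw [sumMul_coe]
      exact (hex _).2 ⟨_, rfl⟩
    · intro S hS
      have hS' : ∑ i, g i * (S i).1 = 0 := by
        have := congrArg Subtype.val (LinearMap.mem_ker.1 hS)
        simpa [sumMul_coe] using this
      obtain ⟨w, hw⟩ := (hex (fun i => (S i).1)).1 hS'
      have h1 := syz_lift hφhom w d (fun i => by
        rw [hw]; exact (mem_homogeneousSubmodule _ _).1 (S i).2)
      refine ⟨fun j => ⟨homogeneousComponent d (w j), homogeneousComponent_mem _ _⟩, ?_⟩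
      funext i
      ext1
      rw [hK]
      exact (congrFun h1 i).trans (congrFun hw i)
  have hrn := LinearMap.finrank_range_add_finrank_ker (sumMul g hg (c + d))
  rw [LinearMap.range_eq_top.2 hsurj, finrank_top, ← hrange, LinearMap.finrank_range_of_inj hKinj,
    Module.finrank_pi_fintype, Module.finrank_pi_fintype] at hrn
  simp only [finrank_hom, Finset.sum_const, Finset.card_univ, Fintype.card_fin, smul_eq_mul] at hrn
  obtain ⟨i, -⟩ := hcop (X 0) (prime_X 0)
  have hn : 1 ≤ n := Nat.one_le_of_lt i.2
  obtain ⟨m, rfl⟩ : ∃ m, n = m + 1 := ⟨n - 1, by omega⟩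
  simp only [Nat.add_sub_cancel] at hrn ⊢
  nlinarith

/-- an element of `k[f₁,f₂]` is a polynomial expression -/
lemma mem_adjoin_pair {k : Type*} [Field k] {f₁ f₂ v : MvPolynomial (Fin 2) k} :
    v ∈ Algebra.adjoin k ({f₁, f₂} : Set (MvPolynomial (Fin 2) k)) ↔
      ∃ P : MvPolynomial (Fin 2) k, aeval ![f₁, f₂] P = v := by
  have : ({f₁, f₂} : Set (MvPolynomial (Fin 2) k)) = Set.range ![f₁, f₂] := by
    simp [Set.pair_comm]
  rw [this, Algebra.adjoin_range_eq_range_aeval]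
  rfl

lemma hom_rep {k : Type*} [Field k] {f₁ f₂ v : MvPolynomial (Fin 2) k} {r d : ℕ} (hr : 0 < r)
    (h1 : f₁.IsHomogeneous r) (h2 : f₂.IsHomogeneous r) (hv : v.IsHomogeneous d)
    (hmem : v ∈ Algebra.adjoin k ({f₁, f₂} : Set (MvPolynomial (Fin 2) k))) :
    (v ≠ 0 → r ∣ d) ∧
    ∃ G : MvPolynomial (Fin 2) k, G.IsHomogeneous (d / r) ∧ aeval ![f₁, f₂] G = v := by
  obtain ⟨P, hP⟩ := mem_adjoin_pair.1 hmem
  have h := comp_aeval hr h1 h2 P d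
  rw [hP, homogeneousComponent_eq_self hv] at h
  split_ifs at h with hd
  · exact ⟨fun _ => hd, _, homogeneousComponent_isHomogeneous _ _, h.symm⟩
  · exact ⟨fun h0 => absurd h h0, 0, isHomogeneous_zero _ _ _, by simp [h]⟩

lemma dvd_of_aeval {k : Type*} [Field k] {f₁ f₂ p G : MvPolynomial (Fin 2) k} {e : ℕ} (he : 0 < e)
    (hG : G.IsHomogeneous e) (h1 : p ∣ f₁) (h2 : p ∣ f₂) : p ∣ aeval ![f₁, f₂] G := by
  obtain ⟨a, -, ha⟩ := aeval_hom_sum f₁ f₂ hG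
  rw [ha]
  refine Finset.dvd_sum fun i hi => ?_
  by_cases hi0 : i = 0
  · subst hi0
    exact Dvd.dvd.mul_left (h2.trans (dvd_pow_self _ (by omega))) _
  · exact Dvd.dvd.mul_right (Dvd.dvd.mul_left (h1.trans (dvd_pow_self _ hi0)) _) _

/-- relatively prime unless there is a common prime factor; positive degree is used to
exclude the zero case -/
lemma relPrime_of_prime {k : Type*} [Field k] {f₁ f₂ : MvPolynomial (Fin 2) k}
    (h : ∀ p, Prime p → p ∣ f₁ → p ∣ f₂ → False) : IsRelPrime f₁ f₂ := by
  by_cases h0 : f₁ = 0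
  · subst h0
    by_cases h2 : f₂ = 0
    · exact (h (X 0) (prime_X 0) (dvd_zero _) (h2 ▸ dvd_zero _)).elim
    · refine IsRelPrime.symm ?_
      rw [UniqueFactorizationMonoid.isRelPrime_iff_no_prime_factors h2]
      intro p hp2 hp1 hp
      exact h p hp hp1 hp2
  · rw [UniqueFactorizationMonoid.isRelPrime_iff_no_prime_factors h0]
    intro p hp1 hp2 hp
    exact h p hp hp1 hp2

theorem part1 {k : Type*} [Field k] [Infinite k] {n d c : ℕ}
    {g : Fin n → MvPolynomial (Fin 2) k} (hg : ∀ i, (g i).IsHomogeneous d) (hd : 0 < d)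
    (hcop : ∀ p, Prime p → ∃ i, ¬ p ∣ g i)
    {φ : Matrix (Fin n) (Fin (n - 1)) (MvPolynomial (Fin 2) k)}
    (hinj : Function.Injective φ.mulVec)
    (hex : ∀ v : Fin n → MvPolynomial (Fin 2) k, (∑ i, g i * v i = 0) ↔ ∃ w, φ.mulVec w = v)
    (hφhom : ∀ i j, (φ i j).IsHomogeneous c)
    (r : ℕ) (f₁ f₂ : MvPolynomial (Fin 2) k) (h1 : f₁.IsHomogeneous r) (h2 : f₂.IsHomogeneous r)
    (hmem : ∀ i, g i ∈ Algebra.adjoin k ({f₁, f₂} : Set (MvPolynomial (Fin 2) k))) (i j) :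
    φ i j ∈ Algebra.adjoin k ({f₁, f₂} : Set (MvPolynomial (Fin 2) k)) := by
  have hdeg := degree_eq hg hcop hinj hex hφhom
  obtain ⟨i₀, hi₀⟩ := hcop (X 0) (prime_X 0)
  have h0 : g i₀ ≠ 0 := by intro h; rw [h] at hi₀; exact hi₀ (dvd_zero _)
  have hr : 0 < r := by
    by_contra hr
    obtain rfl : r = 0 := by omega
    obtain ⟨P, hP⟩ := mem_adjoin_pair.1 (hmem i₀)
    have hC : ∀ f : MvPolynomial (Fin 2) k, f.IsHomogeneous 0 → f = C (coeff 0 f) := fun f hf =>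
      totalDegree_eq_zero_iff_eq_C.1 (Nat.le_zero.1 hf.totalDegree_le)
    have : (aeval ![f₁, f₂] P).IsHomogeneous 0 := by
      rw [P.as_sum, map_sum]
      refine IsHomogeneous.sum _ _ _ fun s _ => ?_
      rw [aeval_monomial, Finsupp.prod_fintype _ _ (by simp)]
      have := (((h1.pow (s 0)).mul (h2.pow (s 1))).C_mul (coeff s P))
      simpa [Fin.prod_univ_two, algebraMap_eq] using this
    rw [hP] at this
    have := this.inj_right (hg i₀) h0
    omega
  choose G hG hGe using fun i => (hom_rep hr h1 h2 (hg i) (hmem i)).2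
  obtain ⟨e, rfl⟩ := (hom_rep hr h1 h2 (hg i₀) (hmem i₀)).1 h0
  rw [Nat.mul_div_cancel_left _ hr] at hG
  have he : 0 < e := Nat.pos_of_mul_pos_left hd
  have hrel : IsRelPrime f₁ f₂ := by
    apply relPrime_of_prime
    intro p hp hp1 hp2
    obtain ⟨i, hi⟩ := hcop p hp
    exact hi (hGe i ▸ dvd_of_aeval he (hG i) hp1 hp2)
  set t := c / r with ht
  have hrt : r * t ≤ c := Nat.mul_div_le c r
  have hrt' : c < r * (t + 1) := Nat.lt_mul_div_succ c hr
  have hrn := LinearMap.finrank_range_add_finrank_ker (sumMul G hG t)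
  have hle := Submodule.finrank_le (LinearMap.range (sumMul G hG t))
  rw [Module.finrank_pi_fintype] at hrn
  simp only [finrank_hom, Finset.sum_const, Finset.card_univ, Fintype.card_fin, smul_eq_mul]
    at hrn hle
  have hn : 1 ≤ n := Nat.one_le_of_lt i₀.2
  have hn2 : 0 < n - 1 := by
    rcases Nat.eq_zero_or_pos (n-1) with h | h
    · rw [h] at hdeg; omega
    · exact h
  have hsyz : ∀ S ∈ LinearMap.ker (sumMul G hG t),
      ∃ w, φ.mulVec w = fun i => aeval ![f₁, f₂] (S i).1 := by
    intro S hS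
    apply (hex _).1
    have := congrArg Subtype.val (LinearMap.mem_ker.1 hS)
    rw [sumMul_coe] at this
    have := congrArg (aeval ![f₁, f₂]) this
    simpa only [map_sum, map_mul, hGe, ZeroMemClass.coe_zero, map_zero] using this
  have hShom : ∀ (S : Fin n → homogeneousSubmodule (Fin 2) k t) i,
      (aeval ![f₁, f₂] (S i).1).IsHomogeneous (r * t) := by
    intro S i
    refine ((mem_homogeneousSubmodule _ _).1 (S i).2).aeval ![f₁, f₂] ?_
    intro j; fin_cases j <;> simpa
  have hSinj : ∀ (S : Fin n → homogeneousSubmodule (Fin 2) k t),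
      (∀ i, aeval ![f₁, f₂] (S i).1 = 0) → S = 0 := by
    intro S h
    funext i
    ext1
    exact aeval_inj hr h1 h2 hrel ((mem_homogeneousSubmodule _ _).1 (S i).2) (h i)
  obtain ⟨m, rfl⟩ : ∃ m, n = m + 1 := ⟨n - 1, by omega⟩
  simp only [Nat.add_sub_cancel] at *
  rcases hrt.lt_or_eq with hlt | heq
  · -- no syzygies in this degree
    exfalso
    have hker : LinearMap.ker (sumMul G hG t) = ⊥ := by
      rw [eq_bot_iff]
      intro S hS
      obtain ⟨w, hw⟩ := hsyz S hS
      have := syz_zero hφhom w (r * t) hlt (fun i => by rw [hw]; exact hShom S i)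
      rw [this] at hw
      exact (Submodule.mem_bot _).2 (hSinj S fun i => (congrFun hw i).symm)
    rw [hker, finrank_bot] at hrn
    have h3 : m * (t + 1) ≤ e := by nlinarith
    have h4 : m * (r * (t + 1)) ≤ m * c := by
      rw [← hdeg]; nlinarith
    have := Nat.le_of_mul_le_mul_left h4 hn2
    omega
  · have hmt : m * t = e := by
      apply Nat.eq_of_mul_eq_mul_left hr
      rw [hdeg, ← heq]; ring
    have hkerdim : m ≤ Module.finrank k (LinearMap.ker (sumMul G hG t)) := by
      nlinarith
    -- constants
    let Φ : (Fin m → k) →ₗ[k] (Fin (m+1) → MvPolynomial (Fin 2) k) :=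
      LinearMap.pi fun i => Fintype.linearCombination k (φ i)
    have hΦ : ∀ a i, Φ a i = ∑ j, C (a j) * φ i j := fun a i => by
      simp [Φ, Fintype.linearCombination_apply, C_mul']
    let Ψ : LinearMap.ker (sumMul G hG t) →ₗ[k] (Fin (m+1) → MvPolynomial (Fin 2) k) :=
      (LinearMap.pi fun i => (aeval (R := k) ![f₁, f₂]).toLinearMap.comp
        ((Submodule.subtype _).comp (LinearMap.proj i))).comp (Submodule.subtype _)
    have hΨ : ∀ S i, Ψ S i = aeval ![f₁, f₂] (S.1 i).1 := fun S i => rfl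
    have hΨinj : Function.Injective Ψ := by
      rw [injective_iff_map_eq_zero]
      intro S hS
      ext1
      exact hSinj S.1 fun i => congrFun hS i
    have hle2 : LinearMap.range Ψ ≤ LinearMap.range Φ := by
      rintro _ ⟨S, rfl⟩
      obtain ⟨w, hw⟩ := hsyz S.1 S.2
      have h3 := syz_lift hφhom w 0 (fun i => by
        rw [hw, add_zero, ← heq]; exact hShom S.1 i)
      refine ⟨fun j => coeff 0 (w j), ?_⟩
      funext i
      rw [hΦ, hΨ, ← congrFun hw i, ← congrFun h3 i]
      simp only [Matrix.mulVec, dotProduct, homogeneousComponent_zero]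
      exact Finset.sum_congr rfl fun j _ => mul_comm _ _
    have heq2 : LinearMap.range Ψ = LinearMap.range Φ := by
      apply Submodule.eq_of_le_of_finrank_le hle2
      rw [LinearMap.finrank_range_of_inj hΨinj]
      refine le_trans (LinearMap.finrank_range_le Φ) ?_
      simpa using hkerdim
    have : Φ (Pi.single j 1) ∈ LinearMap.range Ψ := by rw [heq2]; exact ⟨_, rfl⟩
    obtain ⟨S, hS⟩ := this
    have := congrFun hS i
    rw [hΨ] at this
    refine mem_adjoin_pair.2 ⟨(S.1 i).1, ?_⟩
    rw [this]
    simp [Φ]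

end HB

namespace HB

lemma exists_pair {k V : Type*} [Field k] [AddCommGroup V] [Module k V] (W : Submodule k V)
    [Module.Finite k W] (h : Module.finrank k W ≤ 2) :
    ∃ f₁ ∈ W, ∃ f₂ ∈ W, ∀ w ∈ W, ∃ a b : k, w = a • f₁ + b • f₂ := by
  let b := Module.finBasis k W
  let F : ℕ → W := fun i => if h : i < Module.finrank k W then b ⟨i, h⟩ else 0
  let A : W → ℕ → k := fun w i => if h : i < Module.finrank k W then b.repr w ⟨i, h⟩ else 0
  refine ⟨F 0, (F 0).2, F 1, (F 1).2, fun w hw => ⟨A ⟨w, hw⟩ 0, A ⟨w, hw⟩ 1, ?_⟩⟩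
  have h1 := b.sum_repr ⟨w, hw⟩
  have h2 : ∑ i : Fin (Module.finrank k W), b.repr ⟨w, hw⟩ i • b i =
      ∑ i ∈ Finset.range 2, A ⟨w, hw⟩ i • F i := by
    rw [← Finset.sum_subset (Finset.range_mono h) (f := fun i => A ⟨w, hw⟩ i • F i)]
    · rw [Finset.sum_range]
      refine Finset.sum_congr rfl fun i _ => ?_
      simp [A, F]
    · intro i _ hi
      simp only [Finset.mem_range] at hi
      simp [F, hi]
  rw [h2] at h1
  have := congrArg Subtype.val h1
  simpa [Finset.sum_range_succ] using this.symm

theorem part2a {k : Type*} [Field k] [Infinite k] {n d c : ℕ}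
    {g : Fin n → MvPolynomial (Fin 2) k} (hg : ∀ i, (g i).IsHomogeneous d) (hd : 0 < d)
    (hcop : ∀ p, Prime p → ∃ i, ¬ p ∣ g i)
    {φ : Matrix (Fin n) (Fin (n - 1)) (MvPolynomial (Fin 2) k)}
    (hinj : Function.Injective φ.mulVec)
    (hex : ∀ v : Fin n → MvPolynomial (Fin 2) k, (∑ i, g i * v i = 0) ↔ ∃ w, φ.mulVec w = v)
    (hφhom : ∀ i j, (φ i j).IsHomogeneous c) (hc : 2 ≤ c)
    (hfr : Module.finrank k
          (Submodule.span k (Set.range fun p : Fin n × Fin (n - 1) => φ p.1 p.2)) ≤ 2)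
    (hbir : ∀ v ∈ Algebra.adjoin k {f : MvPolynomial (Fin 2) k | f.IsHomogeneous d},
          ∃ a ∈ Algebra.adjoin k (Set.range g), ∃ b ∈ Algebra.adjoin k (Set.range g),
            b ≠ 0 ∧ b * v = a) : False := by
  classical
  have hdeg := degree_eq hg hcop hinj hex hφhom
  have hn2 : 0 < n - 1 := by
    rcases Nat.eq_zero_or_pos (n-1) with h | h
    · rw [h] at hdeg; omega
    · exact h
  have hfin : Module.Finite k
      (Submodule.span k (Set.range fun p : Fin n × Fin (n - 1) => φ p.1 p.2)) :=
    Module.Finite.span_of_finite k (Set.finite_range _)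
  obtain ⟨f₁, hf1, f₂, hf2, hW⟩ := exists_pair _ hfr
  have hle : Submodule.span k (Set.range fun p : Fin n × Fin (n - 1) => φ p.1 p.2) ≤
      homogeneousSubmodule (Fin 2) k c := by
    rw [Submodule.span_le]
    rintro _ ⟨p, rfl⟩
    exact (mem_homogeneousSubmodule _ _).2 (hφhom _ _)
  have h1 := (mem_homogeneousSubmodule _ _).1 (hle hf1)
  have h2 := (mem_homogeneousSubmodule _ _).1 (hle hf2)
  choose α β hαβ using fun i j => hW (φ i j) (Submodule.subset_span ⟨(i, j), rfl⟩)
  have hrel : IsRelPrime f₁ f₂ := by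
    apply relPrime_of_prime
    intro p hp hp1 hp2
    have hdv : ∀ i, p ∣ φ i ⟨0, hn2⟩ := by
      intro i
      rw [hαβ, ← C_mul', ← C_mul']
      exact dvd_add (hp1.mul_left _) (hp2.mul_left _)
    choose ψ hψ using hdv
    have hs : ∑ i, g i * φ i ⟨0, hn2⟩ = 0 := by
      rw [hex (fun i => φ i ⟨0, hn2⟩)]
      exact ⟨Pi.single ⟨0, hn2⟩ 1, by funext i; simp⟩
    have hs2 : ∑ i, g i * ψ i = 0 := by
      apply mul_left_cancel₀ hp.ne_zero
      rw [mul_zero, ← hs, Finset.mul_sum]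
      refine Finset.sum_congr rfl fun i _ => ?_
      rw [hψ]; ring
    obtain ⟨w, hw⟩ := (hex ψ).1 hs2
    have : φ.mulVec (p • w) = φ.mulVec (Pi.single ⟨0, hn2⟩ 1) := by
      rw [Matrix.mulVec_smul, hw]
      funext i
      simp [hψ]
    have := congrFun (hinj this) ⟨0, hn2⟩
    simp only [Pi.smul_apply, smul_eq_mul, Pi.single_eq_same] at this
    exact hp.not_isUnit (IsUnit.of_mul_eq_one _ this)
  -- the formal matrix
  let Φ : Fin (n-1) → Fin n → MvPolynomial (Fin 2) k := fun j i =>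
    C (α i j) * X 0 + C (β i j) * X 1
  have hΦh : ∀ j i, (Φ j i).IsHomogeneous 1 := fun j i =>
    (isHomogeneous_C_mul_X _ _).add (isHomogeneous_C_mul_X _ _)
  have hΦe : ∀ j i, aeval ![f₁, f₂] (Φ j i) = φ i j := fun j i => by
    rw [hαβ i j, ← C_mul', ← C_mul']
    simp [Φ, algebraMap_eq]
  let L : (Fin n → homogeneousSubmodule (Fin 2) k (n-1)) →ₗ[k]
      (Fin (n-1) → homogeneousSubmodule (Fin 2) k (1 + (n-1))) :=
    LinearMap.pi fun j => sumMul (Φ j) (hΦh j) (n-1)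
  have hlt : Module.finrank k (Fin (n-1) → homogeneousSubmodule (Fin 2) k (1 + (n-1))) <
      Module.finrank k (Fin n → homogeneousSubmodule (Fin 2) k (n-1)) := by
    rw [Module.finrank_pi_fintype, Module.finrank_pi_fintype]
    simp only [finrank_hom, Finset.sum_const, Finset.card_univ, Fintype.card_fin, smul_eq_mul]
    obtain ⟨m, rfl⟩ : ∃ m, n = m + 1 := ⟨n - 1, by omega⟩
    simp only [Nat.add_sub_cancel]
    nlinarith
  obtain ⟨G, hGk, hG0⟩ := Submodule.exists_mem_ne_zero_of_ne_bot (LinearMap.ker_ne_bot_of_finrank_lt hlt (f := L))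
  let u : Fin n → MvPolynomial (Fin 2) k := fun i => aeval ![f₁, f₂] (G i).1
  have hGh : ∀ i, ((G i).1).IsHomogeneous (n-1) := fun i => (mem_homogeneousSubmodule _ _).1 (G i).2
  have huh : ∀ i, (u i).IsHomogeneous d := by
    intro i
    rw [hdeg, mul_comm]
    refine (hGh i).aeval ![f₁, f₂] ?_
    intro j; fin_cases j <;> simpa
  have hu : ∀ j, ∑ i, φ i j * u i = 0 := by
    intro j
    have := congrArg Subtype.val (congrFun (LinearMap.mem_ker.1 hGk) j)
    have h3 : ∑ i, Φ j i * (G i).1 = 0 := this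
    have := congrArg (aeval ![f₁, f₂]) h3
    simpa only [map_sum, map_mul, hΦe, map_zero] using this
  have hu2 : ∀ w, ∑ i, u i * φ.mulVec w i = 0 := by
    intro w
    have : ∑ i, u i * φ.mulVec w i = ∑ j, (∑ i, φ i j * u i) * w j := by
      simp only [Matrix.mulVec, dotProduct, Finset.mul_sum, Finset.sum_mul]
      rw [Finset.sum_comm]
      exact Finset.sum_congr rfl fun j _ => Finset.sum_congr rfl fun i _ => by ring
    rw [this]
    simp [hu]
  have hprop : ∀ i j, u i * g j = u j * g i := by
    intro i j
    obtain ⟨w, hw⟩ := (hex (Pi.single i (g j) - Pi.single j (g i))).1 (by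
      simp [mul_sub, Finset.sum_sub_distrib, Pi.single_apply, mul_comm])
    have := hu2 w
    rw [hw] at this
    simp [mul_sub, Finset.sum_sub_distrib, Pi.single_apply] at this
    linear_combination this
  obtain ⟨s, hs⟩ := proportional hcop hprop
  obtain ⟨i₁, hi₁⟩ : ∃ i, u i ≠ 0 := by
    by_contra! hcon
    apply hG0
    funext i
    ext1
    exact aeval_inj (by omega) h1 h2 hrel (hGh i) (hcon i)
  have hg1 : g i₁ ≠ 0 := by
    intro h; apply hi₁; rw [hs, h, mul_zero]
  have hs0 : s ≠ 0 := by
    intro h; apply hi₁; rw [hs, h, zero_mul]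
  have hsh : s.IsHomogeneous 0 := hom_of_mul (hg i₁) hg1 (by
    rw [mul_comm, ← hs, add_zero]; exact huh i₁)
  have hsC : s = C (coeff 0 s) :=
    totalDegree_eq_zero_iff_eq_C.1 (Nat.le_zero.1 hsh.totalDegree_le)
  have hsc : coeff 0 s ≠ 0 := by
    intro h; rw [h] at hsC; exact hs0 (by simpa using hsC)
  have hgmem : ∀ i, g i ∈ Algebra.adjoin k ({f₁, f₂} : Set (MvPolynomial (Fin 2) k)) := by
    intro i
    refine mem_adjoin_pair.2 ⟨C (coeff 0 s)⁻¹ * (G i).1, ?_⟩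
    have h3 : aeval ![f₁, f₂] (G i).1 = s * g i := hs i
    rw [map_mul, h3, hsC, ← mul_assoc, coeff_zero_C]
    simp only [algHom_C, algebraMap_eq]
    rw [← C_mul, inv_mul_cancel₀ hsc, C_1, one_mul]
  have hsub : Algebra.adjoin k (Set.range g) ≤
      Algebra.adjoin k ({f₁, f₂} : Set (MvPolynomial (Fin 2) k)) := by
    apply Algebra.adjoin_le
    rintro _ ⟨i, rfl⟩
    exact hgmem i
  obtain ⟨a1, ha1, b1, hb1, hb10, e1⟩ := hbir (X 0 ^ d) (Algebra.subset_adjoin (by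
    simpa using isHomogeneous_X_pow (0 : Fin 2) d))
  obtain ⟨a2, ha2, b2, hb2, hb20, e2⟩ := hbir (X 0 ^ (d-1) * X 1) (Algebra.subset_adjoin (by
    have := (isHomogeneous_X_pow (R := k) (0 : Fin 2) (d-1)).mul (isHomogeneous_X k (1 : Fin 2))
    rw [Nat.sub_add_cancel hd] at this
    exact this))
  obtain ⟨P, hP⟩ := mem_adjoin_pair.1 (mul_mem (hsub ha1) (hsub hb2))
  obtain ⟨Q, hQ⟩ := mem_adjoin_pair.1 (mul_mem (hsub ha2) (hsub hb1))
  have hPQ : X 1 * aeval ![f₁, f₂] P = X 0 * aeval ![f₁, f₂] Q := by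
    rw [hP, hQ, ← e1, ← e2]
    obtain ⟨d', rfl⟩ : ∃ d', d = d' + 1 := ⟨d - 1, by omega⟩
    simp only [Nat.add_sub_cancel]
    ring
  have := aeval_indep hc h1 h2 hrel hPQ
  rw [this, map_zero] at hP
  have h5 : a1 * b2 ≠ 0 := by
    rw [← e1]
    exact mul_ne_zero (mul_ne_zero hb10 (pow_ne_zero _ (X_ne_zero _))) hb20
  exact h5 hP.symm

end HB

namespace HB

lemma aeval_homogenize {k A : Type*} [Field k] [CommRing A] [Algebra k A] (x y : A)
    (p : Polynomial k) (m : ℕ) :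
    aeval ![x, y] (p.homogenize m) =
      ∑ i ∈ Finset.range (m+1), algebraMap k A (p.coeff i) * x ^ i * y ^ (m - i) := by
  rw [Polynomial.homogenize, Finset.Nat.sum_antidiagonal_eq_sum_range_succ_mk, map_sum]
  refine Finset.sum_congr rfl fun i _ => ?_
  rw [aeval_monomial, Finsupp.prod_fintype _ _ (by simp)]
  simp [Fin.prod_univ_two, mul_assoc]

lemma exists_coeff {k ι : Type*} [Field k] [Fintype ι] {R a : ι → Polynomial k} {e : ℕ}
    (hR : ∀ i, (R i).natDegree ≤ e) (he : ∀ e', (∀ i, (R i).natDegree ≤ e') → e ≤ e')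
    (ha : ∑ i, a i * R i = 1) : ∃ i, (R i).coeff e ≠ 0 := by
  by_contra! hcon
  rcases Nat.eq_zero_or_pos e with h0 | h0
  · subst h0
    have : ∀ i, R i = 0 := fun i => by
      rw [Polynomial.eq_C_of_natDegree_le_zero (hR i), hcon i, Polynomial.C_0]
    simp [this] at ha
  · have := he (e - 1) (fun i => by
      have h1 := hR i
      by_contra h2
      have h3 : (R i).natDegree = e := by omega
      have h4 := hcon i
      rw [← h3, Polynomial.coeff_natDegree, Polynomial.leadingCoeff_eq_zero] at h4
      rw [h4] at h3
      simp at h3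
      omega)
    omega

lemma prime_dvd {k ι : Type*} [Field k] [Fintype ι] {R a : ι → Polynomial k} {e : ℕ}
    (hR : ∀ i, (R i).natDegree ≤ e) (he : ∀ e', (∀ i, (R i).natDegree ≤ e') → e ≤ e')
    (ha : ∑ i, a i * R i = 1) {f₁ f₂ p : MvPolynomial (Fin 2) k} (hp : Prime p)
    (hd : ∀ i, p ∣ aeval ![f₁, f₂] ((R i).homogenize e)) : p ∣ f₁ ∧ p ∣ f₂ := by
  obtain ⟨i, hi⟩ := exists_coeff hR he ha
  have hp2 : p ∣ f₂ := by
    set N := Finset.univ.sup fun i => (a i).natDegree with hN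
    have hNi : ∀ i, (a i).natDegree ≤ N := fun i =>
      Finset.le_sup (f := fun i => (a i).natDegree) (Finset.mem_univ i)
    have h1 := congrArg (fun q => Polynomial.homogenize q (N + e)) ha
    simp only [Polynomial.homogenize_finsetSum, Polynomial.homogenize_one,
      Polynomial.homogenize_mul _ _ (hNi _) (hR _)] at h1
    have h2 := congrArg (aeval ![f₁, f₂]) h1
    simp only [map_sum, map_mul, map_pow, aeval_X, Matrix.cons_val_one] at h2
    refine hp.dvd_of_dvd_pow (n := N + e) ?_
    have h3 : p ∣ (∑ i, aeval ![f₁, f₂] ((a i).homogenize N) *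
        aeval ![f₁, f₂] ((R i).homogenize e)) :=
      Finset.dvd_sum fun i _ => (hd i).mul_left _
    rw [h2] at h3
    simpa using h3
  refine ⟨?_, hp2⟩
  have h1 := hd i
  rw [aeval_homogenize, Finset.sum_range_succ] at h1
  have h2 : p ∣ ∑ j ∈ Finset.range e, algebraMap k (MvPolynomial (Fin 2) k) ((R i).coeff j) *
      f₁ ^ j * f₂ ^ (e - j) := Finset.dvd_sum fun j hj => by
    refine Dvd.dvd.mul_left (hp2.trans (dvd_pow_self _ ?_)) _
    have := Finset.mem_range.1 hj
    omega
  have h3 := (dvd_add_right h2).1 h1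
  simp only [Nat.sub_self, pow_zero, mul_one] at h3
  have hu : IsUnit (algebraMap k (MvPolynomial (Fin 2) k) ((R i).coeff e)) :=
    IsUnit.map _ (IsUnit.mk0 _ hi)
  exact hp.dvd_of_dvd_pow ((hu.dvd_mul_left).1 h3)

noncomputable def deh (k : Type*) [Field k] : MvPolynomial (Fin 2) k →ₐ[k] RatFunc k :=
  (IsScalarTower.toAlgHom k (Polynomial k) (RatFunc k)).comp (aeval ![Polynomial.X, 1])

lemma deh_inj {k : Type*} [Field k] {P : MvPolynomial (Fin 2) k} {m : ℕ} (hP : P.IsHomogeneous m)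
    (h : deh k P = 0) : P = 0 := by
  have h1 : (aeval ![Polynomial.X, 1] P : Polynomial k) = 0 := by
    apply RatFunc.algebraMap_injective k
    rw [map_zero]
    exact h
  rw [← Polynomial.homogenize_eq_of_isHomogeneous hP rfl, h1, Polynomial.homogenize_zero]

lemma deh_eq {k : Type*} [Field k] {P Q : MvPolynomial (Fin 2) k} {m : ℕ} (hP : P.IsHomogeneous m)
    (hQ : Q.IsHomogeneous m) (h : deh k P = deh k Q) : P = Q := by
  rw [← sub_eq_zero]
  exact deh_inj (hP.sub hQ) (by rw [map_sub, h, sub_self])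

lemma deh_homogenize {k : Type*} [Field k] (p : Polynomial k) {m : ℕ} (hm : p.natDegree ≤ m) :
    deh k (p.homogenize m) = algebraMap _ _ p := by
  have := Polynomial.aeval_homogenize_X_one p hm
  unfold deh
  rw [AlgHom.comp_apply, this]
  rfl

lemma mem_field {k : Type*} [Field k] {n d : ℕ} {g : Fin n → MvPolynomial (Fin 2) k}
    (hg : ∀ i, (g i).IsHomogeneous d) {i₀ : Fin n} (h0 : g i₀ ≠ 0) {z : RatFunc k}
    (hz : z ∈ IntermediateField.adjoin k (Set.range fun i => deh k (g i) / deh k (g i₀))) :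
    ∃ N, ∃ a ∈ Algebra.adjoin k (Set.range g), ∃ b ∈ Algebra.adjoin k (Set.range g),
      a.IsHomogeneous (d * N) ∧ b.IsHomogeneous (d * N) ∧ b ≠ 0 ∧ z * deh k b = deh k a := by
  induction hz using IntermediateField.adjoin_induction with
  | mem x hx =>
    obtain ⟨i, rfl⟩ := hx
    have : deh k (g i₀) ≠ 0 := fun h => h0 (deh_inj (hg i₀) h)
    refine ⟨1, g i, Algebra.subset_adjoin ⟨i, rfl⟩, g i₀, Algebra.subset_adjoin ⟨i₀, rfl⟩,
      by simpa using hg i, by simpa using hg i₀, h0, ?_⟩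
    simp only
    rw [div_mul_cancel₀ _ this]
  | algebraMap x =>
    refine ⟨0, algebraMap k _ x, Subalgebra.algebraMap_mem _ _, 1, one_mem _,
      isHomogeneous_C _ _, isHomogeneous_one _ _, one_ne_zero, ?_⟩
    rw [map_one, mul_one, AlgHom.commutes]
  | add x y _ _ hx hy =>
    obtain ⟨N, a, ha, b, hb, hah, hbh, hb0, e⟩ := hx
    obtain ⟨N', a', ha', b', hb', hah', hbh', hb0', e'⟩ := hy
    refine ⟨N + N', a * b' + b * a', add_mem (mul_mem ha hb') (mul_mem hb ha'), b * b',
      mul_mem hb hb', ?_, ?_, mul_ne_zero hb0 hb0', ?_⟩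
    · rw [mul_add]; exact (hah.mul hbh').add (hbh.mul hah')
    · rw [mul_add]; exact hbh.mul hbh'
    · simp only [map_add, map_mul, ← e, ← e']; ring
  | inv x _ hx =>
    obtain ⟨N, a, ha, b, hb, hah, hbh, hb0, e⟩ := hx
    by_cases hx0 : x = 0
    · refine ⟨0, 0, zero_mem _, 1, one_mem _, isHomogeneous_zero _ _ _, isHomogeneous_one _ _,
        one_ne_zero, ?_⟩
      simp [hx0]
    · refine ⟨N, b, hb, a, ha, hbh, hah, ?_, ?_⟩
      · rintro rfl
        rw [map_zero] at e
        rcases mul_eq_zero.1 e with h | h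
        · exact hx0 h
        · exact hb0 (deh_inj hbh h)
      · rw [← e, inv_mul_cancel_left₀ hx0]
  | mul x y _ _ hx hy =>
    obtain ⟨N, a, ha, b, hb, hah, hbh, hb0, e⟩ := hx
    obtain ⟨N', a', ha', b', hb', hah', hbh', hb0', e'⟩ := hy
    refine ⟨N + N', a * a', mul_mem ha ha', b * b',
      mul_mem hb hb', ?_, ?_, mul_ne_zero hb0 hb0', ?_⟩
    · rw [mul_add]; exact hah.mul hah'
    · rw [mul_add]; exact hbh.mul hbh'
    · simp only [map_mul, ← e, ← e']; ring

lemma bir_of_top {k : Type*} [Field k] {n d : ℕ} {g : Fin n → MvPolynomial (Fin 2) k}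
    (hg : ∀ i, (g i).IsHomogeneous d) {i₀ : Fin n} (h0 : g i₀ ≠ 0)
    (htop : IntermediateField.adjoin k (Set.range fun i => deh k (g i) / deh k (g i₀)) = ⊤) :
    ∀ v ∈ Algebra.adjoin k {f : MvPolynomial (Fin 2) k | f.IsHomogeneous d},
          ∃ a ∈ Algebra.adjoin k (Set.range g), ∃ b ∈ Algebra.adjoin k (Set.range g),
            b ≠ 0 ∧ b * v = a := by
  intro v hv
  have hd0 : deh k (g i₀) ≠ 0 := fun h => h0 (deh_inj (hg i₀) h)
  induction hv using Algebra.adjoin_induction with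
  | mem v hv =>
    have hz : deh k v / deh k (g i₀) ∈
        IntermediateField.adjoin k (Set.range fun i => deh k (g i) / deh k (g i₀)) := by
      rw [htop]; trivial
    obtain ⟨N, a, ha, b, hb, hah, hbh, hb0, e⟩ := mem_field hg h0 hz
    refine ⟨g i₀ * a, mul_mem (Algebra.subset_adjoin ⟨i₀, rfl⟩) ha, b, hb, hb0, ?_⟩
    rw [mul_comm]
    refine deh_eq (IsHomogeneous.mul hv hbh) ((hg i₀).mul hah) ?_
    rw [map_mul, map_mul, ← e]
    field_simp
  | algebraMap x =>
    exact ⟨algebraMap k _ x, Subalgebra.algebraMap_mem _ _, 1, one_mem _, one_ne_zero, one_mul _⟩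
  | add x y _ _ hx hy =>
    obtain ⟨a, ha, b, hb, hb0, rfl⟩ := hx
    obtain ⟨a', ha', b', hb', hb0', rfl⟩ := hy
    exact ⟨_, add_mem (mul_mem ha hb') (mul_mem hb ha'), b * b', mul_mem hb hb',
      mul_ne_zero hb0 hb0', by ring⟩
  | mul x y _ _ hx hy =>
    obtain ⟨a, ha, b, hb, hb0, rfl⟩ := hx
    obtain ⟨a', ha', b', hb', hb0', rfl⟩ := hy
    exact ⟨_, mul_mem ha ha', b * b', mul_mem hb hb',
      mul_ne_zero hb0 hb0', by ring⟩

/-- common denominators in `k(h)`, with the content removed -/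
lemma common_den {k : Type*} [Field k] {n : ℕ} {x : Fin n → RatFunc k} {h : RatFunc k}
    (hx : ∀ i, x i ∈ IntermediateField.adjoin k {h}) {i₀ : Fin n} (h1 : x i₀ ≠ 0) :
    ∃ (R a : Fin n → Polynomial k) (Z : RatFunc k), Z ≠ 0 ∧
      (∀ i, Polynomial.aeval h (R i) = Z * x i) ∧ ∑ i, a i * R i = 1 := by
  classical
  have hex : ∀ i, ∃ P Q : Polynomial k, Polynomial.aeval h Q ≠ 0 ∧
      Polynomial.aeval h P = Polynomial.aeval h Q * x i := by
    intro i
    obtain ⟨P, Q, hPQ⟩ := (IntermediateField.mem_adjoin_simple_iff _ _).1 (hx i)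
    by_cases hQ : Polynomial.aeval h Q = 0
    · refine ⟨0, 1, by simp, ?_⟩
      rw [hPQ, hQ]; simp
    · refine ⟨P, Q, hQ, ?_⟩
      rw [hPQ]; field_simp
  choose P Q hQ hPQ using hex
  let R : Fin n → Polynomial k := fun i => P i * ∏ j ∈ Finset.univ.erase i, Q j
  have hR : ∀ i, Polynomial.aeval h (R i) = (∏ j, Polynomial.aeval h (Q j)) * x i := by
    intro i
    rw [← Finset.mul_prod_erase _ _ (Finset.mem_univ i)]
    simp only [R, map_mul, map_prod, hPQ]
    ring
  have hprod : (∏ j, Polynomial.aeval h (Q j)) ≠ 0 := Finset.prod_ne_zero_iff.2 fun j _ => hQ j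
  obtain ⟨D, hD⟩ := (IsPrincipalIdealRing.principal (Ideal.span (Set.range R))).principal
  have hdv : ∀ i, D ∣ R i := fun i => by
    rw [← Ideal.mem_span_singleton]
    change R i ∈ Submodule.span _ {D}
    rw [← hD]
    exact Ideal.subset_span ⟨i, rfl⟩
  choose R' hR' using hdv
  have hDm : D ∈ Ideal.span (Set.range R) := by
    rw [hD]; exact Submodule.mem_span_singleton_self D
  obtain ⟨a, ha⟩ := Ideal.mem_span_range_iff_exists_fun.1 hDm
  have hDh : Polynomial.aeval h D ≠ 0 := by
    intro hcon
    have := hR i₀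
    rw [hR', map_mul, hcon, zero_mul] at this
    exact mul_ne_zero hprod h1 this.symm
  have hD0 : D ≠ 0 := by rintro rfl; simp at hDh
  refine ⟨R', a, (∏ j, Polynomial.aeval h (Q j)) / Polynomial.aeval h D, div_ne_zero hprod hDh, ?_, ?_⟩
  · intro i
    have := hR i
    rw [hR', map_mul] at this
    field_simp
    linear_combination this
  · apply mul_left_cancel₀ hD0
    rw [mul_one, Finset.mul_sum]
    conv_rhs => rw [← ha]
    refine Finset.sum_congr rfl fun i _ => ?_
    rw [hR' i]; ring

/-- The Lüroth step. -/
theorem luroth_step {k : Type*} [Field k] [Infinite k] {n d : ℕ}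
    {g : Fin n → MvPolynomial (Fin 2) k} (hg : ∀ i, (g i).IsHomogeneous d)
    (hcop : ∀ p, Prime p → ∃ i, ¬ p ∣ g i) {i₀ : Fin n} (h0 : g i₀ ≠ 0)
    (htop : IntermediateField.adjoin k (Set.range fun i => deh k (g i) / deh k (g i₀)) ≠ ⊤) :
    ∃ (r : ℕ) (f₁ f₂ : MvPolynomial (Fin 2) k), r ≠ 1 ∧ f₁.IsHomogeneous r ∧ f₂.IsHomogeneous r ∧
      ∀ i, g i ∈ Algebra.adjoin k ({f₁, f₂} : Set (MvPolynomial (Fin 2) k)) := by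
  have hd0 : deh k (g i₀) ≠ 0 := fun h => h0 (deh_inj (hg i₀) h)
  set E := IntermediateField.adjoin k (Set.range fun i => deh k (g i) / deh k (g i₀)) with hE
  have hEgen : E = IntermediateField.adjoin k {RatFunc.Luroth.generator E} :=
    RatFunc.Luroth.eq_adjoin_generator
  set h := RatFunc.Luroth.generator E with hh
  set r := max h.num.natDegree h.denom.natDegree with hr
  set f₁ := h.num.homogenize r with hf1
  set f₂ := h.denom.homogenize r with hf2
  have h1 : f₁.IsHomogeneous r := Polynomial.isHomogeneous_homogenize _
  have h2 : f₂.IsHomogeneous r := Polynomial.isHomogeneous_homogenize _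
  have hr1 : r ≠ 1 := by
    intro hr1
    have := RatFunc.finrank_eq_max_natDegree h
    rw [← hr, hr1] at this
    apply htop
    rw [hEgen]
    exact IntermediateField.finrank_eq_one_iff_eq_top.1 this
  have hdf1 : deh k f₁ = algebraMap _ _ h.num := deh_homogenize _ (le_max_left _ _)
  have hdf2 : deh k f₂ = algebraMap _ _ h.denom := deh_homogenize _ (le_max_right _ _)
  have hdf20 : deh k f₂ ≠ 0 := by
    rw [hdf2]; exact RatFunc.algebraMap_ne_zero h.denom_ne_zero
  have hdf : deh k f₁ = h * deh k f₂ := by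
    rw [hdf1, hdf2]
    conv_rhs => lhs; rw [← RatFunc.num_div_denom h]
    rw [div_mul_cancel₀ _ (RatFunc.algebraMap_ne_zero h.denom_ne_zero)]
  have hnp : ∀ p, Prime p → p ∣ f₁ → p ∣ f₂ → False := by
    intro p hp hp1 hp2
    obtain ⟨a, b, hab⟩ := RatFunc.isCoprime_num_denom h
    have := prime_dvd (ι := Fin 2) (R := ![h.num, h.denom]) (a := ![a, b]) (e := r)
      (f₁ := X 0) (f₂ := X 1)
      (by intro i; fin_cases i <;> simp [hr])
      (by
        intro e' he'
        exact max_le (he' 0) (he' 1))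
      (by simpa [Fin.sum_univ_two] using hab) hp
      (by
        have hX : (![X 0, X 1] : Fin 2 → MvPolynomial (Fin 2) k) = X := by
          funext i; fin_cases i <;> rfl
        intro i
        rw [hX, aeval_X_left_apply]
        fin_cases i
        · exact hp1
        · exact hp2)
    have hass : Associated (X 0 : MvPolynomial (Fin 2) k) (X 1) :=
      ((hp.associated_of_dvd (prime_X 0) this.1).symm).trans
        (hp.associated_of_dvd (prime_X 1) this.2)
    have hdvd := hass.dvd
    rw [X_dvd_X] at hdvd
    simp at hdvd
  obtain ⟨R, a, Z, hZ, hRZ, haR⟩ := common_den (x := fun i => deh k (g i) / deh k (g i₀)) (h := h)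
    (i₀ := i₀) (by
      intro i
      rw [← hEgen]
      exact IntermediateField.subset_adjoin _ _ ⟨i, rfl⟩) (by simp [hd0])
  set e := Finset.univ.sup fun i => (R i).natDegree with he
  have hRe : ∀ i, (R i).natDegree ≤ e := fun i =>
    Finset.le_sup (f := fun i => (R i).natDegree) (Finset.mem_univ i)
  have hRe' : ∀ e', (∀ i, (R i).natDegree ≤ e') → e ≤ e' := fun e' h' =>
    Finset.sup_le fun i _ => h' i
  let u : Fin n → MvPolynomial (Fin 2) k := fun i => aeval ![f₁, f₂] ((R i).homogenize e)
  have huh : ∀ i, (u i).IsHomogeneous (r * e) := by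
    intro i
    refine (Polynomial.isHomogeneous_homogenize (R i)).aeval ![f₁, f₂] ?_
    intro j; fin_cases j <;> simpa
  have hu : ∀ i, deh k (u i) = deh k f₂ ^ e * (Z * (deh k (g i) / deh k (g i₀))) := by
    intro i
    rw [← hRZ i, Polynomial.aeval_eq_sum_range' (Nat.lt_succ_of_le (hRe i))]
    simp only [u]
    rw [aeval_homogenize, map_sum, Finset.mul_sum]
    refine Finset.sum_congr rfl fun j hj => ?_
    have hj' : j ≤ e := Nat.lt_succ_iff.1 (Finset.mem_range.1 hj)
    rw [map_mul, map_mul, map_pow, map_pow, hdf, AlgHom.commutes, Algebra.smul_def]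
    conv_rhs => rw [← Nat.add_sub_cancel' hj', pow_add]
    ring
  have hprop : ∀ i j, u i * g j = u j * g i := by
    intro i j
    refine deh_eq ((huh i).mul (hg j)) ((huh j).mul (hg i)) ?_
    rw [map_mul, map_mul, hu, hu]
    ring
  obtain ⟨s, hs⟩ := proportional hcop hprop
  have hu0 : u i₀ ≠ 0 := by
    intro hcon
    have := hu i₀
    rw [hcon, map_zero, div_self hd0, mul_one] at this
    exact mul_ne_zero (pow_ne_zero _ hdf20) hZ this.symm
  have hs0 : s ≠ 0 := by
    intro h; apply hu0; rw [hs, h, zero_mul]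
  have hsu : IsUnit s := by
    by_contra hsu
    obtain ⟨p, hp, hps⟩ := WfDvdMonoid.exists_irreducible_factor hsu hs0
    have := prime_dvd hRe hRe' haR (f₁ := f₁) (f₂ := f₂) hp.prime (fun i => by
      change p ∣ u i
      rw [hs]; exact hps.mul_right _)
    exact hnp p hp.prime this.1 this.2
  refine ⟨r, f₁, f₂, hr1, h1, h2, fun i => ?_⟩
  obtain ⟨t, ht, hst⟩ := MvPolynomial.isUnit_iff_eq_C_of_isReduced.1 hsu
  refine mem_adjoin_pair.2 ⟨C t⁻¹ * (R i).homogenize e, ?_⟩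
  have h3 : aeval ![f₁, f₂] ((R i).homogenize e) = s * g i := hs i
  rw [map_mul, h3, hst, ← mul_assoc]
  simp only [algHom_C, algebraMap_eq]
  rw [← C_mul, inv_mul_cancel₀ ht.ne_zero, C_1, one_mul]

lemma r_pos {k : Type*} [Field k] {d r : ℕ} {v f₁ f₂ : MvPolynomial (Fin 2) k}
    (hv : v.IsHomogeneous d) (hd : 0 < d) (h0 : v ≠ 0)
    (h1 : f₁.IsHomogeneous r) (h2 : f₂.IsHomogeneous r)
    (hmem : v ∈ Algebra.adjoin k ({f₁, f₂} : Set (MvPolynomial (Fin 2) k))) : 0 < r := by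
  by_contra hr
  obtain rfl : r = 0 := by omega
  obtain ⟨P, hP⟩ := mem_adjoin_pair.1 hmem
  have : (aeval ![f₁, f₂] P).IsHomogeneous 0 := by
    rw [P.as_sum, map_sum]
    refine IsHomogeneous.sum _ _ _ fun s _ => ?_
    rw [aeval_monomial, Finsupp.prod_fintype _ _ (by simp)]
    have := (((h1.pow (s 0)).mul (h2.pow (s 1))).C_mul (coeff s P))
    simpa [Fin.prod_univ_two, algebraMap_eq] using this
  rw [hP] at this
  have := this.inj_right hv h0
  omega

theorem part2b {k : Type*} [Field k] [Infinite k] {n d c : ℕ}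
    {g : Fin n → MvPolynomial (Fin 2) k} (hg : ∀ i, (g i).IsHomogeneous d) (hd : 0 < d)
    (hcop : ∀ p, Prime p → ∃ i, ¬ p ∣ g i)
    {φ : Matrix (Fin n) (Fin (n - 1)) (MvPolynomial (Fin 2) k)}
    (hinj : Function.Injective φ.mulVec)
    (hex : ∀ v : Fin n → MvPolynomial (Fin 2) k, (∑ i, g i * v i = 0) ↔ ∃ w, φ.mulVec w = v)
    (hφhom : ∀ i j, (φ i j).IsHomogeneous c) (hc : c.Prime)
    (hfr : 3 ≤ Module.finrank k
          (Submodule.span k (Set.range fun p : Fin n × Fin (n - 1) => φ p.1 p.2))) :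
    ∀ v ∈ Algebra.adjoin k {f : MvPolynomial (Fin 2) k | f.IsHomogeneous d},
          ∃ a ∈ Algebra.adjoin k (Set.range g), ∃ b ∈ Algebra.adjoin k (Set.range g),
            b ≠ 0 ∧ b * v = a := by
  classical
  obtain ⟨i₀, hi₀⟩ := hcop (X 0) (prime_X 0)
  have h0 : g i₀ ≠ 0 := by intro h; rw [h] at hi₀; exact hi₀ (dvd_zero _)
  by_cases htop : IntermediateField.adjoin k
      (Set.range fun i => deh k (g i) / deh k (g i₀)) = ⊤
  · exact bir_of_top hg h0 htop
  exfalso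
  obtain ⟨r, f₁, f₂, hr1, h1, h2, hmem⟩ := luroth_step hg hcop h0 htop
  have hr := r_pos (hg i₀) hd h0 h1 h2 (hmem i₀)
  have hφ := part1 hg hd hcop hinj hex hφhom r f₁ f₂ h1 h2 hmem
  obtain ⟨i, j, hij⟩ : ∃ i j, φ i j ≠ 0 := by
    by_contra! hcon
    have : (Set.range fun p : Fin n × Fin (n - 1) => φ p.1 p.2) ⊆ {0} := by
      rintro _ ⟨p, rfl⟩
      exact hcon _ _
    have h3 := Submodule.span_mono (R := k) this
    rw [Submodule.span_zero_singleton, le_bot_iff] at h3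
    rw [h3, finrank_bot] at hfr
    omega
  have hrc := (hom_rep hr h1 h2 (hφhom i j) (hφ i j)).1 hij
  obtain rfl : r = c := ((Nat.dvd_prime hc).1 hrc).resolve_left hr1
  have hle : Submodule.span k (Set.range fun p : Fin n × Fin (n - 1) => φ p.1 p.2) ≤
      Submodule.span k (({f₁, f₂} : Finset (MvPolynomial (Fin 2) k)) : Set _) := by
    rw [Submodule.span_le]
    rintro _ ⟨p, rfl⟩
    obtain ⟨G, hG, hGe⟩ := (hom_rep hr h1 h2 (hφhom p.1 p.2) (hφ p.1 p.2)).2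
    rw [Nat.div_self hr] at hG
    obtain ⟨a, -, ha⟩ := aeval_hom_sum f₁ f₂ hG
    rw [hGe] at ha
    simp only [Finset.sum_range_succ, Finset.sum_range_zero] at ha
    change φ p.1 p.2 ∈ Submodule.span k (({f₁, f₂} : Finset (MvPolynomial (Fin 2) k)) : Set _)
    rw [ha]
    simp only [Finset.coe_insert, Finset.coe_singleton, Submodule.mem_span_pair]
    refine ⟨a 1, a 0, ?_⟩
    rw [← C_mul', ← C_mul']
    ring
  have h4 := Submodule.finrank_mono hle
  have h5 := finrank_span_finset_le_card (R := k) ({f₁, f₂} : Finset (MvPolynomial (Fin 2) k))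
  have h6 : ({f₁, f₂} : Finset (MvPolynomial (Fin 2) k)).card ≤ 2 := Finset.card_le_two
  have h7 : Set.finrank k (({f₁, f₂} : Finset (MvPolynomial (Fin 2) k)) : Set (MvPolynomial (Fin 2) k))
    = Module.finrank k (Submodule.span k (({f₁, f₂} : Finset (MvPolynomial (Fin 2) k)) :
      Set (MvPolynomial (Fin 2) k))) := rfl
  omega

end HB

/-- Let `B = k[x,y]` with `k` an infinite field, `I` a height-two ideal of `B` generated by forms
`g₁, …, g_n` of degree `d`, and `φ` a homogeneous Hilbert–Burch matrix for `[g₁, …, g_n]` (so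
that `0 → B^{n-1} → B^n → I` is exact).  Assume every entry of `φ` is homogeneous of the same
degree `c`.  Then:
(1) for forms `f₁, f₂` of a common degree `r` with `k[I_d] = k[g₁,…,g_n] ⊆ k[f₁,f₂]`, every
entry of `φ` lies in the subring `k[f₁,f₂]`; and
(2) if `c` is prime, the morphism `ℙ¹ → ℙ^{n-1}` given by `q ↦ [g₁(q):⋯:g_n(q)]` is birational
onto its image (equivalently, `k[g₁,…,g_n]` and the Veronese `k[B_d]` have the same quotient
field) if and only if `μ(I₁(φ)) ≥ 3`, i.e. the entries of `φ` span a `k`-space of dimension at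
least `3`. -/
theorem stmt10 {k : Type*} [Field k] [Infinite k] (n d c : ℕ)
    (g : Fin n → MvPolynomial (Fin 2) k) (hg : ∀ i, (g i).IsHomogeneous d)
    (hht : idealHeight (Ideal.span (Set.range g)) = 2)
    (φ : Matrix (Fin n) (Fin (n - 1)) (MvPolynomial (Fin 2) k))
    (hHBinj : Function.Injective φ.mulVecLin)
    (hHBexact : LinearMap.range φ.mulVecLin =
      LinearMap.ker (Matrix.mulVecLin (Matrix.of fun (_ : Fin 1) (i : Fin n) => g i)))
    (hφhom : ∀ i j, (φ i j).IsHomogeneous c) :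
    (∀ (r : ℕ) (f₁ f₂ : MvPolynomial (Fin 2) k), f₁.IsHomogeneous r → f₂.IsHomogeneous r →
      (∀ i, g i ∈ Algebra.adjoin k ({f₁, f₂} : Set (MvPolynomial (Fin 2) k))) →
      ∀ i j, φ i j ∈ Algebra.adjoin k ({f₁, f₂} : Set (MvPolynomial (Fin 2) k))) ∧
    (c.Prime →
      ((∀ v ∈ Algebra.adjoin k {f : MvPolynomial (Fin 2) k | f.IsHomogeneous d},
          ∃ a ∈ Algebra.adjoin k (Set.range g), ∃ b ∈ Algebra.adjoin k (Set.range g),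
            b ≠ 0 ∧ b * v = a) ↔
        3 ≤ Module.finrank k
          (Submodule.span k (Set.range fun p : Fin n × Fin (n - 1) => φ p.1 p.2)))) := by
  have hinj : Function.Injective φ.mulVec := fun a b h => hHBinj h
  have hex : ∀ v : Fin n → MvPolynomial (Fin 2) k,
      (∑ i, g i * v i = 0) ↔ ∃ w, φ.mulVec w = v := by
    intro v
    have h1 : v ∈ LinearMap.range φ.mulVecLin ↔ v ∈ LinearMap.ker
        (Matrix.mulVecLin (Matrix.of fun (_ : Fin 1) (i : Fin n) => g i)) := by rw [hHBexact]
    rw [LinearMap.mem_range, LinearMap.mem_ker] at h1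
    refine Iff.trans ?_ h1.symm
    constructor
    · intro h
      funext j
      exact h
    · intro h
      exact congrFun h 0
  have hcop := HB.cop_of_height hht
  have hd := HB.d_pos hg hht
  refine ⟨fun r f₁ f₂ h1 h2 hmem i j =>
    HB.part1 hg hd hcop hinj hex hφhom r f₁ f₂ h1 h2 hmem i j, fun hc => ⟨fun hbir => ?_,
    fun hfr => HB.part2b hg hd hcop hinj hex hφhom hc hfr⟩⟩
  by_contra hlt
  exact HB.part2a hg hd hcop hinj hex hφhom hc.two_le (by omega) hbir
end
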